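/- arXiv:1002.0767 — 2 statements merged into one kernel-verified Lean document; each statement's English description precedes it below -/
import Mathlib

section
/- Let X ⊂ ℝ^n be a closed semi-algebraic set, X_1 = {(tx, t) : x ∈ X, t ∈ (0,1]} ⊂ ℝ^n × ℝ, and for t ∈ [0,1] let X_t = π_{ℝ^n}(closure(X_1) ∩ π_ℝ^{-1}(t)). Then X_0 is a closed semi-algebraic cone: for all x ∈ X_0 and λ ≥ 0 with λx making sense (λ ∈ [0,∞)), λx ∈ X_0, and 0 ∈ X_0 when X is nonempty. -/
open Set

/-- Semi-algebraic subsets of `ι → ℝ`: the smallest collection of sets containing the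
basic sets `{x | p(x) = 0}` and `{x | p(x) > 0}` for real polynomials `p`, and closed
under finite unions and intersections. -/
inductive IsSemialgebraic {ι : Type*} [Fintype ι] : Set (ι → ℝ) → Prop
  | eq (p : MvPolynomial ι ℝ) : IsSemialgebraic {x | MvPolynomial.eval x p = 0}
  | lt (p : MvPolynomial ι ℝ) : IsSemialgebraic {x | 0 < MvPolynomial.eval x p}
  | union {s t : Set (ι → ℝ)} : IsSemialgebraic s → IsSemialgebraic t →
      IsSemialgebraic (s ∪ t)
  | inter {s t : Set (ι → ℝ)} : IsSemialgebraic s → IsSemialgebraic t →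
      IsSemialgebraic (s ∩ t)

/-- A subset of euclidean space `ℝ^n` is semi-algebraic. -/
def IsSemialgebraicE {n : ℕ} (s : Set (EuclideanSpace ℝ (Fin n))) : Prop :=
  IsSemialgebraic {x : Fin n → ℝ | (EuclideanSpace.equiv (Fin n) ℝ).symm x ∈ s}

/-- The deformation `X₁ = {(tx, t) : x ∈ X, t ∈ (0,1]} ⊂ ℝ^n × ℝ` of a set `X ⊂ ℝ^n`. -/
def deformAtInfinity {n : ℕ} (X : Set (EuclideanSpace ℝ (Fin n))) :
    Set (EuclideanSpace ℝ (Fin n) × ℝ) :=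
  {p | ∃ x ∈ X, ∃ t ∈ Ioc (0 : ℝ) 1, p = (t • x, t)}

/-- The tangent cone at infinity
`X₀ = π_{ℝ^n}(closure X₁ ∩ π_ℝ^{-1}(0)) = {y | (y,0) ∈ closure X₁}` of `X ⊂ ℝ^n`. -/
def coneAtInfinity {n : ℕ} (X : Set (EuclideanSpace ℝ (Fin n))) :
    Set (EuclideanSpace ℝ (Fin n)) :=
  {y | (y, (0 : ℝ)) ∈ closure (deformAtInfinity X)}


/-- The cell of `x` in the complement of `Z`. -/
def cellOf (Z : Set ℝ) (x : ℝ) : Set ℝ := {y | ∀ z ∈ Z, (z < x ∧ z < y) ∨ (x < z ∧ y < z)}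

theorem cellOf_self {Z : Set ℝ} {x : ℝ} (hx : x ∉ Z) : x ∈ cellOf Z x := by
  intro z hz
  rcases lt_trichotomy z x with h | h | h
  · exact Or.inl ⟨h, h⟩
  · exact absurd (h ▸ hz) hx
  · exact Or.inr ⟨h, h⟩

theorem cellOf_not_mem {Z : Set ℝ} {x y : ℝ} (hy : y ∈ cellOf Z x) : y ∉ Z := by
  intro h
  rcases hy y h with h | h
  · exact lt_irrefl _ h.2
  · exact lt_irrefl _ h.2

theorem cellOf_eq {Z : Set ℝ} {x y : ℝ} (hy : y ∈ cellOf Z x) : cellOf Z y = cellOf Z x := by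
  ext w
  constructor
  · intro h z hz
    rcases hy z hz with h1 | h1 <;> rcases h z hz with h2 | h2
    · exact Or.inl ⟨h1.1, h2.2⟩
    · linarith
    · linarith
    · exact Or.inr ⟨h1.1, h2.2⟩
  · intro h z hz
    rcases hy z hz with h1 | h1 <;> rcases h z hz with h2 | h2
    · exact Or.inl ⟨h1.2, h2.2⟩
    · linarith
    · linarith
    · exact Or.inr ⟨h1.2, h2.2⟩

theorem cellOf_ord {Z : Set ℝ} {x y w v : ℝ} (hy : y ∈ cellOf Z x) (hw : w ∈ cellOf Z x)
    (h1 : y ≤ v) (h2 : v ≤ w) : v ∈ cellOf Z x := by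
  intro z hz
  rcases hy z hz with h | h
  · exact Or.inl ⟨h.1, by linarith⟩
  · rcases hw z hz with h' | h'
    · linarith
    · exact Or.inr ⟨h.1, by linarith⟩

theorem cellOf_isOpen {Z : Set ℝ} (hZ : Z.Finite) (x : ℝ) : IsOpen (cellOf Z x) := by
  have : cellOf Z x = ⋂ z ∈ Z, {y | (z < x ∧ z < y) ∨ (x < z ∧ y < z)} := by
    ext y; simp [cellOf]
  rw [this]
  refine hZ.isOpen_biInter fun z _ => ?_
  simp only [ofPred_or, ofPred_and]
  exact ((isOpen_const).inter isOpen_Ioi).union (isOpen_const.inter isOpen_Iio)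

theorem cellOf_gt {Z : Set ℝ} (hZ : Z.Finite) {x y : ℝ} (hy : y ∈ cellOf Z x) :
    ∃ w ∈ cellOf Z x, y < w := by
  obtain ⟨w, h1, h2⟩ := exists_Ico_subset_of_mem_nhds ((cellOf_isOpen hZ x).mem_nhds hy)
    (exists_gt y)
  exact ⟨(y + w) / 2, h2 ⟨by linarith, by linarith⟩, by linarith⟩

theorem cellOf_lt {Z : Set ℝ} (hZ : Z.Finite) {x y : ℝ} (hy : y ∈ cellOf Z x) :
    ∃ w ∈ cellOf Z x, w < y := by
  obtain ⟨w, h1, h2⟩ := exists_Ioc_subset_of_mem_nhds ((cellOf_isOpen hZ x).mem_nhds hy)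
    (exists_lt y)
  exact ⟨(y + w) / 2, h2 ⟨by linarith, by linarith⟩, by linarith⟩

/-- Increasing on the closure of the cell. -/
def IncCell (Z : Set ℝ) (x : ℝ) (f : ℝ → ℝ) : Prop :=
  ∀ y w, y < w → Ioo y w ⊆ cellOf Z x → f y < f w

theorem IncCell.lt {Z : Set ℝ} {x : ℝ} {f : ℝ → ℝ} (h : IncCell Z x f) {y w : ℝ}
    (hy : y ∈ cellOf Z x) (hw : w ∈ cellOf Z x) (hyw : y < w) : f y < f w :=
  h y w hyw fun _ hv => cellOf_ord hy hw hv.1.le hv.2.le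

open Filter Topology in
theorem cell_pos {Z : Set ℝ} (hZ : Z.Finite) {x : ℝ} (hx : x ∉ Z) {f g : ℝ → ℝ}
    (hg : Continuous g) (hfi : IncCell Z x f) (hgi : IncCell Z x g)
    (hgt : Tendsto (fun x => |g x|) atTop atTop)
    (hs : ∀ z ∈ Z, 0 < f z → 0 < g z) (h : ∃ y ∈ cellOf Z x, 0 < f y) :
    ∃ y ∈ cellOf Z x, 0 < g y := by
  obtain ⟨y, hy, hfy⟩ := h
  by_cases hb : ∃ z ∈ Z, x < z
  · obtain ⟨b, ⟨hbZ, hxb⟩, hbm⟩ := exists_min_image (Z ∩ Ioi x) id (hZ.inter_of_left _)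
      (by obtain ⟨z, h1, h2⟩ := hb; exact ⟨z, h1, h2⟩)
    simp only [mem_inter_iff, mem_Ioi, id] at hxb hbm
    have hcell : ∀ v, (v < b) → (y ≤ v ∨ x ≤ v) → v ∈ cellOf Z x := by
      intro v hv hv' z hz
      rcases lt_trichotomy z x with h | h | h
      · refine Or.inl ⟨h, ?_⟩
        rcases hv' with h' | h'
        · rcases hy z hz with h2 | h2 <;> linarith
        · linarith
      · exact absurd (h ▸ hz) hx
      · exact Or.inr ⟨h, lt_of_lt_of_le hv (hbm z ⟨hz, h⟩)⟩
    have hyb : y < b := by rcases hy b hbZ with h2 | h2 <;> linarith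
    have h1 : f y < f b := hfi y b hyb fun v hv => hcell v hv.2 (Or.inl hv.1.le)
    have h2 : 0 < g b := hs b hbZ (by linarith)
    have h3 : {v | 0 < g v} ∈ 𝓝 b := (isOpen_lt continuous_const hg).mem_nhds h2
    obtain ⟨w, hw, hw'⟩ := exists_Ioc_subset_of_mem_nhds' h3 hxb
    refine ⟨(w + b) / 2, hcell _ (by linarith [hw.2]) (Or.inr (by linarith [hw.1, hw.2])), hw' ⟨by linarith [hw.2], by linarith [hw.2]⟩⟩
  · push Not at hb
    have hcell : ∀ v, x ≤ v → v ∈ cellOf Z x := by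
      intro v hv z hz
      have : z < x := lt_of_le_of_ne (hb z hz) (fun h => hx (h ▸ hz))
      exact Or.inl ⟨this, by linarith⟩
    obtain ⟨w, hw1, hw2⟩ := ((hgt.eventually_gt_atTop (|g x|)).and (eventually_gt_atTop x)).exists
    refine ⟨w, hcell w hw2.le, ?_⟩
    have := hgi x w hw2 fun v hv => hcell v hv.1.le
    by_contra hcon
    rw [abs_of_nonpos (not_lt.1 hcon)] at hw1
    linarith [neg_abs_le (g x)]

open Filter Topology in
theorem cell_neg {Z : Set ℝ} (hZ : Z.Finite) {x : ℝ} (hx : x ∉ Z) {f g : ℝ → ℝ}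
    (hg : Continuous g) (hfi : IncCell Z x f) (hgi : IncCell Z x g)
    (hgt : Tendsto (fun x => |g x|) atBot atTop)
    (hs : ∀ z ∈ Z, f z < 0 → g z < 0) (h : ∃ y ∈ cellOf Z x, f y < 0) :
    ∃ y ∈ cellOf Z x, g y < 0 := by
  have hc : ∀ v, v ∈ cellOf (-Z) (-x) ↔ -v ∈ cellOf Z x := by
    intro v
    constructor
    · intro h z hz
      rcases h (-z) (by simpa using hz) with h | h
      · exact Or.inr ⟨by linarith, by linarith⟩
      · exact Or.inl ⟨by linarith, by linarith⟩
    · intro h z hz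
      rcases h (-z) hz with h | h
      · exact Or.inr ⟨by linarith, by linarith⟩
      · exact Or.inl ⟨by linarith, by linarith⟩
  have hinc : ∀ f, IncCell Z x f → IncCell (-Z) (-x) (fun v => - f (-v)) := by
    intro f hf y w hyw hsub
    have := hf (-w) (-y) (by linarith) fun v hv => by
      have := (hc (-v)).1 (hsub ⟨by linarith [hv.2], by linarith [hv.1]⟩)
      simpa using this
    simpa using this
  obtain ⟨y, hy, hy'⟩ := cell_pos (Z := -Z) (x := -x) (f := fun v => - f (-v))
    (g := fun v => - g (-v)) (by simpa using hZ.neg) (by simpa using hx) (by fun_prop)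
    (hinc f hfi) (hinc g hgi) (by simpa [Function.comp_def] using hgt.comp tendsto_neg_atTop_atBot)
    (fun z hz h => by have := hs (-z) hz (by linarith); simpa using this)
    (by obtain ⟨y, hy, hy'⟩ := h
        exact ⟨-y, (hc _).2 (by simpa using hy), by simpa using hy'⟩)
  exact ⟨-y, (hc _).1 hy, by simpa using hy'⟩

theorem cell_ivt {Z : Set ℝ} {x : ℝ} {g : ℝ → ℝ} (hg : Continuous g)
    {y w : ℝ} (hy : y ∈ cellOf Z x) (hw : w ∈ cellOf Z x) (h1 : 0 < g y) (h2 : g w < 0) :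
    ∃ v ∈ cellOf Z x, g v = 0 := by
  have : (cellOf Z x).OrdConnected := ⟨fun a ha b hb v hv => cellOf_ord ha hb hv.1 hv.2⟩
  obtain ⟨v, hv, hv'⟩ := this.isPreconnected.intermediate_value hw hy hg.continuousOn
    ⟨h2.le, h1.le⟩
  exact ⟨v, hv, hv'⟩

open Filter Topology in
theorem cell_zero {Z : Set ℝ} (hZ : Z.Finite) {x : ℝ} (hx : x ∉ Z) {f g : ℝ → ℝ}
    (hg : Continuous g) (hfi : IncCell Z x f) (hgi : IncCell Z x g)
    (hgt : Tendsto (fun x => |g x|) atTop atTop) (hgb : Tendsto (fun x => |g x|) atBot atTop)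
    (hs : ∀ z ∈ Z, SignType.sign (f z) = SignType.sign (g z)) (h : ∃ y ∈ cellOf Z x, f y = 0) :
    ∃ y ∈ cellOf Z x, g y = 0 := by
  obtain ⟨y, hy, hy0⟩ := h
  obtain ⟨w, hw, hyw⟩ := cellOf_gt hZ hy
  obtain ⟨v, hv, hyv⟩ := cellOf_lt hZ hy
  obtain ⟨w', h1, h2⟩ := cell_pos hZ hx hg hfi hgi hgt
    (fun z hz h => by have := hs z hz; rw [sign_pos h] at this; exact sign_eq_one_iff.1 this.symm)
    ⟨w, hw, hy0 ▸ hfi.lt hy hw hyw⟩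
  obtain ⟨v', h3, h4⟩ := cell_neg hZ hx hg hfi hgi hgb
    (fun z hz h => by
      have := hs z hz; rw [sign_neg h] at this; exact sign_eq_neg_one_iff.1 this.symm)
    ⟨v, hv, hy0 ▸ hfi.lt hv hy hyv⟩
  exact cell_ivt hg h1 h3 h2 h4

open Filter Topology in
theorem cell_match {Z : Set ℝ} (hZ : Z.Finite) {x : ℝ} (hx : x ∉ Z) {f g : ℝ → ℝ}
    (hf : Continuous f)
    (hg : Continuous g) (hfi : IncCell Z x f) (hgi : IncCell Z x g)
    (hft : Tendsto (fun x => |f x|) atTop atTop) (hfb : Tendsto (fun x => |f x|) atBot atTop)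
    (hgt : Tendsto (fun x => |g x|) atTop atTop) (hgb : Tendsto (fun x => |g x|) atBot atTop)
    (hs : ∀ z ∈ Z, SignType.sign (f z) = SignType.sign (g z)) :
    ∃ u ∈ cellOf Z x, ∃ v ∈ cellOf Z x, ∀ y ∈ cellOf Z x, ∀ y' ∈ cellOf Z x,
      (y < u ↔ y' < v) → (u < y ↔ v < y') → SignType.sign (f y) = SignType.sign (g y') := by
  by_cases h : ∃ u ∈ cellOf Z x, f u = 0
  · obtain ⟨v, hv, hv0⟩ := cell_zero hZ hx hg hfi hgi hgt hgb hs h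
    obtain ⟨u, hu, hu0⟩ := h
    refine ⟨u, hu, v, hv, fun y hy y' hy' h1 h2 => ?_⟩
    rcases lt_trichotomy y u with h | h | h
    · have e1 := hfi.lt hy hu h
      have e2 := hgi.lt hy' hv (h1.1 h)
      rw [sign_neg (by linarith), sign_neg (by linarith)]
    · have : y' = v := by
        apply le_antisymm
        · exact not_lt.1 fun hh => absurd (h2.2 hh) (by rw [h]; exact lt_irrefl _)
        · exact not_lt.1 fun hh => absurd (h1.2 hh) (by rw [h]; exact lt_irrefl _)
      rw [h, this, hu0, hv0]
    · have e1 := hfi.lt hu hy h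
      have e2 := hgi.lt hv hy' (h2.1 h)
      rw [sign_pos (by linarith), sign_pos (by linarith)]
  · have h' : ¬ ∃ u ∈ cellOf Z x, g u = 0 := fun hh =>
      h (cell_zero hZ hx hf hgi hfi hft hfb (fun z hz => (hs z hz).symm) hh)
    refine ⟨x, cellOf_self hx, x, cellOf_self hx, fun y hy y' hy' _ _ => ?_⟩
    rcases lt_trichotomy (f y) 0 with h1 | h1 | h1
    · rcases lt_trichotomy (g y') 0 with h2 | h2 | h2
      · rw [sign_neg h1, sign_neg h2]
      · exact absurd ⟨_, hy', h2⟩ h'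
      · obtain ⟨w, hw, hw'⟩ := cell_neg hZ hx hg hfi hgi hgb (fun z hz h => by
          have := hs z hz; rw [sign_neg h] at this; exact sign_eq_neg_one_iff.1 this.symm)
          ⟨y, hy, h1⟩
        exact absurd (cell_ivt hg hy' hw h2 hw') h'
    · exact absurd ⟨_, hy, h1⟩ h
    · rcases lt_trichotomy (g y') 0 with h2 | h2 | h2
      · obtain ⟨w, hw, hw'⟩ := cell_pos hZ hx hg hfi hgi hgt (fun z hz h => by
          have := hs z hz; rw [sign_pos h] at this; exact sign_eq_one_iff.1 this.symm)
          ⟨y, hy, h1⟩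
        exact absurd (cell_ivt hg hw hy' hw' h2) h'
      · exact absurd ⟨_, hy', h2⟩ h'
      · rw [sign_pos h1, sign_pos h2]

/-- Piecewise linear map fixing the outside of `[a,b]` and sending `u` to `w`. -/
noncomputable def tentMap (a b u w x : ℝ) : ℝ :=
  if x ≤ a then x else if x ≤ u then a + (x - a) / (u - a) * (w - a)
  else if x ≤ b then b - (b - x) / (b - u) * (b - w) else x

theorem tentMap_inv {a b u w : ℝ} (hu : a < u) (hub : u < b) (hw : a < w) (hwb : w < b) (x : ℝ) :
    tentMap a b w u (tentMap a b u w x) = x := by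
  have e1 : 0 < u - a := by linarith
  have e2 : 0 < b - u := by linarith
  have e3 : 0 < w - a := by linarith
  have e4 : 0 < b - w := by linarith
  by_cases h1 : x ≤ a
  · simp [tentMap, h1]
  by_cases h2 : x ≤ u
  · have k : tentMap a b u w x = a + (x - a) / (u - a) * (w - a) := by simp [tentMap, h1, h2]
    have k1 : 0 < (x - a) / (u - a) := div_pos (by linarith) e1
    have k2 : (x - a) / (u - a) ≤ 1 := by rw [div_le_one e1]; linarith
    have l1 : ¬ tentMap a b u w x ≤ a := by rw [k]; nlinarith
    have l2 : tentMap a b u w x ≤ w := by rw [k]; nlinarith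
    rw [tentMap, if_neg l1, if_pos l2, k]
    field_simp; ring
  by_cases h3 : x ≤ b
  · have k : tentMap a b u w x = b - (b - x) / (b - u) * (b - w) := by
      simp [tentMap, h1, h2, h3]
    have k1 : 0 ≤ (b - x) / (b - u) := div_nonneg (by linarith) e2.le
    have k2 : (b - x) / (b - u) < 1 := by rw [div_lt_one e2]; linarith
    have l2 : ¬ tentMap a b u w x ≤ w := by rw [k]; nlinarith
    have l1 : ¬ tentMap a b u w x ≤ a := fun h => l2 (by linarith)
    have l3 : tentMap a b u w x ≤ b := by rw [k]; nlinarith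
    rw [tentMap, if_neg l1, if_neg l2, if_pos l3, k]
    field_simp; ring
  · have h4 : ¬ x ≤ w := by linarith
    simp [tentMap, h1, h2, h3, h4]

theorem tentMap_mono {a b u w : ℝ} (hu : a < u) (hub : u < b) (hw : a < w) (hwb : w < b) :
    Monotone (tentMap a b u w) := by
  intro x y hxy
  have e1 : 0 < u - a := by linarith
  have e2 : 0 < b - u := by linarith
  have e3 : 0 < w - a := by linarith
  have e4 : 0 < b - w := by linarith
  have A : ∀ x, a ≤ x → a ≤ a + (x - a) / (u - a) * (w - a) := fun x hx => by
    have : 0 ≤ (x - a) / (u - a) * (w - a) := mul_nonneg (div_nonneg (by linarith) e1.le) e3.le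
    linarith
  have B : ∀ x, x ≤ u → a + (x - a) / (u - a) * (w - a) ≤ w := fun x hx => by
    have : (x - a) / (u - a) ≤ 1 := by rw [div_le_one e1]; linarith
    nlinarith
  have C : ∀ x, u ≤ x → w ≤ b - (b - x) / (b - u) * (b - w) := fun x hx => by
    have : (b - x) / (b - u) ≤ 1 := by rw [div_le_one e2]; linarith
    nlinarith
  have D : ∀ x, x ≤ b → b - (b - x) / (b - u) * (b - w) ≤ b := fun x hx => by
    have : 0 ≤ (b - x) / (b - u) * (b - w) := mul_nonneg (div_nonneg (by linarith) e2.le) e4.le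
    linarith
  unfold tentMap
  split_ifs <;> try linarith
  · linarith [A y (by linarith)]
  · linarith [C y (by linarith)]
  · gcongr
  · linarith [B x (by linarith), C y (by linarith)]
  · linarith [B x (by linarith)]
  · gcongr
  · linarith [D x (by linarith)]

/-- The tent map as an order isomorphism. -/
noncomputable def tentIso {a b u w : ℝ} (hu : a < u) (hub : u < b) (hw : a < w) (hwb : w < b) :
    ℝ ≃o ℝ :=
  Equiv.toOrderIso
    ⟨tentMap a b u w, tentMap a b w u, tentMap_inv hu hub hw hwb, tentMap_inv hw hwb hu hub⟩
    (tentMap_mono hu hub hw hwb) (tentMap_mono hw hwb hu hub)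

theorem tentMap_cell {Z : Set ℝ} {x a b u w y : ℝ} (hu : a < u) (hub : u < b) (hw : a < w)
    (hwb : w < b) (ha : a ∈ cellOf Z x) (hb : b ∈ cellOf Z x) (hy : y ∈ cellOf Z x) :
    tentMap a b u w y ∈ cellOf Z x := by
  by_cases h1 : y ≤ a
  · simpa [tentMap, h1] using hy
  by_cases h3 : y ≤ b
  · have k1 : tentMap a b u w a = a := by simp [tentMap]
    have k2 : tentMap a b u w b = b := by
      simp [tentMap, not_le.2 (hu.trans hub), not_le.2 hub]
    exact cellOf_ord ha hb (k1.symm.le.trans (tentMap_mono hu hub hw hwb (not_le.1 h1).le))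
      ((tentMap_mono hu hub hw hwb h3).trans k2.le)
  · have h2 : ¬ y ≤ u := by linarith
    simpa [tentMap, h1, h2, h3] using hy

theorem cell_iso {Z : Set ℝ} (hZ : Z.Finite) {x u v : ℝ} (hu : u ∈ cellOf Z x)
    (hv : v ∈ cellOf Z x) : ∃ θ : ℝ ≃o ℝ, θ u = v ∧ (∀ y ∈ cellOf Z x, θ y ∈ cellOf Z x) ∧
      (∀ y ∈ cellOf Z x, θ.symm y ∈ cellOf Z x) := by
  obtain ⟨a, ha, ha1, ha2⟩ : ∃ a ∈ cellOf Z x, a < u ∧ a < v := by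
    rcases le_total u v with h | h
    · obtain ⟨a, h1, h2⟩ := cellOf_lt hZ hu; exact ⟨a, h1, h2, by linarith⟩
    · obtain ⟨a, h1, h2⟩ := cellOf_lt hZ hv; exact ⟨a, h1, by linarith, h2⟩
  obtain ⟨b, hb, hb1, hb2⟩ : ∃ b ∈ cellOf Z x, u < b ∧ v < b := by
    rcases le_total u v with h | h
    · obtain ⟨a, h1, h2⟩ := cellOf_gt hZ hv; exact ⟨a, h1, by linarith, h2⟩
    · obtain ⟨a, h1, h2⟩ := cellOf_gt hZ hu; exact ⟨a, h1, h2, by linarith⟩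
  refine ⟨tentIso ha1 hb1 ha2 hb2, ?_, fun y hy => tentMap_cell ha1 hb1 ha2 hb2 ha hb hy,
    fun y hy => tentMap_cell ha2 hb2 ha1 hb1 ha hb hy⟩
  have : u - a ≠ 0 := by linarith
  change tentMap a b u v u = v
  simp [tentMap, not_le.2 ha1, this]

open Filter Topology in
theorem exists_sign_iso {Z : Set ℝ} (hZ : Z.Finite) {f g : ℝ → ℝ} (hf : Continuous f)
    (hg : Continuous g)
    (hi : ∀ x, x ∉ Z → (IncCell Z x f ∧ IncCell Z x g) ∨
      (IncCell Z x (fun y => - f y) ∧ IncCell Z x (fun y => - g y)))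
    (hft : Tendsto (fun x => |f x|) atTop atTop) (hfb : Tendsto (fun x => |f x|) atBot atTop)
    (hgt : Tendsto (fun x => |g x|) atTop atTop) (hgb : Tendsto (fun x => |g x|) atBot atTop)
    (hs : ∀ z ∈ Z, SignType.sign (f z) = SignType.sign (g z)) :
    ∃ θ : ℝ ≃o ℝ, (∀ z ∈ Z, θ z = z) ∧ (∀ x, x ∉ Z → θ x ∈ cellOf Z x) ∧
      ∀ x, SignType.sign (f x) = SignType.sign (g (θ x)) := by
  have key : ∀ S : Set ℝ, ∃ θ : ℝ ≃o ℝ, ∀ x, x ∉ Z → S = cellOf Z x →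
      (∀ y ∈ S, θ y ∈ S) ∧ (∀ y ∈ S, θ.symm y ∈ S) ∧
      ∀ y ∈ S, SignType.sign (f y) = SignType.sign (g (θ y)) := by
    intro S
    by_cases hS : ∃ x, x ∉ Z ∧ S = cellOf Z x
    · obtain ⟨x, hx, rfl⟩ := hS
      have : ∃ u ∈ cellOf Z x, ∃ v ∈ cellOf Z x, ∀ y ∈ cellOf Z x, ∀ y' ∈ cellOf Z x,
          (y < u ↔ y' < v) → (u < y ↔ v < y') → SignType.sign (f y) = SignType.sign (g y') := by
        rcases hi x hx with h | h
        · exact cell_match hZ hx hf hg h.1 h.2 hft hfb hgt hgb hs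
        · obtain ⟨u, hu, v, hv, h⟩ := cell_match hZ hx hf.neg hg.neg h.1 h.2 (by simpa using hft)
            (by simpa using hfb) (by simpa using hgt) (by simpa using hgb)
            (fun z hz => by simpa [Left.sign_neg] using hs z hz)
          refine ⟨u, hu, v, hv, fun y hy y' hy' h1 h2 => ?_⟩
          simpa [Left.sign_neg] using h y hy y' hy' h1 h2
      obtain ⟨u, hu, v, hv, h⟩ := this
      obtain ⟨θ, h1, h2, h3⟩ := cell_iso hZ hu hv
      refine ⟨θ, fun _ _ _ => ⟨h2, h3, fun y hy => h y hy _ (h2 y hy) ?_ ?_⟩⟩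
      · rw [← h1]; exact θ.lt_iff_lt.symm
      · rw [← h1]; exact θ.lt_iff_lt.symm
    · exact ⟨OrderIso.refl _, fun x hx h => absurd ⟨x, hx, h⟩ hS⟩
  choose D hD using key
  classical
  set T : ℝ → ℝ := fun x => if x ∈ Z then x else D (cellOf Z x) x with hT
  have T1 : ∀ z ∈ Z, T z = z := fun z hz => by simp [hT, hz]
  have T2 : ∀ x, x ∉ Z → T x = D (cellOf Z x) x := fun z hz => by simp [hT, hz]
  have T3 : ∀ x, x ∉ Z → T x ∈ cellOf Z x := fun x hx => by
    rw [T2 x hx]; exact (hD _ x hx rfl).1 x (cellOf_self hx)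
  have mono : StrictMono T := by
    intro x y hxy
    by_cases hx : x ∈ Z
    · rw [T1 x hx]
      by_cases hy : y ∈ Z
      · rwa [T1 y hy]
      · rcases T3 y hy x hx with h | h <;> linarith
    · by_cases hy : y ∈ Z
      · rw [T1 y hy]
        rcases T3 x hx y hy with h | h <;> linarith
      · by_cases hc : y ∈ cellOf Z x
        · rw [T2 x hx, T2 y hy, cellOf_eq hc]
          exact (D _).strictMono hxy
        · simp only [cellOf, mem_ofPred_eq, not_forall] at hc
          obtain ⟨z, hz, hc⟩ := hc
          have a1 : z ≠ x := fun h => hx (h ▸ hz)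
          have a2 : z ≠ y := fun h => hy (h ▸ hz)
          rcases T3 x hx z hz with h | h
          · exact absurd (Or.inl ⟨h.1, by linarith⟩) hc
          · rcases T3 y hy z hz with h' | h'
            · linarith
            · exact absurd (Or.inr ⟨h.1, h'.1⟩) hc
  have surj : Function.Surjective T := by
    intro y
    by_cases hy : y ∈ Z
    · exact ⟨y, T1 y hy⟩
    · have h1 := (hD _ y hy rfl).2.1 y (cellOf_self hy)
      refine ⟨(D (cellOf Z y)).symm y, ?_⟩
      rw [T2 _ (cellOf_not_mem h1), cellOf_eq h1]
      simp
  refine ⟨mono.orderIsoOfSurjective T surj, T1, T3, fun x => ?_⟩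
  change _ = SignType.sign (g (T x))
  by_cases hx : x ∈ Z
  · rw [T1 x hx]; exact hs x hx
  · rw [T2 x hx]; exact (hD _ x hx rfl).2.2 x (cellOf_self hx)

section Main

open Filter Topology Polynomial

theorem poly_abs_atTop {p : ℝ[X]} (hp : 0 < p.natDegree) :
    Tendsto (fun x => |p.eval x|) atTop atTop :=
  p.abs_tendsto_atTop (natDegree_pos_iff_degree_pos.1 hp)

theorem poly_abs_atBot {p : ℝ[X]} (hp : 0 < p.natDegree) :
    Tendsto (fun x => |p.eval x|) atBot atTop := by
  have h : 0 < (p.comp (-X)).natDegree := by simpa [natDegree_comp] using hp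
  have := (poly_abs_atTop h).comp tendsto_neg_atBot_atTop
  simpa [Function.comp_def] using this

theorem poly_inc {p : ℝ[X]} {y w : ℝ} (hyw : y < w)
    (h : ∀ v ∈ Ioo y w, 0 < p.derivative.eval v) : p.eval y < p.eval w := by
  have := strictMonoOn_of_deriv_pos (convex_Icc y w) (f := fun x => p.eval x)
    p.continuous.continuousOn (fun x hx => by
      rw [interior_Icc] at hx
      simpa using h x hx)
  exact this ⟨le_rfl, hyw.le⟩ ⟨hyw.le, le_rfl⟩ hyw

/-- A function with no zeros on a cell has constant sign there. -/
theorem cell_sign_const {Z : Set ℝ} {x : ℝ} {g : ℝ → ℝ} (hg : Continuous g)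
    (h0 : ∀ y ∈ cellOf Z x, g y ≠ 0) {y w : ℝ} (hy : y ∈ cellOf Z x) (hw : w ∈ cellOf Z x) :
    SignType.sign (g y) = SignType.sign (g w) := by
  rcases lt_or_gt_of_ne (h0 y hy) with h1 | h1 <;> rcases lt_or_gt_of_ne (h0 w hw) with h2 | h2
  · rw [sign_neg h1, sign_neg h2]
  · obtain ⟨v, hv, h⟩ := cell_ivt hg hw hy h2 h1
    exact absurd h (h0 v hv)
  · obtain ⟨v, hv, h⟩ := cell_ivt hg hy hw h1 h2
    exact absurd h (h0 v hv)
  · rw [sign_pos h1, sign_pos h2]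

theorem eq_zero_of_sign_eq {a b : ℝ} (h : SignType.sign a = SignType.sign b) :
    a = 0 ↔ b = 0 := by
  rw [← sign_eq_zero_iff, h, sign_eq_zero_iff]

theorem pos_of_sign_eq {a b : ℝ} (h : SignType.sign a = SignType.sign b) :
    0 < a ↔ 0 < b := by
  rw [← sign_eq_one_iff, h, sign_eq_one_iff]

theorem neg_of_sign_eq {a b : ℝ} (h : SignType.sign a = SignType.sign b) :
    a < 0 ↔ b < 0 := by
  rw [← sign_eq_neg_one_iff, h, sign_eq_neg_one_iff]

/-- The determinacy lemma. -/
theorem poly_determinacy {p P : ℝ[X]} (hp : 0 < p.natDegree) (hP : 0 < P.natDegree)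
    {Z : Set ℝ} (hZ : Z.Finite) (φ : ℝ ≃o ℝ)
    (hs : ∀ z ∈ Z, SignType.sign (p.eval z) = SignType.sign (P.eval (φ z)))
    (hd : ∀ x, SignType.sign (p.derivative.eval x) = SignType.sign (P.derivative.eval (φ x)))
    (hd0 : ∀ x, x ∉ Z → p.derivative.eval x ≠ 0) :
    ∃ ψ : ℝ ≃o ℝ, (∀ x, SignType.sign (p.eval x) = SignType.sign (P.eval (ψ x))) ∧
      ∀ q Q : ℝ[X], (∀ x, SignType.sign (q.eval x) = SignType.sign (Q.eval (φ x))) →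
        (∀ x, x ∉ Z → q.eval x ≠ 0) →
        ∀ x, SignType.sign (q.eval x) = SignType.sign (Q.eval (ψ x)) := by
  obtain ⟨θ, h1, h2, h3⟩ := exists_sign_iso hZ (f := fun x => p.eval x)
    (g := fun x => P.eval (φ x)) p.continuous (P.continuous.comp φ.continuous) (by
      intro x hx
      have hc : ∀ y ∈ cellOf Z x, SignType.sign (p.derivative.eval x) =
          SignType.sign (p.derivative.eval y) := fun y hy =>
        cell_sign_const (g := fun y => p.derivative.eval y) p.derivative.continuous
          (fun y hy => hd0 y (cellOf_not_mem hy)) (cellOf_self hx) hy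
      have key : ∀ y w, Ioo y w ⊆ cellOf Z x → ∀ v ∈ Ioo (φ y) (φ w),
          SignType.sign (p.derivative.eval x) = SignType.sign (P.derivative.eval v) := by
        intro y w hs v hv
        have := hd (φ.symm v)
        rw [φ.apply_symm_apply] at this
        rw [← this]
        apply hc
        apply hs
        exact ⟨by rw [← φ.lt_iff_lt]; simpa using hv.1, by rw [← φ.lt_iff_lt]; simpa using hv.2⟩
      rcases lt_or_gt_of_ne (hd0 x hx) with h | h
      · right
        refine ⟨fun y w hyw hs => ?_, fun y w hyw hs => ?_⟩
        · have := poly_inc (p := -p) hyw fun v hv => by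
            have := (neg_of_sign_eq (hc v (hs hv))).1 h
            simpa using this
          simpa using this
        · have := poly_inc (p := -P) (φ.lt_iff_lt.2 hyw) fun v hv => by
            have := (neg_of_sign_eq (key y w hs v hv)).1 h
            simpa using this
          simpa using this
      · left
        refine ⟨fun y w hyw hs => ?_, fun y w hyw hs => ?_⟩
        · exact poly_inc hyw fun v hv => (pos_of_sign_eq (hc v (hs hv))).1 h
        · exact poly_inc (φ.lt_iff_lt.2 hyw) fun v hv =>
            (pos_of_sign_eq (key y w hs v hv)).1 h)
    (poly_abs_atTop hp) (poly_abs_atBot hp)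
    ((poly_abs_atTop hP).comp φ.tendsto_atTop) ((poly_abs_atBot hP).comp φ.tendsto_atBot) hs
  refine ⟨θ.trans φ, h3, fun q Q hq hq0 x => ?_⟩
  rw [OrderIso.trans_apply, ← hq]
  by_cases hx : x ∈ Z
  · rw [h1 x hx]
  · exact cell_sign_const (g := fun y => q.eval y) q.continuous
      (fun y hy => hq0 y (cellOf_not_mem hy)) (cellOf_self hx) (h2 x hx)

section Alg
variable {A : Type*} [CommRing A]

/-- Truncation of a polynomial to degree at most `j`. -/
noncomputable def truncDeg (q : A[X]) (j : ℕ) : A[X] :=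
  ∑ i ∈ Finset.range (j + 1), Polynomial.monomial i (q.coeff i)

theorem coeff_truncDeg (q : A[X]) (j i : ℕ) :
    (truncDeg q j).coeff i = if i ≤ j then q.coeff i else 0 := by
  simp [truncDeg, coeff_monomial]

theorem natDegree_truncDeg (q : A[X]) (j : ℕ) : (truncDeg q j).natDegree ≤ j := by
  rw [natDegree_le_iff_coeff_eq_zero]
  intro i hi
  rw [coeff_truncDeg, if_neg (by omega)]

theorem map_truncDeg {B : Type*} [CommRing B] (f : A →+* B) (q : A[X]) (j : ℕ)
    (h : (q.map f).natDegree ≤ j) : (truncDeg q j).map f = q.map f := by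
  ext i
  rw [coeff_map, coeff_truncDeg]
  split_ifs with hi
  · rw [coeff_map]
  · rw [map_zero, coeff_eq_zero_of_natDegree_lt (by omega)]

theorem pseudo_div (q : A[X]) (d : ℕ) (hq : q.natDegree ≤ d + 1) (N : ℕ) :
    ∀ p : A[X], p.natDegree ≤ N → ∃ (k : ℕ) (s r : A[X]), r.natDegree ≤ d ∧
      C ((q.coeff (d + 1)) ^ (2 * k)) * p = q * s + r := by
  induction N with
  | zero => exact fun p hp => ⟨0, 0, p, by omega, by simp⟩
  | succ N ih =>
    intro p hp
    by_cases hd : N + 1 ≤ d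
    · exact ⟨0, 0, p, by omega, by simp⟩
    set c := q.coeff (d + 1) with hc
    set e := p.coeff (N + 1) with he
    obtain ⟨k, s, r, hr, h⟩ := ih (C (c ^ 2) * p - C (c * e) * (X ^ (N - d) * q)) (by
      rw [natDegree_le_iff_coeff_eq_zero]
      intro i hi
      rw [coeff_sub, coeff_C_mul, coeff_C_mul]
      rcases eq_or_lt_of_le (Nat.succ_le_of_lt hi) with h | h
      · have : i = (d + 1) + (N - d) := by omega
        rw [this, coeff_X_pow_mul, ← hc, ← this, ← h, ← he]
        ring
      · have : i = (i - (N - d)) + (N - d) := by omega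
        rw [coeff_eq_zero_of_natDegree_lt (p := p) (by omega), this, coeff_X_pow_mul,
          coeff_eq_zero_of_natDegree_lt (p := q) (by omega)]
        ring)
    refine ⟨k + 1, s + C (c ^ (2 * k)) * C (c * e) * X ^ (N - d), r, hr, ?_⟩
    have e1 : C (c ^ (2 * (k + 1))) * p = C (c ^ (2 * k)) * (C (c ^ 2) * p) := by
      rw [← mul_assoc, ← C_mul, ← pow_add]; ring_nf
    rw [e1]
    linear_combination h

end Alg

section TS
variable {ι : Type*} [Fintype ι]

/-- Specialization at a parameter. -/
noncomputable def spec (a : ι → ℝ) (p : (MvPolynomial ι ℝ)[X]) : ℝ[X] :=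
  p.map (MvPolynomial.eval a)

/-- Two parameters give order-isomorphic sign diagrams. -/
def SignEqv (F : Finset (MvPolynomial ι ℝ)[X]) (a b : ι → ℝ) : Prop :=
  ∃ φ : ℝ ≃o ℝ, ∀ p ∈ F, ∀ x,
    SignType.sign ((spec a p).eval x) = SignType.sign ((spec b p).eval (φ x))

theorem spec_sign_root {a : ι → ℝ} {p q s r : (MvPolynomial ι ℝ)[X]} {j k : ℕ} {x : ℝ}
    (hj : (spec a q).natDegree = j) (h0 : spec a q ≠ 0) (hx : (spec a q).eval x = 0)
    (h : C (((truncDeg q j).coeff j) ^ (2 * k)) * p = truncDeg q j * s + r) :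
    SignType.sign ((spec a p).eval x) = SignType.sign ((spec a r).eval x) := by
  have h1 := congrArg (fun P => (spec a P).eval x) h
  have h2 : (truncDeg q j).map (MvPolynomial.eval a) = spec a q :=
    map_truncDeg _ _ _ hj.le
  have h4 : MvPolynomial.eval a ((truncDeg q j).coeff j) = (spec a q).coeff j := by
    rw [← h2, coeff_map]
  have h5 : (spec a q).coeff j ^ (2 * k) * (spec a p).eval x = (spec a r).eval x := by
    have e1 : (spec a (C (((truncDeg q j).coeff j) ^ (2 * k)) * p)).eval x =
        (spec a q).coeff j ^ (2 * k) * (spec a p).eval x := by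
      rw [← h4, spec, Polynomial.map_mul, Polynomial.map_C, eval_mul, eval_C, map_pow]; rfl
    have e2 : (spec a (truncDeg q j * s + r)).eval x = (spec a r).eval x := by
      rw [spec, Polynomial.map_add, Polynomial.map_mul, h2, eval_add, eval_mul, hx, zero_mul,
        zero_add]; rfl
    rw [← e1, ← e2]; exact h1
  have h3 : 0 < (spec a q).coeff j ^ (2 * k) := by
    rw [pow_mul]
    apply pow_pos
    have : (spec a q).coeff j ≠ 0 := by
      rw [← hj]; simpa using h0
    positivity
  rw [← h5, sign_mul, sign_pos h3, one_mul]

theorem signEqv_step (d : ℕ) (p : (MvPolynomial ι ℝ)[X]) (hp : p.natDegree ≤ d + 1)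
    (G : Finset (MvPolynomial ι ℝ)[X]) (hG : ∀ q ∈ G, q.natDegree ≤ d + 1) :
    ∃ F : Finset (MvPolynomial ι ℝ)[X], (∀ q ∈ F, q.natDegree ≤ d) ∧
      ∀ a b, (∃ φ : ℝ ≃o ℝ, ∀ q, q ∈ F ∨ q ∈ G → ∀ x,
        SignType.sign ((spec a q).eval x) = SignType.sign ((spec b q).eval (φ x))) →
      ∃ φ : ℝ ≃o ℝ, ∀ q, q = p ∨ q ∈ G → ∀ x,
        SignType.sign ((spec a q).eval x) = SignType.sign ((spec b q).eval (φ x)) := by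
  classical
  have hrem : ∀ (q : (MvPolynomial ι ℝ)[X]) (j : ℕ), ∃ r : (MvPolynomial ι ℝ)[X],
      r.natDegree ≤ j ∧ ∃ (k : ℕ) (s : (MvPolynomial ι ℝ)[X]),
      C (((truncDeg q (j + 1)).coeff (j + 1)) ^ (2 * k)) * p = truncDeg q (j + 1) * s + r := by
    intro q j
    obtain ⟨k, s, r, h1, h2⟩ :=
      pseudo_div (truncDeg q (j + 1)) j (natDegree_truncDeg _ _) _ p le_rfl
    exact ⟨r, h1, k, s, h2⟩
  choose rem hrem1 hrem2 using hrem
  set Q := insert (derivative p) G with hQ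
  have hp' : (derivative p).natDegree ≤ d := (natDegree_derivative_le p).trans (by omega)
  have hQd : ∀ q ∈ Q, q.natDegree ≤ d + 1 := by
    intro q hq
    rcases Finset.mem_insert.1 hq with rfl | hq
    · omega
    · exact hG q hq
  refine ⟨{derivative p, truncDeg p d} ∪
    (insert p Q).biUnion (fun q => (Finset.range (d + 2)).image fun i => C (q.coeff i)) ∪
    Q.biUnion (fun q => (Finset.range (d + 1)).image fun i => rem q i), ?_, ?_⟩
  · intro q hq
    simp only [Finset.mem_union, Finset.mem_insert, Finset.mem_singleton, Finset.mem_biUnion,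
      Finset.mem_image, Finset.mem_range] at hq
    rcases hq with ((rfl | rfl) | ⟨_, _, _, _, rfl⟩) | ⟨q', _, i, hi, rfl⟩
    · exact hp'
    · exact natDegree_truncDeg _ _
    · simp
    · exact (hrem1 q' i).trans (by omega)
  · rintro a b ⟨φ, hφ⟩
    have hder := hφ (derivative p) (Or.inl (by simp))
    have htr := hφ (truncDeg p d) (Or.inl (by simp))
    have hco : ∀ q ∈ insert p Q, ∀ i, (spec a q).coeff i = 0 ↔ (spec b q).coeff i = 0 := by
      intro q hq i
      by_cases hi : i < d + 2
      · have := hφ (C (q.coeff i)) (Or.inl (by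
          apply Finset.mem_union_left
          apply Finset.mem_union_right
          exact Finset.mem_biUnion.2 ⟨q, hq, Finset.mem_image.2 ⟨i, Finset.mem_range.2 hi, rfl⟩⟩)) 0
        have := eq_zero_of_sign_eq this
        simpa [spec] using this
      · have : q.natDegree ≤ d + 1 := by
          rcases Finset.mem_insert.1 hq with rfl | hq
          · exact hp
          · exact hQd q hq
        have : q.coeff i = 0 := coeff_eq_zero_of_natDegree_lt (by omega)
        simp [spec, this]
    have hze : ∀ q ∈ insert p Q, spec a q = 0 ↔ spec b q = 0 := by
      intro q hq
      simp only [Polynomial.ext_iff, coeff_zero]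
      exact forall_congr' (hco q hq)
    have hde : ∀ q ∈ insert p Q, (spec a q).natDegree = (spec b q).natDegree := by
      intro q hq
      apply le_antisymm
      · rw [natDegree_le_iff_coeff_eq_zero]
        intro i hi
        rw [hco q hq, coeff_eq_zero_of_natDegree_lt hi]
      · rw [natDegree_le_iff_coeff_eq_zero]
        intro i hi
        rw [← hco q hq, coeff_eq_zero_of_natDegree_lt hi]
    have hle : ∀ c : ι → ℝ, (spec c p).natDegree ≤ d + 1 := fun c =>
      (natDegree_map_le).trans hp
    by_cases hd : (spec a p).natDegree ≤ d
    · refine ⟨φ, fun q hq x => ?_⟩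
      rcases hq with rfl | hq
      · have := htr x
        rwa [spec, spec, map_truncDeg _ _ _ hd, map_truncDeg _ _ _
          ((hde q (by simp)).symm.le.trans hd)] at this
      · exact hφ q (Or.inr hq) x
    · have ha : 0 < (spec a p).natDegree := by omega
      have hb : 0 < (spec b p).natDegree := by rw [← hde p (by simp)]; exact ha
      have hQφ : ∀ q ∈ Q, ∀ x,
          SignType.sign ((spec a q).eval x) = SignType.sign ((spec b q).eval (φ x)) := by
        intro q hq
        rcases Finset.mem_insert.1 hq with rfl | hq
        · exact hder
        · exact hφ q (Or.inr hq)
      set Z : Set ℝ := {x | ∃ q ∈ Q, spec a q ≠ 0 ∧ (spec a q).eval x = 0} with hZ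
      have hZf : Z.Finite := by
        have : Z ⊆ ⋃ q ∈ Q, ((spec a q).roots.toFinset : Set ℝ) := by
          rintro x ⟨q, hq, h1, h2⟩
          simp only [mem_iUnion]
          exact ⟨q, hq, by simp [h1, h2]⟩
        exact (Q.finite_toSet.biUnion fun q _ => Finset.finite_toSet _).subset this
      have hdm : ∀ c : ι → ℝ, (spec c p).derivative = spec c (derivative p) := fun c => by
        simp [spec, derivative_map]
      have hd0 : spec a (derivative p) ≠ 0 := by
        rw [← hdm]
        intro h
        have := derivative_eq_zero.1 h
        omega
      obtain ⟨ψ, h1, h2⟩ := poly_determinacy ha hb hZf φ (by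
          rintro z ⟨q, hq, hq0, hqz⟩
          have hqI : q ∈ insert p Q := Finset.mem_insert_of_mem hq
          obtain ⟨j, hj⟩ : ∃ j, (spec a q).natDegree = j + 1 := by
            apply Nat.exists_eq_succ_of_ne_zero
            intro h
            rw [eq_C_of_natDegree_eq_zero h] at hqz hq0
            simp at hqz
            simp [hqz] at hq0
          have hjd : j + 1 ≤ d + 1 := hj ▸ (natDegree_map_le).trans (hQd q hq)
          obtain ⟨k, s, h⟩ := hrem2 q j
          rw [spec_sign_root hj hq0 hqz h,
            spec_sign_root (a := b) (x := φ z) ((hde q hqI).symm.trans hj)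
              (fun hh => hq0 ((hze q hqI).2 hh))
              ((eq_zero_of_sign_eq (hQφ q hq z)).1 hqz) h]
          apply hφ
          left
          apply Finset.mem_union_right
          exact Finset.mem_biUnion.2 ⟨q, hq, Finset.mem_image.2
            ⟨j, Finset.mem_range.2 (by omega), rfl⟩⟩)
        (by intro x; rw [hdm, hdm]; exact hder x)
        (by
          intro x hx h
          apply hx
          exact ⟨derivative p, by simp [hQ], hd0, by rw [← hdm]; exact h⟩)
      refine ⟨ψ, fun q hq x => ?_⟩
      rcases hq with rfl | hq
      · exact h1 x
      · have hqQ : q ∈ Q := Finset.mem_insert_of_mem hq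
        by_cases h0 : spec a q = 0
        · rw [h0, (hze q (Finset.mem_insert_of_mem hqQ)).1 h0]; simp
        · exact h2 _ _ (hQφ q hqQ) (fun x hx h => hx ⟨q, hqQ, h0, h⟩) x

theorem IsSemialgebraic.univ : IsSemialgebraic (Set.univ : Set (ι → ℝ)) := by
  have := IsSemialgebraic.eq (0 : MvPolynomial ι ℝ)
  simpa using this

theorem IsSemialgebraic.empty : IsSemialgebraic (∅ : Set (ι → ℝ)) := by
  have := IsSemialgebraic.eq (1 : MvPolynomial ι ℝ)
  simpa using this

theorem IsSemialgebraic.compl {s : Set (ι → ℝ)} (h : IsSemialgebraic s) :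
    IsSemialgebraic sᶜ := by
  induction h with
  | eq p =>
    convert (IsSemialgebraic.lt p).union (IsSemialgebraic.lt (-p)) using 1
    ext x
    simp only [mem_compl_iff, mem_ofPred_eq, mem_union, map_neg, Left.neg_pos_iff]
    rw [← ne_eq, ne_iff_lt_or_gt, or_comm]
  | lt p =>
    convert (IsSemialgebraic.eq p).union (IsSemialgebraic.lt (-p)) using 1
    ext x
    simp only [mem_compl_iff, mem_ofPred_eq, mem_union, map_neg, Left.neg_pos_iff, not_lt]
    rw [le_iff_lt_or_eq, or_comm]
  | union _ _ h1 h2 => rw [compl_union]; exact h1.inter h2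
  | inter _ _ h1 h2 => rw [compl_inter]; exact h1.union h2

theorem IsSemialgebraic.sUnion {𝒞 : Set (Set (ι → ℝ))} (hf : 𝒞.Finite)
    (h : ∀ s ∈ 𝒞, IsSemialgebraic s) : IsSemialgebraic (⋃₀ 𝒞) := by
  induction 𝒞, hf using Set.Finite.induction_on with
  | empty => simpa using IsSemialgebraic.empty
  | insert _ _ ih =>
    rw [sUnion_insert]
    exact (h _ (mem_insert _ _)).union (ih fun s hs => h s (mem_insert_of_mem _ hs))

theorem IsSemialgebraic.biInter {κ : Type*} (T : Finset κ) (f : κ → Set (ι → ℝ))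
    (h : ∀ k ∈ T, IsSemialgebraic (f k)) : IsSemialgebraic (⋂ k ∈ T, f k) := by
  classical
  induction T using Finset.induction_on with
  | empty => simpa using IsSemialgebraic.univ
  | insert k T _ ih =>
    rw [Finset.set_biInter_insert]
    exact (h _ (Finset.mem_insert_self _ _)).inter
      (ih fun s hs => h s (Finset.mem_insert_of_mem hs))

theorem IsSemialgebraic.sign (p : MvPolynomial ι ℝ) (s : SignType) :
    IsSemialgebraic {x | SignType.sign (MvPolynomial.eval x p) = s} := by
  cases s with
  | zero => simpa [sign_eq_zero_iff] using IsSemialgebraic.eq p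
  | pos =>
    have := IsSemialgebraic.lt p
    simpa [← sign_eq_one_iff] using this
  | neg =>
    have := IsSemialgebraic.lt (-p)
    simpa [← sign_eq_neg_one_iff] using this

/-- Finitely many semialgebraic classes of parameters. -/
def GoodFam (F : Finset (MvPolynomial ι ℝ)[X]) : Prop :=
  ∃ 𝒞 : Set (Set (ι → ℝ)), 𝒞.Finite ∧ (∀ s ∈ 𝒞, IsSemialgebraic s) ∧ (∀ a, ∃ s ∈ 𝒞, a ∈ s) ∧
    ∀ s ∈ 𝒞, ∀ a ∈ s, ∀ b ∈ s, SignEqv F a b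

theorem GoodFam.of_imp {F G : Finset (MvPolynomial ι ℝ)[X]}
    (h : ∀ a b, SignEqv G a b → SignEqv F a b) (hG : GoodFam G) : GoodFam F := by
  obtain ⟨𝒞, h1, h2, h3, h4⟩ := hG
  exact ⟨𝒞, h1, h2, h3, fun s hs a ha b hb => h a b (h4 s hs a ha b hb)⟩

theorem goodFam_zero (F : Finset (MvPolynomial ι ℝ)[X]) (hF : ∀ q ∈ F, q.natDegree ≤ 0) :
    GoodFam F := by
  classical
  refine ⟨Set.range fun σ : F → SignType =>
    ⋂ q ∈ (Finset.univ : Finset F),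
      {a | SignType.sign (MvPolynomial.eval a (q.1.coeff 0)) = σ q}, Set.finite_range _, ?_, ?_, ?_⟩
  · rintro _ ⟨σ, rfl⟩
    exact IsSemialgebraic.biInter _ _ fun q _ => IsSemialgebraic.sign _ _
  · intro a
    exact ⟨_, ⟨fun q => SignType.sign (MvPolynomial.eval a (q.1.coeff 0)), rfl⟩, by simp⟩
  · rintro _ ⟨σ, rfl⟩ a ha b hb
    refine ⟨OrderIso.refl _, fun p hp x => ?_⟩
    simp only [Finset.mem_univ, iInter_true, mem_iInter, mem_ofPred_eq] at ha hb
    have h1 := (ha ⟨p, hp⟩).trans (hb ⟨p, hp⟩).symm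
    have h2 := eq_C_of_natDegree_le_zero (hF p hp)
    rw [h2]
    simpa [spec] using h1

theorem goodFam_all (d : ℕ) : ∀ F : Finset (MvPolynomial ι ℝ)[X],
    (∀ q ∈ F, q.natDegree ≤ d) → GoodFam F := by
  classical
  induction d with
  | zero => exact goodFam_zero
  | succ d ih =>
    have key : ∀ T : Finset (MvPolynomial ι ℝ)[X], (∀ q ∈ T, q.natDegree ≤ d + 1) →
        ∀ F : Finset (MvPolynomial ι ℝ)[X], (∀ q ∈ F, q.natDegree ≤ d) → GoodFam (F ∪ T) := by
      intro T
      induction T using Finset.induction_on with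
      | empty => intro _ F hF; simpa using ih F hF
      | insert p T _ ihT =>
        intro hT F hF
        obtain ⟨F', h1, h2⟩ := signEqv_step d p (hT p (by simp)) (F ∪ T) (by
          intro q hq
          rcases Finset.mem_union.1 hq with hq | hq
          · exact (hF q hq).trans (by omega)
          · exact hT q (by simp [hq]))
        refine (ihT (fun q hq => hT q (by simp [hq])) (F ∪ F') (fun q hq => ?_)).of_imp ?_
        · rcases Finset.mem_union.1 hq with hq | hq
          · exact hF q hq
          · exact h1 q hq
        · rintro a b ⟨φ, hφ⟩
          obtain ⟨ψ, hψ⟩ := h2 a b ⟨φ, fun q hq => hφ q (by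
            simp only [Finset.mem_union] at hq ⊢; tauto)⟩
          exact ⟨ψ, fun q hq => hψ q (by
            simp only [Finset.mem_union, Finset.mem_insert] at hq ⊢; tauto)⟩
    intro F hF
    simpa using key F hF ∅ (by simp)

theorem goodFam (F : Finset (MvPolynomial ι ℝ)[X]) : GoodFam F :=
  goodFam_all (F.sup natDegree) F fun _ hq => Finset.le_sup (f := natDegree) hq

theorem IsSemialgebraic.signs {s : Set (ι → ℝ)} (h : IsSemialgebraic s) :
    ∃ F : Finset (MvPolynomial ι ℝ), ∀ x y : ι → ℝ, (∀ p ∈ F,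
      SignType.sign (MvPolynomial.eval x p) = SignType.sign (MvPolynomial.eval y p)) →
      (x ∈ s ↔ y ∈ s) := by
  classical
  induction h with
  | eq p => exact ⟨{p}, fun x y h => eq_zero_of_sign_eq (h p (by simp))⟩
  | lt p => exact ⟨{p}, fun x y h => pos_of_sign_eq (h p (by simp))⟩
  | union _ _ h1 h2 =>
    obtain ⟨F, hF⟩ := h1
    obtain ⟨G, hG⟩ := h2
    exact ⟨F ∪ G, fun x y h => or_congr (hF x y fun p hp => h p (by simp [hp]))
      (hG x y fun p hp => h p (by simp [hp]))⟩
  | inter _ _ h1 h2 =>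
    obtain ⟨F, hF⟩ := h1
    obtain ⟨G, hG⟩ := h2
    exact ⟨F ∪ G, fun x y h => and_congr (hF x y fun p hp => h p (by simp [hp]))
      (hG x y fun p hp => h p (by simp [hp]))⟩

theorem IsSemialgebraic.preimage {κ : Type*} [Fintype κ] {s : Set (κ → ℝ)}
    (h : IsSemialgebraic s) (f : κ → MvPolynomial ι ℝ) :
    IsSemialgebraic {x : ι → ℝ | (fun k => MvPolynomial.eval x (f k)) ∈ s} := by
  have key : ∀ (p : MvPolynomial κ ℝ) (x : ι → ℝ), MvPolynomial.eval x (MvPolynomial.bind₁ f p) =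
      MvPolynomial.eval (fun k => MvPolynomial.eval x (f k)) p := by
    intro p x
    rw [MvPolynomial.eval, MvPolynomial.eval₂Hom_bind₁]; rfl
  induction h with
  | eq p =>
    have := IsSemialgebraic.eq (MvPolynomial.bind₁ f p)
    simpa [key] using this
  | lt p =>
    have := IsSemialgebraic.lt (MvPolynomial.bind₁ f p)
    simpa [key] using this
  | union _ _ h1 h2 => exact h1.union h2
  | inter _ _ h1 h2 => exact h1.inter h2

theorem IsSemialgebraic.reindex {κ : Type*} [Fintype κ] {s : Set (κ → ℝ)}
    (h : IsSemialgebraic s) (f : κ → ι) :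
    IsSemialgebraic {x : ι → ℝ | (fun k => x (f k)) ∈ s} := by
  simpa using h.preimage fun k => (MvPolynomial.X (f k) : MvPolynomial ι ℝ)

end TS

/-- Tarski–Seidenberg, one variable. -/
theorem IsSemialgebraic.exists_cons {n : ℕ} {s : Set (Fin (n + 1) → ℝ)}
    (h : IsSemialgebraic s) :
    IsSemialgebraic {a : Fin n → ℝ | ∃ x : ℝ, (Fin.cons x a : Fin (n + 1) → ℝ) ∈ s} := by
  classical
  obtain ⟨F, hF⟩ := h.signs
  obtain ⟨𝒞, h1, h2, h3, h4⟩ := goodFam (F.image (MvPolynomial.finSuccEquiv ℝ n))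
  set E := {a : Fin n → ℝ | ∃ x : ℝ, (Fin.cons x a : Fin (n + 1) → ℝ) ∈ s} with hE
  have : E = ⋃₀ {C ∈ 𝒞 | (C ∩ E).Nonempty} := by
    ext a
    constructor
    · intro ha
      obtain ⟨C, hC, haC⟩ := h3 a
      exact ⟨C, ⟨hC, ⟨a, haC, ha⟩⟩, haC⟩
    · rintro ⟨C, ⟨hC, ⟨b, hb, x, hx⟩⟩, haC⟩
      obtain ⟨φ, hφ⟩ := h4 C hC b hb a haC
      refine ⟨φ x, (hF _ _ fun p hp => ?_).1 hx⟩
      rw [MvPolynomial.eval_eq_eval_mv_eval', MvPolynomial.eval_eq_eval_mv_eval']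
      exact hφ _ (Finset.mem_image_of_mem _ hp) x
  rw [this]
  exact IsSemialgebraic.sUnion (h1.subset fun C hC => hC.1) fun C hC => h2 C hC.1

theorem IsSemialgebraic.exists_option {ι : Type*} [Fintype ι] {s : Set (Option ι → ℝ)}
    (h : IsSemialgebraic s) :
    IsSemialgebraic {a : ι → ℝ | ∃ x : ℝ, (fun o : Option ι => o.elim x a) ∈ s} := by
  have e := Fintype.equivFin ι
  have h1 := (h.reindex (ι := Fin (Fintype.card ι + 1))
    (fun o => o.elim 0 fun i => (e i).succ)).exists_cons.reindex e.symm
  convert h1 using 1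
  ext a
  simp only [mem_ofPred_eq]
  refine exists_congr fun x => ?_
  have : (fun o : Option ι => o.elim x a) = fun k : Option ι =>
      (Fin.cons x (fun k => a (e.symm k)) : Fin (Fintype.card ι + 1) → ℝ)
        (k.elim 0 fun i => (e i).succ) := by
    ext o
    cases o <;> simp
  rw [this]

theorem IsSemialgebraic.exists_fin {ι : Type*} [Fintype ι] (m : ℕ) :
    ∀ {s : Set (ι ⊕ Fin m → ℝ)}, IsSemialgebraic s →
    IsSemialgebraic {a : ι → ℝ | ∃ x : Fin m → ℝ, Sum.elim a x ∈ s} := by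
  induction m with
  | zero =>
    intro s h
    convert h.reindex (ι := ι) (Sum.elim id Fin.elim0) using 1
    ext a
    simp only [mem_ofPred_eq]
    have : ∀ x : Fin 0 → ℝ, Sum.elim a x = fun k => a (Sum.elim id Fin.elim0 k) := by
      intro x; ext k
      rcases k with k | k
      · rfl
      · exact k.elim0
    simp [this]
  | succ m ih =>
    intro s h
    have h1 := ih (h.reindex (ι := Option (ι ⊕ Fin m)) (Sum.elim (fun i => some (Sum.inl i))
      (Fin.cons none fun i => some (Sum.inr i)))).exists_option
    convert h1 using 1
    ext a
    have key : ∀ (x : ℝ) (y : Fin m → ℝ), (Sum.elim a (Fin.cons x y : Fin (m + 1) → ℝ)) =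
        fun k : ι ⊕ Fin (m + 1) => Option.elim (Sum.elim (fun i => some (Sum.inl i))
      (Fin.cons none fun i => some (Sum.inr i) : Fin (m + 1) → Option (ι ⊕ Fin m)) k) x
        (Sum.elim a y) := by
      intro x y
      ext k
      rcases k with k | k
      · rfl
      · refine Fin.cases ?_ (fun i => ?_) k <;> simp
    simp only [mem_ofPred_eq, ← key]
    constructor
    · rintro ⟨x, hx⟩
      exact ⟨Fin.tail x, x 0, by rwa [Fin.cons_self_tail]⟩
    · rintro ⟨y, x, hx⟩
      exact ⟨_, hx⟩

theorem IsSemialgebraic.exists_sum {ι κ : Type*} [Fintype ι] [Fintype κ]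
    {s : Set (ι ⊕ κ → ℝ)} (h : IsSemialgebraic s) :
    IsSemialgebraic {a : ι → ℝ | ∃ x : κ → ℝ, Sum.elim a x ∈ s} := by
  have e := Fintype.equivFin κ
  convert IsSemialgebraic.exists_fin (ι := ι) (Fintype.card κ)
    (h.reindex (Sum.map id e)) using 1
  ext a
  simp only [mem_ofPred_eq]
  have key : ∀ x : Fin (Fintype.card κ) → ℝ, (fun k : ι ⊕ κ => Sum.elim a x (Sum.map id e k)) =
      Sum.elim a (x ∘ e) := by
    intro x; ext k; rcases k with k | k <;> rfl
  simp only [key]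
  constructor
  · rintro ⟨x, hx⟩
    exact ⟨x ∘ e.symm, by simpa [Function.comp_assoc] using hx⟩
  · rintro ⟨x, hx⟩
    exact ⟨_, hx⟩

theorem mem_coneAtInfinity {n : ℕ} {X : Set (EuclideanSpace ℝ (Fin n))}
    {y : EuclideanSpace ℝ (Fin n)} : y ∈ coneAtInfinity X ↔
    ∀ ε : ℝ, 0 < ε → ∃ x ∈ X, ∃ t : ℝ, 0 < t ∧ t ≤ 1 ∧ t < ε ∧ ‖t • x - y‖ < ε := by
  change _ ∈ closure _ ↔ _
  rw [Metric.mem_closure_iff]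
  refine forall₂_congr fun ε hε => ?_
  constructor
  · rintro ⟨_, ⟨x, hx, t, ht, rfl⟩, h⟩
    rw [Prod.dist_eq, max_lt_iff, dist_comm, dist_comm (0 : ℝ)] at h
    refine ⟨x, hx, t, ht.1, ht.2, ?_, by simpa [dist_eq_norm] using h.1⟩
    have := h.2
    simp only [dist_zero_right, Real.norm_eq_abs] at this
    exact (le_abs_self t).trans_lt this
  · rintro ⟨x, hx, t, h0, h1, h2, h3⟩
    refine ⟨_, ⟨x, hx, t, ⟨h0, h1⟩, rfl⟩, ?_⟩
    rw [Prod.dist_eq, max_lt_iff, dist_comm, dist_comm (0 : ℝ)]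
    refine ⟨by simpa [dist_eq_norm] using h3, ?_⟩
    simpa [abs_of_pos h0] using h2

theorem cone_semialgebraic {n : ℕ} {X : Set (EuclideanSpace ℝ (Fin n))}
    (hX : IsSemialgebraicE X) : IsSemialgebraicE (coneAtInfinity X) := by
  unfold IsSemialgebraicE at *
  -- inner set: variables `((y, ε), (x, t))`
  let xv : Fin n → MvPolynomial ((Fin n ⊕ Unit) ⊕ (Fin n ⊕ Unit)) ℝ :=
    fun i => MvPolynomial.X (Sum.inr (Sum.inl i))
  let yv : Fin n → MvPolynomial ((Fin n ⊕ Unit) ⊕ (Fin n ⊕ Unit)) ℝ :=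
    fun i => MvPolynomial.X (Sum.inl (Sum.inl i))
  let tv : MvPolynomial ((Fin n ⊕ Unit) ⊕ (Fin n ⊕ Unit)) ℝ := MvPolynomial.X (Sum.inr (Sum.inr ()))
  let ev : MvPolynomial ((Fin n ⊕ Unit) ⊕ (Fin n ⊕ Unit)) ℝ := MvPolynomial.X (Sum.inl (Sum.inr ()))
  have s1 := ((hX.preimage xv).inter (IsSemialgebraic.lt tv)).inter
    (((IsSemialgebraic.lt (tv - 1)).compl.inter (IsSemialgebraic.lt (ev - tv))).inter
      (IsSemialgebraic.lt (ev ^ 2 - ∑ i, (tv * xv i - yv i) ^ 2)))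
  have s2 := (((IsSemialgebraic.lt (MvPolynomial.X (Sum.inr ()) :
    MvPolynomial (Fin n ⊕ Unit) ℝ)).inter s1.exists_sum.compl)).exists_sum.compl
  convert s2 using 1
  ext y
  simp only [mem_ofPred_eq, mem_coneAtInfinity, mem_compl_iff, mem_inter_iff, not_exists, not_and,
    xv, yv, tv, ev, MvPolynomial.eval_X, Sum.elim_inl, Sum.elim_inr, map_sub, map_one,
    map_pow, map_sum, map_mul, sub_pos, not_lt]
  have nrm : ∀ (x : Fin n → ℝ) (t ε : ℝ), 0 < ε →
      (‖t • ((EuclideanSpace.equiv (Fin n) ℝ).symm x) - (EuclideanSpace.equiv (Fin n) ℝ).symm y‖ < ε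
      ↔ ∑ i, (t * x i - y i) ^ 2 < ε ^ 2) := by
    intro x t ε hε
    rw [EuclideanSpace.norm_eq, Real.sqrt_lt' hε]
    simp
  constructor
  · intro h e he
    obtain ⟨x, hx, t, h0, h1, h2, h3⟩ := h _ he
    intro hcon
    have h4 := hcon (Sum.elim (EuclideanSpace.equiv (Fin n) ℝ x) (fun _ => t))
      ⟨by simpa using hx, h0⟩ ⟨h1, h2⟩
    refine absurd ((nrm (EuclideanSpace.equiv (Fin n) ℝ x) t _ he).1 ?_) (not_lt.2 h4)
    simpa using h3
  · intro h ε hε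
    by_contra hcon
    refine h (fun _ => ε) hε fun z h1 h2 => not_lt.1 fun h5 => hcon ?_
    exact ⟨_, h1.1, _, h1.2, h2.1, h2.2, (nrm _ _ _ hε).2 h5⟩

theorem zero_mem_cone {n : ℕ} {X : Set (EuclideanSpace ℝ (Fin n))} (hX : X.Nonempty) :
    (0 : EuclideanSpace ℝ (Fin n)) ∈ coneAtInfinity X := by
  rw [mem_coneAtInfinity]
  intro ε hε
  obtain ⟨x, hx⟩ := hX
  have hpos : 0 < ‖x‖ + 1 := by positivity
  refine ⟨x, hx, min 1 (min (ε / 2) (ε / 2 / (‖x‖ + 1))), by positivity, min_le_left _ _, ?_, ?_⟩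
  · exact ((min_le_right _ _).trans (min_le_left _ _)).trans_lt (by linarith)
  · rw [sub_zero, norm_smul, Real.norm_of_nonneg (by positivity)]
    have h1 : min 1 (min (ε / 2) (ε / 2 / (‖x‖ + 1))) ≤ ε / 2 / (‖x‖ + 1) :=
      (min_le_right _ _).trans (min_le_right _ _)
    rw [le_div_iff₀ hpos] at h1
    have h2 : 0 < min 1 (min (ε / 2) (ε / 2 / (‖x‖ + 1))) := by positivity
    nlinarith

theorem cone_smul {n : ℕ} {X : Set (EuclideanSpace ℝ (Fin n))} {y : EuclideanSpace ℝ (Fin n)}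
    (hy : y ∈ coneAtInfinity X) {l : ℝ} (hl : 0 ≤ l) : l • y ∈ coneAtInfinity X := by
  rcases hl.eq_or_lt with rfl | hl
  · rw [zero_smul]
    rw [mem_coneAtInfinity] at hy
    obtain ⟨x, hx, _⟩ := hy 1 one_pos
    exact zero_mem_cone ⟨x, hx⟩
  · rw [mem_coneAtInfinity] at hy ⊢
    intro ε hε
    obtain ⟨x, hx, t, h0, h1, h2, h3⟩ := hy (min (1 / l) (ε / l)) (by positivity)
    have a1 := lt_of_lt_of_le h2 (min_le_left _ _)
    have a2 := lt_of_lt_of_le h2 (min_le_right _ _)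
    have a3 := lt_of_lt_of_le h3 (min_le_right _ _)
    rw [lt_div_iff₀ hl] at a1 a2 a3
    refine ⟨x, hx, l * t, by positivity, by linarith, by linarith, ?_⟩
    rw [mul_smul, ← smul_sub, norm_smul, Real.norm_of_nonneg hl.le]
    linarith

end Main

/-- Let `X ⊂ ℝ^n` be a closed semi-algebraic set,
`X₁ = {(tx,t) : x ∈ X, t ∈ (0,1]}` and `X₀ = π_{ℝ^n}(closure X₁ ∩ π_ℝ^{-1}(0))` its tangent
cone at infinity.  Then `X₀` is a closed semi-algebraic cone: `λy ∈ X₀` for every `y ∈ X₀`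
and `λ ≥ 0`, and `0 ∈ X₀` whenever `X` is nonempty. -/
theorem coneAtInfinity_isClosed_semialgebraic_cone
    (n : ℕ) (X : Set (EuclideanSpace ℝ (Fin n)))
    (hXc : IsClosed X) (hXsa : IsSemialgebraicE X) :
    IsClosed (coneAtInfinity X) ∧
      IsSemialgebraicE (coneAtInfinity X) ∧
      (∀ y ∈ coneAtInfinity X, ∀ l : ℝ, 0 ≤ l → l • y ∈ coneAtInfinity X) ∧
      (X.Nonempty → (0 : EuclideanSpace ℝ (Fin n)) ∈ coneAtInfinity X) := by
  refine ⟨?_, cone_semialgebraic hXsa, fun y hy l hl => cone_smul hy hl, zero_mem_cone⟩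
  exact isClosed_closure.preimage (f := fun y : EuclideanSpace ℝ (Fin n) => (y, (0 : ℝ)))
    (by fun_prop)
end

section
/- Let X ⊂ ℝ^n be a nonempty closed semi-algebraic set of dimension d. Then the limit lim_{R→∞} vol_d(X ∩ B_R)/R^d exists and is finite, where vol_d denotes d-dimensional Hausdorff measure; in particular vol(X ∩ B_R) grows at most polynomially of degree d in R. -/
open MeasureTheory Metric Set Filter
open scoped ENNReal Topology

namespace SAlim

/-! ### Algebraic elements in function rings -/

open Polynomial in
lemma alg_ev {R ι Z : Type*} [CommRing R] [IsDomain R] [Algebra ℝ R]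
    (ev : Z → R →ₐ[ℝ] ℝ) (u : Z → ι → ℝ)
    (hu : ∀ i, ∃ Q : R[X], Q ≠ 0 ∧ ∀ z, Q.eval₂ (ev z : R →+* ℝ) (u z i) = 0)
    (h : MvPolynomial ι ℝ) :
    ∃ Q : R[X], Q ≠ 0 ∧ ∀ z, Q.eval₂ (ev z : R →+* ℝ) (MvPolynomial.eval (u z) h) = 0 := by
  let f : R →+* (Z → ℝ) := RingHom.pi (fun z => (ev z : R →+* ℝ))
  let _ : Algebra R (Z → ℝ) := f.toAlgebra
  have key : ∀ (w : Z → ℝ) (Q : R[X]), aeval w Q = fun z => Q.eval₂ (ev z : R →+* ℝ) (w z) := by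
    intro w Q
    funext z
    rw [aeval_def]
    have := Polynomial.hom_eval₂ Q (algebraMap R (Z → ℝ)) (Pi.evalRingHom (fun _ : Z => ℝ) z) w
    exact this
  have alg : ∀ w : Z → ℝ, IsAlgebraic R w ↔
      ∃ Q : R[X], Q ≠ 0 ∧ ∀ z, Q.eval₂ (ev z : R →+* ℝ) (w z) = 0 := by
    intro w
    unfold IsAlgebraic
    simp only [key]
    constructor
    · rintro ⟨Q, h1, h2⟩
      exact ⟨Q, h1, fun z => congrFun h2 z⟩
    · rintro ⟨Q, h1, h2⟩
      exact ⟨Q, h1, funext h2⟩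
  have main : ∀ h : MvPolynomial ι ℝ, IsAlgebraic R (fun z => MvPolynomial.eval (u z) h) := by
    intro h
    induction h using MvPolynomial.induction_on with
    | C a =>
      have : (fun z => MvPolynomial.eval (u z) (MvPolynomial.C a)) =
          algebraMap R (Z → ℝ) (algebraMap ℝ R a) := by
        funext z
        change _ = ev z (algebraMap ℝ R a)
        simp
      rw [this]
      exact isAlgebraic_algebraMap _
    | add p q hp hq =>
      simpa [Pi.add_def] using hp.add hq
    | mul_X p i hp =>
      have := (alg (fun z => u z i)).2 (hu i)
      simpa [Pi.mul_def] using hp.mul this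
  exact (alg _).1 (main h)

open Polynomial in
lemma alg_ev' {R ι Z : Type*} [CommRing R] [IsDomain R] [Algebra ℝ R]
    (ev : Z → R →ₐ[ℝ] ℝ) (u : Z → ι → ℝ)
    (hu : ∀ i, ∃ Q : R[X], Q ≠ 0 ∧ ∀ z, Q.eval₂ (ev z : R →+* ℝ) (u z i) = 0)
    (h : MvPolynomial ι ℝ) :
    ∃ (k : ℕ) (Q : R[X]), Q.coeff 0 ≠ 0 ∧ ∀ z, (MvPolynomial.eval (u z) h) ^ k *
      Q.eval₂ (ev z : R →+* ℝ) (MvPolynomial.eval (u z) h) = 0 := by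
  obtain ⟨Q, hQ, hz⟩ := alg_ev ev u hu h
  obtain ⟨Q', h1, h2⟩ := Polynomial.exists_eq_pow_rootMultiplicity_mul_and_not_dvd Q hQ 0
  refine ⟨Q.rootMultiplicity 0, Q', ?_, fun z => ?_⟩
  · intro h0
    apply h2
    simpa using X_dvd_iff.2 h0
  · have := hz z
    rw [h1] at this
    simpa [eval₂_mul, eval₂_pow] using this

end SAlim

namespace SAlim

open Polynomial in
/-- eventually continuous functions at infinity, algebraic over the rational functions. -/
def Nice (g : ℝ → ℝ) : Prop :=
  (∀ᶠ s in atTop, ContinuousAt g s) ∧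
    ∃ Q : ℝ[X][X], Q ≠ 0 ∧ ∀ᶠ s in atTop, Q.evalEval s (g s) = 0

open Polynomial in
lemma eval₂_aeval_eq (s y : ℝ) (Q : ℝ[X][X]) :
    Q.eval₂ ((Polynomial.aeval s : ℝ[X] →ₐ[ℝ] ℝ) : ℝ[X] →+* ℝ) y = Q.evalEval s y := by
  rw [Polynomial.coe_aeval_eq_evalRingHom, Polynomial.eval₂_evalRingHom]

lemma eventually_poly_ne (a : Polynomial ℝ) (ha : a ≠ 0) : ∀ᶠ s in atTop, a.eval s ≠ 0 :=
  Polynomial.eventually_atTop_not_isRoot a ha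

lemma evalEval_eq_sum (s y : ℝ) (Q : Polynomial (Polynomial ℝ)) :
    Q.evalEval s y = ∑ i ∈ Q.support, (Q.coeff i).eval s * y ^ i := by
  rw [Polynomial.evalEval, Polynomial.eval_eq_sum (p := Q), Polynomial.sum,
    Polynomial.eval_finsetSum]
  simp

lemma nice_eval {ι : Type*} [Finite ι] (g : ι → ℝ → ℝ) (hg : ∀ i, Nice (g i))
    (h : MvPolynomial ι ℝ) : Nice (fun s => MvPolynomial.eval (fun i => g i s) h) := by
  constructor
  · have : ∀ᶠ s in atTop, ∀ i, ContinuousAt (g i) s := eventually_all.2 fun i => (hg i).1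
    filter_upwards [this] with s hs
    have h1 : ContinuousAt (fun s => (fun i => g i s)) s := continuousAt_pi.2 hs
    exact ((MvPolynomial.continuous_eval h).continuousAt).comp h1
  · choose Q hQ hz using fun i => (hg i).2
    obtain ⟨s0, hs0⟩ := (eventually_all.2 hz).exists_forall_of_atTop
    obtain ⟨Q', h1, h2⟩ := alg_ev (Z := Ici s0) (fun z => Polynomial.aeval z.1)
      (fun z i => g i z.1)
      (fun i => ⟨Q i, hQ i, fun z => by rw [eval₂_aeval_eq]; exact hs0 z.1 z.2 i⟩) h
    refine ⟨Q', h1, ?_⟩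
    filter_upwards [eventually_ge_atTop s0] with s hs
    have := h2 ⟨s, hs⟩
    rwa [eval₂_aeval_eq] at this

lemma Nice.add {f g : ℝ → ℝ} (hf : Nice f) (hg : Nice g) : Nice (fun s => f s + g s) := by
  have := nice_eval ![f, g] (by intro i; fin_cases i <;> assumption)
    (MvPolynomial.X 0 + MvPolynomial.X 1)
  simpa using this

lemma Nice.mul {f g : ℝ → ℝ} (hf : Nice f) (hg : Nice g) : Nice (fun s => f s * g s) := by
  have := nice_eval ![f, g] (by intro i; fin_cases i <;> assumption)
    (MvPolynomial.X 0 * MvPolynomial.X 1)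
  simpa using this

lemma Nice.sub {f g : ℝ → ℝ} (hf : Nice f) (hg : Nice g) : Nice (fun s => f s - g s) := by
  have := nice_eval ![f, g] (by intro i; fin_cases i <;> assumption)
    (MvPolynomial.X 0 - MvPolynomial.X 1)
  simpa using this

lemma nice_poly (a : Polynomial ℝ) : Nice (fun s => a.eval s) := by
  refine ⟨Eventually.of_forall fun s => a.continuous.continuousAt, Polynomial.X - Polynomial.C a,
    Polynomial.X_sub_C_ne_zero a, Eventually.of_forall fun s => by simp [Polynomial.evalEval]⟩

lemma nice_const (a : ℝ) : Nice (fun _ => a) := by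
  simpa using nice_poly (Polynomial.C a)

lemma nice_lin (a : ℝ) : Nice (fun s => s * a) := by
  have := nice_poly (Polynomial.X * Polynomial.C a)
  simp only [Polynomial.eval_mul, Polynomial.eval_X, Polynomial.eval_C] at this
  exact this

lemma Nice.neg {f : ℝ → ℝ} (hf : Nice f) : Nice (fun s => - f s) := by
  simpa using (nice_const 0).sub hf

lemma nice_evalEval {g : ℝ → ℝ} (hg : Nice g) (P : Polynomial (Polynomial ℝ)) :
    Nice (fun s => P.evalEval s (g s)) := by
  induction P using Polynomial.induction_on' with
  | add p q hp hq => simpa using hp.add hq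
  | monomial n a =>
    induction n with
    | zero => simpa [Polynomial.evalEval] using nice_poly a
    | succ n ih =>
      have := ih.mul hg
      simp only [Polynomial.evalEval, Polynomial.eval_monomial, Polynomial.eval_mul,
        Polynomial.eval_pow, Polynomial.eval_C] at this ⊢
      simpa [pow_succ, mul_assoc] using this

lemma nice_div (a b : Polynomial ℝ) (hb : b ≠ 0) : Nice (fun s => a.eval s / b.eval s) := by
  refine ⟨?_, Polynomial.C b * Polynomial.X - Polynomial.C a, ?_, ?_⟩
  · filter_upwards [eventually_poly_ne b hb] with s hs
    exact a.continuous.continuousAt.div b.continuous.continuousAt hs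
  · intro h
    have := congrArg (fun p => Polynomial.coeff p 1) h
    simp at this
    exact hb this
  · filter_upwards [eventually_poly_ne b hb] with s hs
    simp only [Polynomial.evalEval, Polynomial.eval_sub, Polynomial.eval_mul, Polynomial.eval_C,
      Polynomial.eval_X]
    field_simp
    simp

lemma nice_sign {g : ℝ → ℝ} (hg : Nice g) :
    ∃ σ : SignType, ∀ᶠ s in atTop, SignType.sign (g s) = σ := by
  obtain ⟨Q0, hQ0, hz0⟩ := hg.2
  obtain ⟨s1, hs1⟩ := (hz0.and hg.1).exists_forall_of_atTop
  obtain ⟨k, Q, hQ, hz⟩ := alg_ev' (Z := Ici s1) (ι := Unit) (fun z => Polynomial.aeval z.1)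
      (fun z i => g z.1)
      (fun i => ⟨Q0, hQ0, fun z => by rw [eval₂_aeval_eq]; exact (hs1 z.1 z.2).1⟩)
      (MvPolynomial.X ())
  simp only [MvPolynomial.eval_X, eval₂_aeval_eq] at hz
  obtain ⟨s2, hs2⟩ := (eventually_poly_ne _ hQ).exists_forall_of_atTop
  set s0 := max s1 s2 with hs0
  have hcont : ContinuousOn g (Ici s0) := fun s hs =>
    (hs1 s (le_trans (le_max_left _ _) hs)).2.continuousWithinAt
  have hcQ : ContinuousOn (fun s => Q.evalEval s (g s)) (Ici s0) := by
    have : (fun s => Q.evalEval s (g s)) = fun s => ∑ i ∈ Q.support, (Q.coeff i).eval s * g s ^ i := by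
      funext s
      exact evalEval_eq_sum s _ Q
    rw [this]
    exact continuousOn_finsetSum _ fun i _ => ((Q.coeff i).continuous.continuousOn).mul (hcont.pow i)
  have h0 : ∀ s, Q.evalEval s 0 = (Q.coeff 0).eval s := by
    intro s
    rw [Polynomial.evalEval, Polynomial.coeff_zero_eq_eval_zero]; simp
  have hdich : (∀ s ∈ Ici s0, g s = 0) ∨ (∀ s ∈ Ici s0, g s ≠ 0) := by
    by_contra! hcon
    obtain ⟨⟨a, ha, hga⟩, b, hb, hgb⟩ := hcon
    have hpc := isPreconnected_closed_iff.1 (isPreconnected_Ici (a := s0))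
      (Ici s0 ∩ g ⁻¹' {0}) (Ici s0 ∩ (fun s => Q.evalEval s (g s)) ⁻¹' {0})
      (hcont.preimage_isClosed_of_isClosed isClosed_Ici isClosed_singleton)
      (hcQ.preimage_isClosed_of_isClosed isClosed_Ici isClosed_singleton) ?_ ?_ ?_
    · obtain ⟨s, hs, ⟨-, h1⟩, -, h2⟩ := hpc
      simp only [mem_preimage, mem_singleton_iff] at h1 h2
      rw [h1, h0] at h2
      exact hs2 s (le_trans (le_max_right _ _) hs) h2
    · intro s hs
      have := hz ⟨s, (le_max_left s1 s2).trans hs⟩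
      rcases mul_eq_zero.1 this with h | h
      · left; exact ⟨hs, eq_zero_of_pow_eq_zero h⟩
      · right; exact ⟨hs, h⟩
    · exact ⟨b, hb, hb, hgb⟩
    · refine ⟨a, ha, ha, ?_⟩
      have := hz ⟨a, (le_max_left s1 s2).trans ha⟩
      rcases mul_eq_zero.1 this with h | h
      · exact absurd (eq_zero_of_pow_eq_zero h) hga
      · exact h
  rcases hdich with h | h
  · refine ⟨0, ?_⟩
    filter_upwards [eventually_ge_atTop s0] with s hs
    rw [h s hs, sign_zero]
  · refine ⟨SignType.sign (g s0), ?_⟩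
    filter_upwards [eventually_ge_atTop s0] with s hs
    by_contra hne
    have hself : s0 ∈ Ici s0 := self_mem_Ici
    rcases lt_or_gt_of_ne (h s hs) with h1 | h1 <;> rcases lt_or_gt_of_ne (h s0 hself) with h2 | h2
    · simp [sign_neg h1, sign_neg h2] at hne
    · obtain ⟨c, hc, hc0⟩ := isPreconnected_Ici.intermediate_value hs hself hcont ⟨h1.le, h2.le⟩
      exact h c hc hc0
    · obtain ⟨c, hc, hc0⟩ := isPreconnected_Ici.intermediate_value hself hs hcont ⟨h2.le, h1.le⟩
      exact h c hc hc0
    · simp [sign_pos h1, sign_pos h2] at hne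

end SAlim

namespace SAlim

lemma continuous_evalEval_right (P : Polynomial (Polynomial ℝ)) (s : ℝ) :
    Continuous (fun y => P.evalEval s y) := by
  simp_rw [evalEval_eq_sum]
  fun_prop

lemma continuous_evalEval_left (P : Polynomial (Polynomial ℝ)) (y : ℝ) :
    Continuous (fun s => P.evalEval s y) := by
  simp_rw [evalEval_eq_sum]
  fun_prop

lemma deriv_evalEval (P : Polynomial (Polynomial ℝ)) (s y : ℝ) :
    deriv (fun y => P.evalEval s y) y = P.derivative.evalEval s y := by
  simp_rw [← Polynomial.map_evalRingHom_eval]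
  rw [Polynomial.deriv, Polynomial.derivative_map]

lemma injOn_evalEval (P : Polynomial (Polynomial ℝ)) {s a b : ℝ}
    (h : ∀ y ∈ Ioo a b, P.derivative.evalEval s y ≠ 0) :
    InjOn (fun y => P.evalEval s y) (Icc a b) := by
  intro x hx y hy hxy
  by_contra hne
  wlog hlt : x < y generalizing x y
  · exact this hy hx hxy.symm (Ne.symm hne) (lt_of_le_of_ne (not_lt.1 hlt) (Ne.symm hne))
  obtain ⟨c, hc, hc0⟩ := exists_deriv_eq_zero hlt
    (continuous_evalEval_right P s).continuousOn hxy
  rw [deriv_evalEval] at hc0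
  exact h c ⟨hx.1.trans_lt hc.1, hc.2.trans_le hy.2⟩ hc0

lemma mul_neg_of_root (P : Polynomial (Polynomial ℝ)) {s a b x y z : ℝ}
    (h : ∀ y ∈ Ioo a b, P.derivative.evalEval s y ≠ 0) (hx : a ≤ x) (hxy : x < y) (hyz : y < z)
    (hz : z ≤ b) (hy : P.evalEval s y = 0) : P.evalEval s x * P.evalEval s z < 0 := by
  have hab : a ≤ b := by linarith
  have hxm : x ∈ Icc a b := ⟨hx, by linarith⟩
  have hym : y ∈ Icc a b := ⟨by linarith, by linarith⟩
  have hzm : z ∈ Icc a b := ⟨by linarith, hz⟩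
  rcases (continuous_evalEval_right P s).continuousOn.strictMonoOn_of_injOn_Icc' hab
    (injOn_evalEval P h) with hm | hm
  · have h1 := hm hxm hym hxy
    have h2 := hm hym hzm hyz
    simp only [hy] at h1 h2
    exact mul_neg_of_neg_of_pos h1 h2
  · have h1 := hm hxm hym hxy
    have h2 := hm hym hzm hyz
    simp only [hy] at h1 h2
    exact mul_neg_of_pos_of_neg h1 h2

lemma exists_root_of_mul_neg (P : Polynomial (Polynomial ℝ)) {s a b : ℝ} (hab : a < b)
    (h : P.evalEval s a * P.evalEval s b < 0) : ∃ y ∈ Ioo a b, P.evalEval s y = 0 := by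
  have hc := (continuous_evalEval_right P s).continuousOn (s := Icc a b)
  rcases mul_neg_iff.1 h with ⟨h1, h2⟩ | ⟨h1, h2⟩
  · obtain ⟨y, hy, hy0⟩ := intermediate_value_Ioo' hab.le hc ⟨h2, h1⟩
    exact ⟨y, hy, hy0⟩
  · obtain ⟨y, hy, hy0⟩ := intermediate_value_Ioo hab.le hc ⟨h1, h2⟩
    exact ⟨y, hy, hy0⟩

lemma root_fun (P : Polynomial (Polynomial ℝ)) (s0 : ℝ) (g1 g2 : ℝ → ℝ)
    (hc1 : ∀ s ≥ s0, ContinuousAt g1 s) (hc2 : ∀ s ≥ s0, ContinuousAt g2 s)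
    (hlt : ∀ s ≥ s0, g1 s < g2 s)
    (hd : ∀ s ≥ s0, ∀ y ∈ Ioo (g1 s) (g2 s), P.derivative.evalEval s y ≠ 0)
    (hs : ∀ s ≥ s0, P.evalEval s (g1 s) * P.evalEval s (g2 s) < 0) :
    ∃ r : ℝ → ℝ, (∀ s ≥ s0, P.evalEval s (r s) = 0 ∧
      ∀ y ∈ Ioo (g1 s) (g2 s), P.evalEval s y = 0 → r s = y) ∧ ∀ s > s0, ContinuousAt r s := by
  have hex : ∀ s, ∃ r, s ≥ s0 → r ∈ Ioo (g1 s) (g2 s) ∧ P.evalEval s r = 0 := by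
    intro s
    by_cases h : s ≥ s0
    · obtain ⟨y, hy⟩ := exists_root_of_mul_neg P (hlt s h) (hs s h)
      exact ⟨y, fun _ => hy⟩
    · exact ⟨0, fun h' => absurd h' h⟩
  choose r hr using hex
  have huniq : ∀ s ≥ s0, ∀ y ∈ Ioo (g1 s) (g2 s), P.evalEval s y = 0 → r s = y := by
    intro s h y hy hy0
    exact injOn_evalEval P (hd s h) (Ioo_subset_Icc_self (hr s h).1) (Ioo_subset_Icc_self hy)
      ((hr s h).2.trans hy0.symm)
  refine ⟨r, fun s h => ⟨(hr s h).2, huniq s h⟩, fun s h => ?_⟩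
  have hr' := hr s h.le
  rw [Metric.continuousAt_iff']
  intro ε hε
  obtain ⟨a, ha1, ha2⟩ := exists_between (max_lt hr'.1.1 (sub_lt_self (r s) hε))
  obtain ⟨b, hb1, hb2⟩ := exists_between (lt_min hr'.1.2 (lt_add_of_pos_right (r s) hε))
  have ha3 := max_lt_iff.1 ha1
  have hb3 := lt_min_iff.1 hb2
  have hneg := mul_neg_of_root P (hd s h.le) ha3.1.le ha2 hb1 hb3.1.le hr'.2
  have e1 : ∀ᶠ t in 𝓝 s, P.evalEval t a * P.evalEval t b < 0 :=
    (((continuous_evalEval_left P a).mul (continuous_evalEval_left P b)).continuousAt).eventually_lt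
      continuousAt_const hneg
  have e2 : ∀ᶠ t in 𝓝 s, g1 t < a := (hc1 s h.le).eventually_lt continuousAt_const ha3.1
  have e3 : ∀ᶠ t in 𝓝 s, b < g2 t := continuousAt_const.eventually_lt (hc2 s h.le) hb3.1
  filter_upwards [e1, e2, e3, lt_mem_nhds h] with t h1 h2 h3 h4
  obtain ⟨y, hy, hy0⟩ := exists_root_of_mul_neg P (ha2.trans hb1) h1
  rw [huniq t h4.le y ⟨h2.trans hy.1, hy.2.trans h3⟩ hy0, Real.dist_eq, abs_lt]
  constructor <;> linarith [hy.1, hy.2, ha3.2, hb3.2]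

lemma nice_bound (P : Polynomial (Polynomial ℝ)) (hP : P ≠ 0) :
    ∃ B : ℝ → ℝ, Nice B ∧ ∀ᶠ s in atTop, ∀ y, P.evalEval s y = 0 → -B s < y ∧ y < B s := by
  classical
  set a := P.leadingCoeff with ha
  have ha0 : a ≠ 0 := Polynomial.leadingCoeff_ne_zero.2 hP
  let N : Polynomial ℝ := (∑ i ∈ Finset.range P.natDegree, ((P.coeff i) ^ 2 + 1)) * (a ^ 2 + 1) + a ^ 2
  refine ⟨_, nice_div N (a ^ 2) (pow_ne_zero 2 ha0), ?_⟩
  filter_upwards [eventually_poly_ne a ha0] with s hs y hy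
  rw [← abs_lt]
  set p := P.map (Polynomial.evalRingHom s) with hp
  have hlead : Polynomial.evalRingHom s P.leadingCoeff ≠ 0 := hs
  have hdeg : p.natDegree = P.natDegree :=
    Polynomial.natDegree_map_of_leadingCoeff_ne_zero _ hlead
  have hpl : p.leadingCoeff = a.eval s := by
    rw [hp, Polynomial.leadingCoeff_map_of_leadingCoeff_ne_zero _ hlead]; rfl
  have hp0 : p ≠ 0 := by
    rw [← Polynomial.leadingCoeff_ne_zero, hpl]; exact hs
  have hroot : p.IsRoot y := by
    rw [Polynomial.IsRoot, hp, Polynomial.map_evalRingHom_eval]; exact hy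
  have h1 := NNReal.coe_lt_coe.2 (hroot.norm_lt_cauchyBound hp0)
  rw [coe_nnnorm, Real.norm_eq_abs] at h1
  refine h1.trans_le ?_
  have h2 : ((Polynomial.cauchyBound p : NNReal) : ℝ) ≤
      (∑ i ∈ Finset.range P.natDegree, |(P.coeff i).eval s|) / |a.eval s| + 1 := by
    rw [Polynomial.cauchyBound, hdeg, hpl]
    push_cast
    gcongr ?_ / ?_ + 1
    · have : (Finset.range P.natDegree).sup (fun x => ‖p.coeff x‖₊) ≤
          ∑ i ∈ Finset.range P.natDegree, ‖p.coeff i‖₊ :=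
        Finset.sup_le fun i hi => Finset.single_le_sum (f := fun i => ‖p.coeff i‖₊) (fun _ _ => zero_le) hi
      have h3 := NNReal.coe_le_coe.2 this
      refine h3.trans (le_of_eq ?_)
      push_cast
      refine Finset.sum_congr rfl fun i _ => ?_
      rw [hp, Polynomial.coeff_map, Real.norm_eq_abs]; rfl
    · simp
  refine h2.trans ?_
  have hN : N.eval s = (∑ i ∈ Finset.range P.natDegree, (((P.coeff i).eval s) ^ 2 + 1)) *
      ((a.eval s) ^ 2 + 1) + (a.eval s) ^ 2 := by
    simp [N, Polynomial.eval_finsetSum]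
  rw [hN, Polynomial.eval_pow]
  have hpos : 0 < (a.eval s) ^ 2 := by positivity
  rw [add_div, div_self hpos.ne']
  gcongr ?_ + 1
  set w := a.eval s
  have h5 : ∑ i ∈ Finset.range P.natDegree, |(P.coeff i).eval s| ≤
    ∑ i ∈ Finset.range P.natDegree, (((P.coeff i).eval s) ^ 2 + 1) := by
    refine Finset.sum_le_sum fun i _ => ?_
    nlinarith [sq_abs ((P.coeff i).eval s), sq_nonneg (|(P.coeff i).eval s| - 1), abs_nonneg ((P.coeff i).eval s)]
  have hw : 0 < |w| := abs_pos.2 hs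
  rw [div_le_div_iff₀ hw hpos, ← sq_abs w]
  have h6 : |w| ^ 2 ≤ (|w| ^ 2 + 1) * |w| := by nlinarith [sq_nonneg (|w| - 1), sq_nonneg |w|]
  have h7 : 0 ≤ ∑ i ∈ Finset.range P.natDegree, |(P.coeff i).eval s| :=
    Finset.sum_nonneg fun _ _ => abs_nonneg _
  calc _ ≤ (∑ i ∈ Finset.range P.natDegree, (((P.coeff i).eval s) ^ 2 + 1)) * ((|w| ^ 2 + 1) * |w|) := by
        gcongr
    _ = _ := by ring

lemma sign_lt_iff {a b c d : ℝ} (h : SignType.sign (a - b) = SignType.sign (c - d)) :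
    a < b ↔ c < d := by
  rw [← sub_neg, ← sign_eq_neg_one_iff, h, sign_eq_neg_one_iff, sub_neg]

lemma nice_roots (N : ℕ) : ∀ (P : Polynomial (Polynomial ℝ)), P.natDegree = N → P ≠ 0 →
    ∃ G : Set (ℝ → ℝ), G.Finite ∧ (∀ g ∈ G, Nice g) ∧
      ∀ᶠ s in atTop, ∀ y, P.evalEval s y = 0 → ∃ g ∈ G, g s = y := by
  induction N using Nat.strong_induction_on with
  | _ N ih =>
  intro P hdeg hP
  rcases Nat.eq_zero_or_pos N with h0 | hpos
  · rw [h0] at hdeg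
    obtain ⟨a, rfl⟩ := Polynomial.natDegree_eq_zero.1 hdeg
    refine ⟨∅, finite_empty, by simp, ?_⟩
    have ha : a ≠ 0 := by rintro rfl; simp at hP
    filter_upwards [eventually_poly_ne a ha] with s hs y hy
    exact absurd (by simpa [Polynomial.evalEval] using hy) hs
  have hd0 : P.derivative ≠ 0 := by
    intro h
    have := Polynomial.natDegree_eq_zero_of_derivative_eq_zero h
    omega
  obtain ⟨G', hG'f, hG'n, hG'⟩ := ih _ (by
    have := Polynomial.natDegree_derivative_lt (p := P) (by omega)
    omega) P.derivative rfl hd0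
  obtain ⟨B, hB, hBb⟩ := nice_bound P hP
  set G1 : Set (ℝ → ℝ) := insert B (insert (fun s => - B s) G') with hG1
  have hG1f : G1.Finite := (hG'f.insert _).insert _
  have hG1n : ∀ g ∈ G1, Nice g := by
    rintro g (rfl | rfl | hg)
    · exact hB
    · exact hB.neg
    · exact hG'n g hg
  have h1 : ∀ f g : ℝ → ℝ, ∃ σ : SignType, f ∈ G1 → g ∈ G1 →
      ∀ᶠ s in atTop, SignType.sign (f s - g s) = σ := by
    intro f g
    by_cases hf : f ∈ G1
    · by_cases hg : g ∈ G1
      · obtain ⟨σ, h⟩ := nice_sign ((hG1n f hf).sub (hG1n g hg))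
        exact ⟨σ, fun _ _ => h⟩
      · exact ⟨0, fun _ h => absurd h hg⟩
    · exact ⟨0, fun h => absurd h hf⟩
  have h2 : ∀ f : ℝ → ℝ, ∃ σ : SignType, f ∈ G1 →
      ∀ᶠ s in atTop, SignType.sign (P.evalEval s (f s)) = σ := by
    intro f
    by_cases hf : f ∈ G1
    · obtain ⟨σ, h⟩ := nice_sign (nice_evalEval (hG1n f hf) P)
      exact ⟨σ, fun _ => h⟩
    · exact ⟨0, fun h => absurd h hf⟩
  choose σ hσ using h1
  choose τ hτ using h2
  have e1 : ∀ᶠ s in atTop, ∀ f ∈ G1, ∀ g ∈ G1, SignType.sign (f s - g s) = σ f g :=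
    (eventually_all_finite hG1f).2 fun f hf => (eventually_all_finite hG1f).2 fun g hg => hσ f g hf hg
  have e2 : ∀ᶠ s in atTop, ∀ f ∈ G1, SignType.sign (P.evalEval s (f s)) = τ f :=
    (eventually_all_finite hG1f).2 fun f hf => hτ f hf
  have e3 : ∀ᶠ s in atTop, ∀ f ∈ G1, ContinuousAt f s :=
    (eventually_all_finite hG1f).2 fun f hf => (hG1n f hf).1
  obtain ⟨s0, hs0⟩ := (e1.and (e2.and (e3.and (hG'.and hBb)))).exists_forall_of_atTop
  have h3 : ∀ f g : ℝ → ℝ, ∃ r, Nice r ∧ (f ∈ G1 → g ∈ G1 → (∀ s ≥ s0, f s < g s) →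
      (∀ s ≥ s0, ∀ y ∈ Ioo (f s) (g s), P.derivative.evalEval s y ≠ 0) →
      (∀ s ≥ s0, P.evalEval s (f s) * P.evalEval s (g s) < 0) →
      ∀ s ≥ s0, ∀ y ∈ Ioo (f s) (g s), P.evalEval s y = 0 → r s = y) := by
    intro f g
    by_cases hC : f ∈ G1 ∧ g ∈ G1 ∧ (∀ s ≥ s0, f s < g s) ∧
      (∀ s ≥ s0, ∀ y ∈ Ioo (f s) (g s), P.derivative.evalEval s y ≠ 0) ∧
      (∀ s ≥ s0, P.evalEval s (f s) * P.evalEval s (g s) < 0)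
    · obtain ⟨hf, hg, c1, c2, c3⟩ := hC
      obtain ⟨r, hr, hrc⟩ := root_fun P s0 f g (fun s hs => (hs0 s hs).2.2.1 f hf)
        (fun s hs => (hs0 s hs).2.2.1 g hg) c1 c2 c3
      refine ⟨r, ⟨?_, P, hP, ?_⟩, fun _ _ _ _ _ s hs => (hr s hs).2⟩
      · filter_upwards [eventually_gt_atTop s0] with s hs using hrc s hs
      · filter_upwards [eventually_ge_atTop s0] with s hs using (hr s hs).1
    · exact ⟨_, nice_const 0, fun a b c d e => absurd ⟨a, b, c, d, e⟩ hC⟩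
  choose r hrn hr using h3
  refine ⟨G1 ∪ image2 r G1 G1, hG1f.union (hG1f.image2 r hG1f), ?_, ?_⟩
  · rintro g (hg | ⟨f, -, g, -, rfl⟩)
    · exact hG1n g hg
    · exact hrn f g
  filter_upwards [eventually_ge_atTop s0] with s hs y hy
  by_cases hyG : ∃ g ∈ G1, g s = y
  · obtain ⟨g, hg, hgy⟩ := hyG
    exact ⟨g, Or.inl hg, hgy⟩
  push Not at hyG
  have hb := (hs0 s hs).2.2.2.2 y hy
  obtain ⟨f, ⟨hf, hfy⟩, hfmax⟩ := Set.exists_max_image {f ∈ G1 | f s < y} (fun f => f s)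
    (hG1f.subset (sep_subset _ _)) ⟨fun s => - B s, by simp [hG1], hb.1⟩
  obtain ⟨g, ⟨hg, hgy⟩, hgmin⟩ := Set.exists_min_image {f ∈ G1 | y < f s} (fun f => f s)
    (hG1f.subset (sep_subset _ _)) ⟨B, by simp [hG1], hb.2⟩
  have hord : ∀ u ∈ G1, ∀ v ∈ G1, ∀ t ≥ s0, (u t < v t ↔ u s < v s) := by
    intro u hu v hv t ht
    exact sign_lt_iff (((hs0 t ht).1 u hu v hv).trans ((hs0 s hs).1 u hu v hv).symm)
  have hder : ∀ t ≥ s0, ∀ z ∈ Ioo (f t) (g t), P.derivative.evalEval t z ≠ 0 := by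
    intro t ht z hz hz0
    obtain ⟨u, hu, rfl⟩ := (hs0 t ht).2.2.2.1 z hz0
    have hu1 : u ∈ G1 := by simp [hG1, hu]
    have a1 := (hord f hf u hu1 t ht).1 hz.1
    have a2 := (hord u hu1 g hg t ht).1 hz.2
    rcases lt_or_gt_of_ne (hyG u hu1) with h | h
    · exact absurd (hfmax u ⟨hu1, h⟩) (not_le.2 a1)
    · exact absurd (hgmin u ⟨hu1, h⟩) (not_le.2 a2)
  have hneg := mul_neg_of_root P (hder s hs) le_rfl hfy hgy le_rfl hy
  refine ⟨r f g, Or.inr ⟨f, hf, g, hg, rfl⟩, hr f g hf hg ?_ hder ?_ s hs y ⟨hfy, hgy⟩ hy⟩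
  · intro t ht
    exact (hord f hf g hg t ht).2 (hfy.trans hgy)
  · intro t ht
    rw [← sign_eq_neg_one_iff] at hneg ⊢
    rw [sign_mul] at hneg ⊢
    rw [(hs0 t ht).2.1 f hf, (hs0 t ht).2.1 g hg, ← (hs0 s hs).2.1 f hf, ← (hs0 s hs).2.1 g hg]
    exact hneg

end SAlim

namespace SAlim

section sa
variable {ι : Type*} [Fintype ι]

lemma sa_ne (p : MvPolynomial ι ℝ) : IsSemialgebraic {x | MvPolynomial.eval x p ≠ 0} := by
  have := (IsSemialgebraic.lt p).union (IsSemialgebraic.lt (-p))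
  convert this using 1
  ext x
  simp only [mem_setOf_eq, mem_union, map_neg, Left.neg_pos_iff]
  constructor
  · intro h; exact (lt_or_gt_of_ne h).symm
  · rintro (h | h)
    · exact h.ne'
    · exact h.ne

lemma sa_le (p : MvPolynomial ι ℝ) : IsSemialgebraic {x | 0 ≤ MvPolynomial.eval x p} := by
  have := (IsSemialgebraic.lt p).union (IsSemialgebraic.eq p)
  convert this using 1
  ext x
  simp only [mem_setOf_eq, mem_union]
  rw [le_iff_lt_or_eq, eq_comm]

lemma sa_univ : IsSemialgebraic (univ : Set (ι → ℝ)) := by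
  have := IsSemialgebraic.eq (0 : MvPolynomial ι ℝ)
  simpa using this

lemma sa_empty : IsSemialgebraic (∅ : Set (ι → ℝ)) := by
  have := IsSemialgebraic.eq (1 : MvPolynomial ι ℝ)
  simpa using this

lemma sa_compl {s : Set (ι → ℝ)} (h : IsSemialgebraic s) : IsSemialgebraic sᶜ := by
  induction h with
  | eq p => exact sa_ne p
  | lt p =>
    convert sa_le (-p) using 1
    ext x; simp
  | union _ _ h1 h2 => rw [compl_union]; exact h1.inter h2
  | inter _ _ h1 h2 => rw [compl_inter]; exact h1.union h2

lemma sa_diff {s t : Set (ι → ℝ)} (h : IsSemialgebraic s) (h' : IsSemialgebraic t) :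
    IsSemialgebraic (s \ t) := h.inter (sa_compl h')

lemma sa_biInter {κ : Type*} (A : Finset κ) (s : κ → Set (ι → ℝ))
    (h : ∀ k ∈ A, IsSemialgebraic (s k)) : IsSemialgebraic {x | ∀ k ∈ A, x ∈ s k} := by
  classical
  induction A using Finset.induction_on with
  | empty => simpa using sa_univ
  | insert a A _ ih =>
    have := (h a (Finset.mem_insert_self _ _)).inter
      (ih fun k hk => h k (Finset.mem_insert_of_mem hk))
    convert this using 1
    ext x; simp

lemma sa_iInter {κ : Type*} [Finite κ] (s : κ → Set (ι → ℝ))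
    (h : ∀ k, IsSemialgebraic (s k)) : IsSemialgebraic {x | ∀ k, x ∈ s k} := by
  have := Fintype.ofFinite κ
  simpa using sa_biInter Finset.univ s fun k _ => h k

lemma sa_imp {P : Prop} {s : Set (ι → ℝ)} (h : IsSemialgebraic s) :
    IsSemialgebraic {x | P → x ∈ s} := by
  by_cases hP : P
  · simpa [hP] using h
  · simpa [hP] using sa_univ

lemma sa_abs_le (p q : MvPolynomial ι ℝ) :
    IsSemialgebraic {x | |MvPolynomial.eval x p| ≤ |MvPolynomial.eval x q|} := by
  convert sa_le (q ^ 2 - p ^ 2) using 1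
  ext x
  simp [sq_le_sq]

lemma sa_measurable {s : Set (ι → ℝ)} (h : IsSemialgebraic s) : MeasurableSet s := by
  induction h with
  | eq p => exact (isClosed_eq (MvPolynomial.continuous_eval p) continuous_const).measurableSet
  | lt p => exact (isOpen_lt continuous_const (MvPolynomial.continuous_eval p)).measurableSet
  | union _ _ h1 h2 => exact h1.union h2
  | inter _ _ h1 h2 => exact h1.inter h2

lemma eventually_mem_or {s : Set (ι → ℝ)} (h : IsSemialgebraic s) (z : ι → ℝ → ℝ)
    (hz : ∀ i, Nice (z i)) :
    (∀ᶠ r in atTop, (fun i => z i r) ∈ s) ∨ (∀ᶠ r in atTop, (fun i => z i r) ∉ s) := by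
  induction h with
  | eq p =>
    obtain ⟨σ, hσ⟩ := nice_sign (nice_eval z hz p)
    by_cases h0 : σ = 0
    · left; filter_upwards [hσ] with r hr
      rw [h0] at hr; exact sign_eq_zero_iff.1 hr
    · right; filter_upwards [hσ] with r hr h
      exact h0 (hr ▸ sign_eq_zero_iff.2 h)
  | lt p =>
    obtain ⟨σ, hσ⟩ := nice_sign (nice_eval z hz p)
    by_cases h0 : σ = 1
    · left; filter_upwards [hσ] with r hr
      rw [h0] at hr; exact sign_eq_one_iff.1 hr
    · right; filter_upwards [hσ] with r hr h
      exact h0 (hr ▸ sign_eq_one_iff.2 h)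
  | union _ _ h1 h2 =>
    rcases h1 with h1 | h1
    · left; filter_upwards [h1] with r hr using Or.inl hr
    rcases h2 with h2 | h2
    · left; filter_upwards [h2] with r hr using Or.inr hr
    right; filter_upwards [h1, h2] with r hr hr' using by simp [hr, hr']
  | inter _ _ h1 h2 =>
    rcases h1 with h1 | h1
    swap
    · right; filter_upwards [h1] with r hr using fun h => hr h.1
    rcases h2 with h2 | h2
    swap
    · right; filter_upwards [h2] with r hr using fun h => hr h.2
    left; filter_upwards [h1, h2] with r hr hr' using ⟨hr, hr'⟩

end sa

/-- the sum-of-squares polynomial -/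
noncomputable def sqP (n : ℕ) : MvPolynomial (Fin n) ℝ := ∑ i, (MvPolynomial.X i) ^ 2

lemma nice_eq_or {f g : ℝ → ℝ} (hf : Nice f) (hg : Nice g) :
    (∀ᶠ r in atTop, f r = g r) ∨ (∀ᶠ r in atTop, f r ≠ g r) := by
  obtain ⟨σ, hσ⟩ := nice_sign (hf.sub hg)
  by_cases h0 : σ = 0
  · left; filter_upwards [hσ] with r hr
    rw [h0] at hr; exact sub_eq_zero.1 (sign_eq_zero_iff.1 hr)
  · right; filter_upwards [hσ] with r hr h
    exact h0 (hr ▸ sign_eq_zero_iff.2 (sub_eq_zero.2 h))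

end SAlim

namespace SAlim

lemma encard_image_le_of {α β γ : Type*} (f : α → β) (g : α → γ) (T : Set α)
    (h : ∀ a ∈ T, ∀ b ∈ T, g a = g b → f a = f b) : (f '' T).encard ≤ (g '' T).encard := by
  classical
  have hch : ∀ y : β, y ∈ f '' T → ∃ a ∈ T, f a = y := fun y hy => hy
  rcases isEmpty_or_nonempty α with hα | hα
  · have : T = ∅ := Set.eq_empty_of_isEmpty T
    simp [this]
  choose! r hr using hch
  refine Set.encard_le_encard_of_injOn (f := fun y => g (r y)) ?_ ?_
  · intro y hy; exact ⟨r y, (hr y hy).1, rfl⟩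
  · intro y hy y' hy' hyy
    have := h _ (hr y hy).1 _ (hr y' hy').1 hyy
    rw [(hr y hy).2, (hr y' hy').2] at this
    exact this

lemma ev_all_or {α : Type*} {T : Set α} (hT : T.Finite) (M : α → ℝ → Prop)
    (h : ∀ t ∈ T, (∀ᶠ r in atTop, M t r) ∨ (∀ᶠ r in atTop, ¬ M t r)) :
    ∀ᶠ r in (atTop : Filter ℝ), ∀ t ∈ T, (M t r ↔ ∀ᶠ r in atTop, M t r) := by
  rw [eventually_all_finite hT]
  intro t ht
  rcases h t ht with h | h
  · filter_upwards [h] with r hr using ⟨fun _ => h, fun _ => hr⟩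
  · filter_upwards [h] with r hr
    refine ⟨fun h' => absurd h' hr, fun h' => ?_⟩
    obtain ⟨r, h1, h2⟩ := (h.and h').exists
    exact absurd h2 h1

variable {n : ℕ}

/-- the fibre of `E` over `s • x`, intersected with the ball of radius `s` -/
def fib (J : Finset (Fin n)) (E : Set (Fin n → ℝ)) (x : J → ℝ) (s : ℝ) : Set (Fin n → ℝ) :=
  {z | z ∈ E ∧ MvPolynomial.eval z (sqP n) ≤ s ^ 2 ∧ ∀ j : J, z j = s * x j}

lemma count_ev (J : Finset (Fin n)) (E : Set (Fin n → ℝ)) (hE : IsSemialgebraic E)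
    (P : Fin n → Polynomial (MvPolynomial J ℝ))
    (hP : ∀ z ∈ E, ∀ i ∉ J, (P i).eval₂ (MvPolynomial.eval (fun j : J => z j)) (z i) = 0 ∧
      MvPolynomial.eval (fun j : J => z j) (P i).leadingCoeff ≠ 0) (x : J → ℝ) :
    ∃ N : ℕ∞, ∀ᶠ s in atTop, (fib J E x s).encard = N := by
  classical
  let φ : MvPolynomial J ℝ →+* Polynomial ℝ :=
    MvPolynomial.eval₂Hom Polynomial.C (fun j => Polynomial.C (x j) * Polynomial.X)
  have hφ : ∀ s : ℝ, (Polynomial.evalRingHom s).comp φ = MvPolynomial.eval (fun j => s * x j) := by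
    intro s
    apply MvPolynomial.ringHom_ext
    · intro r; simp [φ]
    · intro j
      simp only [φ, RingHom.comp_apply, MvPolynomial.eval₂Hom_X', MvPolynomial.eval_X,
        Polynomial.coe_evalRingHom, Polynomial.eval_mul, Polynomial.eval_C, Polynomial.eval_X]
      exact mul_comm _ _
  have hφ' : ∀ (s : ℝ) q, (φ q).eval s = MvPolynomial.eval (fun j => s * x j) q := by
    intro s q; rw [← hφ]; rfl
  by_cases hlead : ∃ i ∉ J, φ (P i).leadingCoeff = 0
  · obtain ⟨i, hi, h0⟩ := hlead
    refine ⟨0, Eventually.of_forall fun s => ?_⟩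
    rw [Set.encard_eq_zero, Set.eq_empty_iff_forall_notMem]
    rintro z ⟨hz, -, hz2⟩
    apply (hP z hz i hi).2
    have : (fun j : J => z j) = fun j => s * x j := funext hz2
    rw [this, ← hφ', h0, Polynomial.eval_zero]
  push Not at hlead
  have key : ∀ i, ∃ G : Set (ℝ → ℝ), G.Finite ∧ (∀ g ∈ G, Nice g) ∧
      ∀ᶠ s in atTop, ∀ z ∈ fib J E x s, ∃ g ∈ G, g s = z i := by
    intro i
    by_cases hi : i ∈ J
    · refine ⟨{fun s => s * x ⟨i, hi⟩}, Set.finite_singleton _, ?_, Eventually.of_forall ?_⟩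
      · rintro g rfl; exact nice_lin _
      · intro s z hz; exact ⟨_, rfl, (hz.2.2 ⟨i, hi⟩).symm⟩
    · have hne : (P i).map φ ≠ 0 := by
        intro h
        have := congrArg (fun p => Polynomial.coeff p (P i).natDegree) h
        simp only [Polynomial.coeff_map, Polynomial.coeff_zero] at this
        exact hlead i hi this
      obtain ⟨G, hG, hN, hr⟩ := nice_roots _ _ rfl hne
      refine ⟨G, hG, hN, ?_⟩
      filter_upwards [hr] with s hs z hz
      apply hs
      rw [← Polynomial.eval₂_evalRingHom, Polynomial.eval₂_map, hφ]
      have hx : (fun j : J => z j) = fun j => s * x j := funext hz.2.2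
      rw [← hx]
      exact (hP z hz.1 i hi).1
  choose G hGf hGn hGe using key
  set T : Set (Fin n → ℝ → ℝ) := Set.pi univ G with hTdef
  have hT : T.Finite := Set.Finite.pi' hGf |>.subset (by intro t ht; exact fun i => ht i (mem_univ i))
  have hTn : ∀ t ∈ T, ∀ i, Nice (t i) := fun t ht i => hGn i _ (ht i (mem_univ i))
  let ev : ℝ → (Fin n → ℝ → ℝ) → (Fin n → ℝ) := fun s t i => t i s
  have h1 := ev_all_or hT (fun t s => ev s t ∈ fib J E x s) (by
    intro t ht
    have hE' := eventually_mem_or hE t (hTn t ht)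
    have hsq : (∀ᶠ s in atTop, MvPolynomial.eval (ev s t) (sqP n) ≤ s ^ 2) ∨
        (∀ᶠ s in atTop, ¬ MvPolynomial.eval (ev s t) (sqP n) ≤ s ^ 2) := by
      have h2 : Nice (fun s => s ^ 2) := by
        have := nice_poly (Polynomial.X ^ 2)
        simp only [Polynomial.eval_pow, Polynomial.eval_X] at this
        exact this
      obtain ⟨σ, hσ⟩ := nice_sign (h2.sub (nice_eval t (hTn t ht) (sqP n)))
      by_cases h0 : σ = -1
      · right; filter_upwards [hσ] with r hr
        rw [h0] at hr
        have := sign_eq_neg_one_iff.1 hr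
        show ¬ _ ≤ _
        simp only [ev]
        linarith
      · left; filter_upwards [hσ] with r hr
        by_contra hh
        apply h0
        rw [← hr, sign_eq_neg_one_iff]
        simp only [ev] at hh
        linarith
    have hj : (∀ᶠ s in atTop, ∀ j : J, ev s t j = s * x j) ∨
        (∀ᶠ s in atTop, ¬ ∀ j : J, ev s t j = s * x j) := by
      by_cases hh : ∀ j : J, ∀ᶠ s in atTop, ev s t j = s * x j
      · left; exact eventually_all.2 hh
      · right
        rw [not_forall] at hh
        obtain ⟨j, hj⟩ := hh
        rcases nice_eq_or (hTn t ht j) (nice_lin (x j)) with h | h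
        · exact absurd h hj
        · filter_upwards [h] with s hs h' using hs (h' j)
    rcases hE' with h | h
    swap
    · right; filter_upwards [h] with s hs hh using hs hh.1
    rcases hsq with h' | h'
    swap
    · right; filter_upwards [h'] with s hs hh using hs hh.2.1
    rcases hj with h'' | h''
    swap
    · right; filter_upwards [h''] with s hs hh using hs hh.2.2
    left; filter_upwards [h, h', h''] with s a b c using ⟨a, b, c⟩)
  have h2 := ev_all_or (hT.prod hT) (fun t s => ev s t.1 = ev s t.2) (by
    rintro ⟨t, t'⟩ ⟨ht, ht'⟩
    by_cases hh : ∀ i, ∀ᶠ s in atTop, t i s = t' i s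
    · left; filter_upwards [eventually_all.2 hh] with s hs using funext hs
    · right
      rw [not_forall] at hh
      obtain ⟨j, hj⟩ := hh
      rcases nice_eq_or (hTn t ht j) (hTn t' ht' j) with h | h
      · exact absurd h hj
      · filter_upwards [h] with s hs h' using hs (congrFun h' j))
  have h3 : ∀ᶠ s in atTop, ∀ z ∈ fib J E x s, ∃ t ∈ T, ev s t = z := by
    filter_upwards [eventually_all.2 hGe] with s hs z hz
    choose t ht ht' using fun i => hs i z hz
    exact ⟨t, fun i _ => ht i, funext ht'⟩
  set T0 := {t ∈ T | ∀ᶠ s in atTop, ev s t ∈ fib J E x s} with hT0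
  have h4 : ∀ᶠ s in atTop, fib J E x s = ev s '' T0 := by
    filter_upwards [h1, h3] with s hs hs'
    ext z
    constructor
    · intro hz
      obtain ⟨t, ht, rfl⟩ := hs' z hz
      exact ⟨t, ⟨ht, (hs t ht).1 hz⟩, rfl⟩
    · rintro ⟨t, ht, rfl⟩
      exact (hs t ht.1).2 ht.2
  obtain ⟨s0, hs0⟩ := (h2.and h4).exists_forall_of_atTop
  refine ⟨(fib J E x s0).encard, ?_⟩
  filter_upwards [eventually_ge_atTop s0] with s hs
  rw [(hs0 s hs).2, (hs0 s0 le_rfl).2]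
  have hiff : ∀ a ∈ T0, ∀ b ∈ T0, ev s a = ev s b ↔ ev s0 a = ev s0 b := by
    intro a ha b hb
    exact ((hs0 s hs).1 (a, b) ⟨ha.1, hb.1⟩).trans ((hs0 s0 le_rfl).1 (a, b) ⟨ha.1, hb.1⟩).symm
  exact le_antisymm (encard_image_le_of _ _ _ fun a ha b hb => (hiff a ha b hb).2)
    (encard_image_le_of _ _ _ fun a ha b hb => (hiff a ha b hb).1)

lemma eval₂_roots_finite {R : Type*} [CommRing R] (f : R →+* ℝ) (p : Polynomial R)
    (h : f p.leadingCoeff ≠ 0) : {y : ℝ | p.eval₂ f y = 0}.encard ≤ p.natDegree := by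
  classical
  have hne : p.map f ≠ 0 := by
    intro h'
    have := congrArg (fun q => Polynomial.coeff q p.natDegree) h'
    simp only [Polynomial.coeff_map, Polynomial.coeff_zero] at this
    exact h this
  have : {y : ℝ | p.eval₂ f y = 0} = ((p.map f).roots.toFinset : Set ℝ) := by
    ext y
    simp [hne, Polynomial.eval_map]
  rw [this, Set.encard_coe_eq_coe_finsetCard]
  have h1 := (p.map f).roots.toFinset_card_le
  have h2 := (p.map f).card_roots'
  have h3 := Polynomial.natDegree_map_le (f := f) (p := p)
  exact_mod_cast h1.trans (h2.trans h3)

end SAlim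

namespace SAlim
variable {n : ℕ}

lemma fib_bound (J : Finset (Fin n)) (E : Set (Fin n → ℝ))
    (P : Fin n → Polynomial (MvPolynomial J ℝ))
    (hP : ∀ z ∈ E, ∀ i ∉ J, (P i).eval₂ (MvPolynomial.eval (fun j : J => z j)) (z i) = 0 ∧
      MvPolynomial.eval (fun j : J => z j) (P i).leadingCoeff ≠ 0) :
    ∃ K : ℕ, ∀ x : J → ℝ, {z | z ∈ E ∧ ∀ j : J, z j = x j}.encard ≤ K := by
  classical
  refine ⟨∏ i, ((P i).natDegree + 1), fun x => ?_⟩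
  rcases Set.eq_empty_or_nonempty {z | z ∈ E ∧ ∀ j : J, z j = x j} with h | ⟨z0, hz0⟩
  · rw [h]; simp
  have hx0 : (fun j : J => z0 j) = x := funext hz0.2
  let A : Fin n → Set ℝ := fun i => {y | (i ∈ J ∧ y = z0 i) ∨ (i ∉ J ∧ (P i).eval₂ (MvPolynomial.eval x) y = 0)}
  have hA : ∀ i, (A i).encard ≤ ((P i).natDegree + 1 : ℕ) := by
    intro i
    by_cases hi : i ∈ J
    · have : A i = {z0 i} := by ext y; simp [A, hi]
      rw [this, Set.encard_singleton]
      exact_mod_cast Nat.succ_le_succ (Nat.zero_le _)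
    · have : A i = {y | (P i).eval₂ (MvPolynomial.eval x) y = 0} := by ext y; simp [A, hi]
      rw [this]
      refine (eval₂_roots_finite _ _ ?_).trans (by exact_mod_cast Nat.le_succ _)
      rw [← hx0]; exact (hP z0 hz0.1 i hi).2
  have hAf : ∀ i, (A i).Finite := fun i => Set.finite_of_encard_le_coe (hA i)
  have hsub : {z | z ∈ E ∧ ∀ j : J, z j = x j} ⊆
      (Fintype.piFinset (fun i => (hAf i).toFinset) : Finset (Fin n → ℝ)) := by
    intro z hz
    simp only [Fintype.coe_piFinset, Set.Finite.coe_toFinset, Set.mem_pi, mem_univ, true_imp_iff]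
    intro i
    by_cases hi : i ∈ J
    · left; exact ⟨hi, (hz.2 ⟨i, hi⟩).trans (hz0.2 ⟨i, hi⟩).symm⟩
    · right
      have hx : (fun j : J => z j) = x := funext hz.2
      refine ⟨hi, ?_⟩
      rw [← hx]; exact (hP z hz.1 i hi).1
  refine (Set.encard_le_encard hsub).trans ?_
  rw [Set.encard_coe_eq_coe_finsetCard, Fintype.card_piFinset]
  have : ∀ i, (hAf i).toFinset.card ≤ (P i).natDegree + 1 := by
    intro i
    have := hA i
    rw [(hAf i).encard_eq_coe_toFinset_card] at this
    exact_mod_cast this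
  exact_mod_cast Finset.prod_le_prod' fun i _ => this i

end SAlim

namespace SAlim

lemma exists_partition {V : Type*} [TopologicalSpace V] [SecondCountableTopology V]
    [MeasurableSpace V] [OpensMeasurableSpace V]
    (E : Set V) (Q : Set V → Prop) (hQ0 : Q ∅) (hQ : ∀ s t, s ⊆ t → Q t → Q s)
    (h : ∀ p ∈ E, ∃ U ∈ 𝓝 p, Q (E ∩ U)) :
    ∃ D : ℕ → Set V, (∀ k, MeasurableSet (D k)) ∧ Pairwise (fun i j => Disjoint (D i) (D j)) ∧
      E ⊆ ⋃ k, D k ∧ ∀ k, Q (E ∩ D k) := by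
  rcases E.eq_empty_or_nonempty with rfl | hne
  · exact ⟨fun _ => ∅, fun _ => MeasurableSet.empty, fun _ _ _ => by simp, by simp, by simpa using hQ0⟩
  have h' : ∀ p ∈ E, ∃ U : Set V, IsOpen U ∧ p ∈ U ∧ Q (E ∩ U) := by
    intro p hp
    obtain ⟨U, hU, hq⟩ := h p hp
    obtain ⟨W, hW, hWo, hpW⟩ := mem_nhds_iff.1 hU
    exact ⟨W, hWo, hpW, hQ _ _ (inter_subset_inter_right _ hW) hq⟩
  choose! U hU hpU hqU using h'
  obtain ⟨t, hts, htc, hcov⟩ := TopologicalSpace.countable_cover_nhdsWithin (f := U) (s := E)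
    (fun x hx => mem_nhdsWithin_of_mem_nhds ((hU x hx).mem_nhds (hpU x hx)))
  have htne : t.Nonempty := by
    obtain ⟨x, hx⟩ := hne
    have := hcov hx
    simp only [mem_iUnion] at this
    obtain ⟨y, hy, _⟩ := this
    exact ⟨y, hy⟩
  obtain ⟨f, rfl⟩ := htc.exists_eq_range htne
  have hf : ∀ k, f k ∈ E := fun k => hts ⟨k, rfl⟩
  refine ⟨disjointed (fun k => U (f k)), ?_, ?_, ?_, ?_⟩
  · exact MeasurableSet.disjointed fun k => (hU _ (hf k)).measurableSet
  · exact disjoint_disjointed _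
  · rw [iUnion_disjointed]
    intro x hx
    have := hcov hx
    simpa using this
  · intro k
    exact hQ _ _ (inter_subset_inter_right _ (disjointed_subset _ _)) (hqU _ (hf k))

section area
variable {V W : Type*} [NormedAddCommGroup V] [NormedSpace ℝ V] [FiniteDimensional ℝ V]
  [MeasurableSpace V] [BorelSpace V] [NormedAddCommGroup W] [NormedSpace ℝ W]
  [FiniteDimensional ℝ W] [MeasurableSpace W] [BorelSpace W]

lemma area_piece (π : V →L[ℝ] W) (hπ : ∀ v, ‖π v‖ ≤ ‖v‖) (F : W →L[ℝ] V)
    (hF : ∀ w, π (F w) = w) (ε : NNReal) (d : ℕ) (D : Set V)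
    (hD : ∀ a ∈ D, ∀ b ∈ D, ‖(a - b) - F (π (a - b))‖ ≤ ε * ‖π (a - b)‖) :
    InjOn π D ∧ μH[(d : ℝ)] D ≤ ((1 + ε : NNReal) : ℝ≥0∞) ^ (d : ℝ) * μH[(d : ℝ)] (F '' (π '' D)) ∧
    μH[(d : ℝ)] (F '' (π '' D)) ≤ ((1 + ε : NNReal) : ℝ≥0∞) ^ (d : ℝ) * μH[(d : ℝ)] D := by
  have hinj : InjOn π D := by
    intro a ha b hb hab
    have := hD a ha b hb
    rw [map_sub, hab, sub_self, norm_zero, map_zero, mul_zero, sub_zero] at this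
    exact sub_eq_zero.1 (norm_le_zero_iff.1 this)
  have hd : (0 : ℝ) ≤ d := Nat.cast_nonneg d
  refine ⟨hinj, ?_, ?_⟩
  · classical
    have hFi : InjOn (fun v => F (π v)) D := by
      intro a ha b hb hab
      apply hinj ha hb
      have := congrArg π hab
      simpa [hF] using this
    rw [image_image]
    rcases D.eq_empty_or_nonempty with rfl | ⟨p, hp⟩
    · simp
    have : Nonempty V := ⟨p⟩
    have hL : LipschitzOnWith (1 + ε) (Function.invFunOn (fun v => F (π v)) D)
        ((fun v => F (π v)) '' D) := by
      rw [lipschitzOnWith_iff_dist_le_mul]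
      rintro _ ⟨a, ha, rfl⟩ _ ⟨b, hb, rfl⟩
      rw [hFi.leftInvOn_invFunOn ha, hFi.leftInvOn_invFunOn hb]
      have h1 := hD a ha b hb
      have h2 : ‖π (a - b)‖ ≤ ‖F (π (a - b))‖ := by
        have := hπ (F (π (a - b))); rwa [hF] at this
      have h3 : ‖a - b‖ ≤ ‖(a - b) - F (π (a - b))‖ + ‖F (π (a - b))‖ := by
        simpa using norm_add_le ((a - b) - F (π (a - b))) (F (π (a - b)))
      rw [dist_eq_norm, dist_eq_norm, ← map_sub, ← map_sub]
      push_cast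
      nlinarith [mul_le_mul_of_nonneg_left h2 ε.2]
    have := hL.hausdorffMeasure_image_le hd
    rwa [hFi.leftInvOn_invFunOn.image_image] at this
  · rw [image_image]
    have hL : LipschitzOnWith (1 + ε) (fun v => F (π v)) D := by
      rw [lipschitzOnWith_iff_dist_le_mul]
      intro a ha b hb
      have h1 := hD a ha b hb
      have h2 := hπ (a - b)
      have h3 : ‖F (π (a - b))‖ ≤ ‖(a - b) - F (π (a - b))‖ + ‖a - b‖ := by
        have := norm_sub_le (a - b) ((a - b) - F (π (a - b)))
        rw [sub_sub_cancel] at this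
        linarith
      rw [dist_eq_norm, dist_eq_norm, ← map_sub, ← map_sub]
      push_cast
      nlinarith [mul_le_mul_of_nonneg_left h2 ε.2]
    exact hL.hausdorffMeasure_image_le hd

/-- The pulled back measure. -/
noncomputable def nu (F : W →L[ℝ] V) (d : ℕ) : Measure W := Measure.comap F (μH[(d : ℝ)])

lemma emb_of (π : V →L[ℝ] W) (F : W →L[ℝ] V) (hF : ∀ w, π (F w) = w) : MeasurableEmbedding F := by
  have hi : Function.Injective F := fun a b h => by rw [← hF a, ← hF b, h]
  exact (F.isClosedEmbedding_of_injective (LinearMap.ker_eq_bot.2 hi)).measurableEmbedding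

lemma nu_apply (π : V →L[ℝ] W) (F : W →L[ℝ] V) (hF : ∀ w, π (F w) = w) (d : ℕ) (A : Set W) :
    nu F d A = μH[(d : ℝ)] (F '' A) := (emb_of π F hF).comap_apply _ _

lemma area (π : V →L[ℝ] W) (hπ : ∀ v, ‖π v‖ ≤ ‖v‖) (F : W →L[ℝ] V)
    (hF : ∀ w, π (F w) = w) (ε : NNReal) (d : ℕ) (E : Set V)
    (hE : ∀ p ∈ E, ∃ U ∈ 𝓝 p, ∀ a ∈ E ∩ U, ∀ b ∈ E ∩ U,
      ‖(a - b) - F (π (a - b))‖ ≤ ε * ‖π (a - b)‖) (Y : Set V) (hYE : Y ⊆ E) (hY : MeasurableSet Y) :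
    Measurable (fun x => Measure.count (Y ∩ π ⁻¹' {x})) ∧
    μH[(d : ℝ)] Y ≤ ((1 + ε : NNReal) : ℝ≥0∞) ^ (d : ℝ) *
      ∫⁻ x, Measure.count (Y ∩ π ⁻¹' {x}) ∂(nu F d) ∧
    ∫⁻ x, Measure.count (Y ∩ π ⁻¹' {x}) ∂(nu F d) ≤
      ((1 + ε : NNReal) : ℝ≥0∞) ^ (d : ℝ) * μH[(d : ℝ)] Y := by
  obtain ⟨D, hDm, hDd, hDc, hDq⟩ := exists_partition E
    (fun s => ∀ a ∈ s, ∀ b ∈ s, ‖(a - b) - F (π (a - b))‖ ≤ ε * ‖π (a - b)‖)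
    (fun a ha => absurd ha (notMem_empty a))
    (fun s t hst h a ha b hb => h a (hst ha) b (hst hb)) hE
  have hYD : ∀ k, ∀ a ∈ Y ∩ D k, ∀ b ∈ Y ∩ D k,
      ‖(a - b) - F (π (a - b))‖ ≤ ε * ‖π (a - b)‖ := fun k a ha b hb =>
    hDq k a ⟨hYE ha.1, ha.2⟩ b ⟨hYE hb.1, hb.2⟩
  have hp := fun k => area_piece π hπ F hF ε d (Y ∩ D k) (hYD k)
  have hYu : Y = ⋃ k, Y ∩ D k := by
    rw [← inter_iUnion, inter_eq_left.2 (hYE.trans hDc)]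
  have hdisj : Pairwise (fun i j => Disjoint (Y ∩ D i) (Y ∩ D j)) := fun i j hij =>
    (hDd hij).mono inter_subset_right inter_subset_right
  have hm : ∀ k, MeasurableSet (Y ∩ D k) := fun k => hY.inter (hDm k)
  have hsum : μH[(d : ℝ)] Y = ∑' k, μH[(d : ℝ)] (Y ∩ D k) := by
    conv_lhs => rw [hYu]
    exact measure_iUnion hdisj hm
  have him : ∀ k, MeasurableSet (π '' (Y ∩ D k)) := fun k =>
    (hm k).image_of_continuousOn_injOn π.continuous.continuousOn (hp k).1
  have hcount : ∀ x, Measure.count (Y ∩ π ⁻¹' {x}) =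
      ∑' k, (π '' (Y ∩ D k)).indicator (fun _ => (1 : ℝ≥0∞)) x := by
    intro x
    have hx : Y ∩ π ⁻¹' {x} = ⋃ k, (Y ∩ D k) ∩ π ⁻¹' {x} := by
      rw [← iUnion_inter, ← hYu]
    have hpx : MeasurableSet (π ⁻¹' {x}) := π.continuous.measurable (measurableSet_singleton x)
    rw [hx, measure_iUnion (fun i j hij => (hdisj hij).mono inter_subset_left inter_subset_left)
      fun k => (hm k).inter hpx]
    congr 1
    ext k
    by_cases hk : x ∈ π '' (Y ∩ D k)
    · rw [indicator_of_mem hk]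
      obtain ⟨v, hv, rfl⟩ := hk
      have : (Y ∩ D k) ∩ π ⁻¹' {π v} = {v} := by
        ext w
        constructor
        · rintro ⟨hw, hw'⟩
          exact (hp k).1 hw hv hw'
        · rintro rfl
          exact ⟨hv, rfl⟩
      rw [this, Measure.count_singleton]
    · rw [indicator_of_notMem hk]
      have : (Y ∩ D k) ∩ π ⁻¹' {x} = ∅ := by
        ext w
        simp only [mem_empty_iff_false, iff_false]
        rintro ⟨hw, hw'⟩
        exact hk ⟨w, hw, hw'⟩
      rw [this, measure_empty]
  have hmi : ∀ k, Measurable ((π '' (Y ∩ D k)).indicator (fun _ => (1 : ℝ≥0∞))) := fun k =>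
    measurable_const.indicator (him k)
  have hintg : ∫⁻ x, Measure.count (Y ∩ π ⁻¹' {x}) ∂(nu F d) =
      ∑' k, μH[(d : ℝ)] (F '' (π '' (Y ∩ D k))) := by
    simp_rw [hcount]
    rw [lintegral_tsum fun k => (hmi k).aemeasurable]
    congr 1
    ext k
    rw [lintegral_indicator (him k)]
    simp [nu_apply π F hF]
  refine ⟨?_, ?_, ?_⟩
  · simp_rw [hcount]
    exact Measurable.ennreal_tsum hmi
  · rw [hsum, hintg, ← ENNReal.tsum_mul_left]
    exact ENNReal.tsum_le_tsum fun k => (hp k).2.1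
  · rw [hsum, hintg, ← ENNReal.tsum_mul_left]
    exact ENNReal.tsum_le_tsum fun k => (hp k).2.2

end area
end SAlim

namespace SAlim

section scale
open scoped Pointwise
variable {V W : Type*} [NormedAddCommGroup V] [NormedSpace ℝ V] [FiniteDimensional ℝ V]
  [MeasurableSpace V] [BorelSpace V] [NormedAddCommGroup W] [NormedSpace ℝ W]
  [FiniteDimensional ℝ W] [MeasurableSpace W] [BorelSpace W]

lemma nu_scale (π : V →L[ℝ] W) (F : W →L[ℝ] V) (hF : ∀ w, π (F w) = w) (d : ℕ) (R : ℝ) (hR : 0 < R)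
    (f : W → ℝ≥0∞) :
    ∫⁻ x, f x ∂(nu F d) = ENNReal.ofReal R ^ d * ∫⁻ x, f (R • x) ∂(nu F d) := by
  let e : W ≃ᵐ W := (Homeomorph.smulOfNeZero R hR.ne').toMeasurableEquiv
  have he : ∀ x, e x = R • x := fun x => rfl
  have hmap : nu F d = ENNReal.ofReal R ^ d • (nu F d).map e := by
    ext A hA
    rw [Measure.smul_apply, e.map_apply, nu_apply π F hF, nu_apply π F hF]
    have h1 : F '' A = R • (F '' (e ⁻¹' A)) := by
      ext v
      constructor
      · rintro ⟨a, ha, rfl⟩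
        refine ⟨F (R⁻¹ • a), ⟨R⁻¹ • a, ?_, rfl⟩, ?_⟩
        · rw [mem_preimage, he, smul_inv_smul₀ hR.ne']; exact ha
        · simp [hR.ne']
      · rintro ⟨_, ⟨a, ha, rfl⟩, rfl⟩
        exact ⟨R • a, ha, by simp⟩
    rw [h1, Measure.hausdorffMeasure_smul₀ (Nat.cast_nonneg d) hR.ne']
    rw [ENNReal.smul_def, smul_eq_mul, smul_eq_mul, NNReal.rpow_natCast, ENNReal.coe_pow]
    congr 2
    rw [← enorm_eq_nnnorm, Real.enorm_eq_ofReal hR.le]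
  conv_lhs => rw [hmap]
  rw [lintegral_smul_measure, lintegral_map_equiv, smul_eq_mul]
  rfl

lemma nu_ball (π : V →L[ℝ] W) (F : W →L[ℝ] V) (hF : ∀ w, π (F w) = w) (r : ℝ) :
    nu F (Module.finrank ℝ W) (closedBall 0 r) ≠ ∞ := by
  rw [nu_apply π F hF]
  have h1 := F.lipschitz.hausdorffMeasure_image_le (Nat.cast_nonneg (Module.finrank ℝ W))
    (closedBall 0 r)
  refine ne_top_of_le_ne_top ?_ h1
  have h2 : (μH[(Module.finrank ℝ W : ℝ)] : Measure W) (closedBall 0 r) < ∞ :=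
    (isCompact_closedBall (0 : W) r).measure_lt_top
  exact ENNReal.mul_ne_top (ENNReal.rpow_ne_top_of_nonneg (Nat.cast_nonneg _) ENNReal.coe_ne_top) h2.ne

end scale

variable {n : ℕ}

/-- the subset of euclidean space -/
def vS (S : Set (Fin n → ℝ)) : Set (EuclideanSpace ℝ (Fin n)) := {v | v.ofLp ∈ S}

/-- approximate limit -/
def ALim (d : ℕ) (C : ℝ) (Y : Set (Fin n → ℝ)) : Prop :=
  ∃ (g : ℝ → ℝ) (c : ℝ), Tendsto g atTop (𝓝 c) ∧ ∀ R > 0,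
    μH[(d : ℝ)] (vS Y ∩ closedBall 0 R) ≠ ∞ ∧
    (μH[(d : ℝ)] (vS Y ∩ closedBall 0 R)).toReal / R ^ d ≤ C * g R ∧
    g R ≤ C * ((μH[(d : ℝ)] (vS Y ∩ closedBall 0 R)).toReal / R ^ d)

/-- coordinate projection -/
noncomputable def piJ (J : Finset (Fin n)) : EuclideanSpace ℝ (Fin n) →L[ℝ] EuclideanSpace ℝ J :=
  LinearMap.toContinuousLinearMap
    { toFun := fun v => WithLp.toLp 2 (fun j : J => v j)
      map_add' := fun v w => by ext j; simp
      map_smul' := fun v w => by ext j; simp }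

lemma piJ_apply (J : Finset (Fin n)) (v : EuclideanSpace ℝ (Fin n)) (j : J) : piJ J v j = v j := rfl

lemma norm_piJ (J : Finset (Fin n)) (v : EuclideanSpace ℝ (Fin n)) : ‖piJ J v‖ ≤ ‖v‖ := by
  rw [← sq_le_sq₀ (norm_nonneg _) (norm_nonneg _), EuclideanSpace.norm_sq_eq,
    EuclideanSpace.norm_sq_eq]
  simp only [piJ_apply]
  rw [Finset.sum_coe_sort J (fun i => ‖v i‖ ^ 2)]
  exact Finset.sum_le_sum_of_subset_of_nonneg (Finset.subset_univ _) fun _ _ _ => sq_nonneg _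

lemma eval_sqP (v : EuclideanSpace ℝ (Fin n)) : MvPolynomial.eval v.ofLp (sqP n) = ‖v‖ ^ 2 := by
  rw [EuclideanSpace.norm_sq_eq]
  simp [sqP]

lemma vS_measurable {S : Set (Fin n → ℝ)} (h : IsSemialgebraic S) : MeasurableSet (vS S) := by
  have : Measurable (fun v : EuclideanSpace ℝ (Fin n) => v.ofLp) :=
    (PiLp.continuous_ofLp 2 _).measurable
  exact this (sa_measurable h)

lemma alim_of_local (J : Finset (Fin n)) (E : Set (Fin n → ℝ))
    (P : Fin n → Polynomial (MvPolynomial J ℝ))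
    (hP : ∀ z ∈ E, ∀ i ∉ J, (P i).eval₂ (MvPolynomial.eval (fun j : J => z j)) (z i) = 0 ∧
      MvPolynomial.eval (fun j : J => z j) (P i).leadingCoeff ≠ 0)
    (F : EuclideanSpace ℝ J →L[ℝ] EuclideanSpace ℝ (Fin n)) (hF : ∀ w, piJ J (F w) = w)
    (ε : NNReal)
    (hloc : ∀ p ∈ vS E, ∃ U ∈ 𝓝 p, ∀ a ∈ vS E ∩ U, ∀ b ∈ vS E ∩ U,
      ‖(a - b) - F (piJ J (a - b))‖ ≤ ε * ‖piJ J (a - b)‖)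
    (Y : Set (Fin n → ℝ)) (hYE : Y ⊆ E) (hY : IsSemialgebraic Y) :
    ALim J.card ((1 + ε) ^ J.card) Y := by
  set d := J.card with hd
  have hfin : Module.finrank ℝ (EuclideanSpace ℝ J) = d := by simp [hd]
  let N : ℝ → EuclideanSpace ℝ J → ℝ≥0∞ := fun R x =>
    Measure.count ((vS Y ∩ closedBall 0 R) ∩ piJ J ⁻¹' {x})
  have hYm : ∀ R, MeasurableSet (vS Y ∩ closedBall 0 R) := fun R =>
    (vS_measurable hY).inter isClosed_closedBall.measurableSet
  have harea := fun R => area (piJ J) (norm_piJ J) F hF ε d (vS E) hloc (vS Y ∩ closedBall 0 R)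
    (inter_subset_left.trans fun v hv => hYE hv) (hYm R)
  have hNfib : ∀ R > 0, ∀ x : EuclideanSpace ℝ J, N R (R • x) = ((fib J Y x.ofLp R).encard : ℝ≥0∞) := by
    intro R hR x
    simp only [N]
    rw [Measure.count_apply ((hYm R).inter ((piJ J).continuous.measurable (measurableSet_singleton _)))]
    congr 1
    have : fib J Y x.ofLp R = WithLp.ofLp '' ((vS Y ∩ closedBall 0 R) ∩ piJ J ⁻¹' {R • x}) := by
      ext z
      constructor
      · rintro ⟨h1, h2, h3⟩
        refine ⟨WithLp.toLp 2 z, ⟨⟨h1, ?_⟩, ?_⟩, rfl⟩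
        · rw [mem_closedBall_zero_iff, ← sq_le_sq₀ (norm_nonneg _) hR.le, ← eval_sqP]
          exact h2
        · rw [mem_preimage, mem_singleton_iff]
          ext j
          exact h3 j
      · rintro ⟨v, ⟨⟨h1, h2⟩, h3⟩, rfl⟩
        refine ⟨h1, ?_, ?_⟩
        · rw [mem_closedBall_zero_iff, ← sq_le_sq₀ (norm_nonneg _) hR.le, ← eval_sqP] at h2
          exact h2
        · intro j
          exact congrArg (fun w : EuclideanSpace ℝ J => w j) h3
    rw [this, (WithLp.ofLp_injective 2).encard_image]
  obtain ⟨K, hK⟩ := fib_bound J E P hP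
  have hNb : ∀ R > 0, ∀ x : EuclideanSpace ℝ J, N R (R • x) ≤
      (closedBall (0 : EuclideanSpace ℝ J) 1).indicator (fun _ => (K : ℝ≥0∞)) x := by
    intro R hR x
    by_cases hx : x ∈ closedBall (0 : EuclideanSpace ℝ J) 1
    · rw [indicator_of_mem hx, hNfib R hR]
      have h1 : (fib J Y x.ofLp R).encard ≤ K := by
        refine le_trans (encard_le_encard ?_) (hK (fun j => R * x j))
        rintro z ⟨h1, h2, h3⟩
        exact ⟨hYE h1, h3⟩
      have := ENat.toENNReal_mono h1
      simpa using this
    · rw [indicator_of_notMem hx]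
      have : (vS Y ∩ closedBall 0 R) ∩ piJ J ⁻¹' {R • x} = ∅ := by
        ext v
        simp only [mem_empty_iff_false, iff_false]
        rintro ⟨⟨h1, h2⟩, h3⟩
        apply hx
        rw [mem_closedBall_zero_iff] at h2 ⊢
        have h4 := norm_piJ J v
        rw [h3, norm_smul, Real.norm_of_nonneg hR.le] at h4
        nlinarith
      simp [N, this]
  have hbfin : ∫⁻ x, (closedBall (0 : EuclideanSpace ℝ J) 1).indicator (fun _ => (K : ℝ≥0∞)) x
      ∂(nu F d) ≠ ∞ := by
    rw [lintegral_indicator isClosed_closedBall.measurableSet, lintegral_const,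
      Measure.restrict_apply_univ]
    have := nu_ball (piJ J) F hF 1
    rw [hfin] at this
    exact ENNReal.mul_ne_top (by simp) this
  choose Ninf hNinf using fun x : EuclideanSpace ℝ J => count_ev J Y hY P (fun z hz => hP z (hYE hz)) x.ofLp
  let I : ℝ → ℝ≥0∞ := fun R => ∫⁻ x, N R (R • x) ∂(nu F d)
  have hlim : Tendsto I atTop (𝓝 (∫⁻ x, ((Ninf x : ℕ∞) : ℝ≥0∞) ∂(nu F d))) := by
    refine tendsto_lintegral_filter_of_dominated_convergence _ ?_ ?_ hbfin ?_
    · refine Eventually.of_forall fun R => ?_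
      exact (harea R).1.comp (measurable_const_smul R)
    · filter_upwards [eventually_gt_atTop 0] with R hR
      exact Eventually.of_forall fun x => hNb R hR x
    · refine Eventually.of_forall fun x => ?_
      apply tendsto_const_nhds.congr'
      filter_upwards [eventually_gt_atTop 0, hNinf x] with R hR hx
      rw [hNfib R hR, hx]
  have hIfin : ∀ R > 0, I R ≠ ∞ := fun R hR =>
    ne_top_of_le_ne_top hbfin (lintegral_mono (hNb R hR))
  have hlfin : (∫⁻ x, ((Ninf x : ℕ∞) : ℝ≥0∞) ∂(nu F d)) ≠ ∞ := by
    refine ne_top_of_le_ne_top hbfin (le_of_tendsto hlim ?_)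
    filter_upwards [eventually_gt_atTop 0] with R hR
    exact lintegral_mono (hNb R hR)
  refine ⟨fun R => (I R).toReal, _, (ENNReal.tendsto_toReal hlfin).comp hlim, fun R hR => ?_⟩
  obtain ⟨-, h1, h2⟩ := harea R
  rw [nu_scale (piJ J) F hF d R hR, ENNReal.rpow_natCast] at h1 h2
  change _ ≤ _ * (_ * I R) at h1
  change _ * I R ≤ _ at h2
  have hCt : (((1 + ε : NNReal) : ℝ≥0∞) ^ d) ≠ ∞ := by finiteness
  have hRt : ENNReal.ofReal R ^ d ≠ ∞ := by finiteness
  have hfinite : μH[(d : ℝ)] (vS Y ∩ closedBall 0 R) ≠ ∞ :=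
    ne_top_of_le_ne_top (ENNReal.mul_ne_top hCt (ENNReal.mul_ne_top hRt (hIfin R hR))) h1
  have h1' := ENNReal.toReal_mono (ENNReal.mul_ne_top hCt (ENNReal.mul_ne_top hRt (hIfin R hR))) h1
  have h2' := ENNReal.toReal_mono (ENNReal.mul_ne_top hCt hfinite) h2
  simp only [ENNReal.toReal_mul, ENNReal.toReal_pow, ENNReal.toReal_ofReal hR.le,
    ENNReal.coe_toReal, NNReal.coe_add, NNReal.coe_one] at h1' h2'
  have hRd : 0 < R ^ d := pow_pos hR d
  refine ⟨hfinite, ?_, ?_⟩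
  · rw [div_le_iff₀ hRd]
    linarith
  · rw [← mul_div_assoc, le_div_iff₀ hRd]
    linarith

end SAlim

namespace SAlim
variable {n : ℕ}

/-- the differential of a polynomial -/
noncomputable def dP (p : MvPolynomial (Fin n) ℝ) (z : Fin n → ℝ) : (Fin n → ℝ) →L[ℝ] ℝ :=
  ∑ i, MvPolynomial.eval z (MvPolynomial.pderiv i p) • ContinuousLinearMap.proj i

lemma dP_apply (p : MvPolynomial (Fin n) ℝ) (z v : Fin n → ℝ) :
    dP p z v = ∑ i, MvPolynomial.eval z (MvPolynomial.pderiv i p) * v i := by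
  simp [dP]

lemma hasStrictFDerivAt_eval (p : MvPolynomial (Fin n) ℝ) (z : Fin n → ℝ) :
    HasStrictFDerivAt (fun z => MvPolynomial.eval z p) (dP p z) z := by
  classical
  induction p using MvPolynomial.induction_on with
  | C a =>
    have : dP (MvPolynomial.C a) z = 0 := by ext v; simp [dP_apply]
    rw [this]; simpa using hasStrictFDerivAt_const a z
  | add p q hp hq =>
    have : dP (p + q) z = dP p z + dP q z := by
      ext v; simp [dP_apply, add_mul, Finset.sum_add_distrib]
    rw [this]
    have h := hp.add hq
    simp only [map_add]
    exact h
  | mul_X p i hp =>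
    have h1 : HasStrictFDerivAt (fun z : Fin n → ℝ => z i) (ContinuousLinearMap.proj i) z :=
      (ContinuousLinearMap.proj (R := ℝ) (φ := fun _ : Fin n => ℝ) i).hasStrictFDerivAt
    have h := hp.mul h1
    simp only [map_mul, MvPolynomial.eval_X]
    have heq : dP (p * MvPolynomial.X i) z = MvPolynomial.eval z p •
        ContinuousLinearMap.proj (R := ℝ) (φ := fun _ : Fin n => ℝ) i + z i • dP p z := by
      refine ContinuousLinearMap.ext fun v => ?_
      rw [dP_apply, ContinuousLinearMap.add_apply, ContinuousLinearMap.smul_apply,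
        ContinuousLinearMap.smul_apply, dP_apply, ContinuousLinearMap.proj_apply, smul_eq_mul,
        smul_eq_mul, Finset.mul_sum]
      simp only [MvPolynomial.pderiv_mul, map_add, map_mul, MvPolynomial.eval_X, add_mul,
        Finset.sum_add_distrib]
      rw [add_comm]
      congr 1
      · rw [Finset.sum_eq_single i]
        · simp
        · intro k _ hk
          simp [MvPolynomial.pderiv_X_of_ne hk.symm]
        · simp
      · refine Finset.sum_congr rfl fun k _ => by ring
    rw [heq]
    exact h

/-- polynomial in `x_J, x_i` as a polynomial in all variables -/
noncomputable def Phi (J : Finset (Fin n)) (i : Fin n) :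
    Polynomial (MvPolynomial J ℝ) →+* MvPolynomial (Fin n) ℝ :=
  Polynomial.eval₂RingHom (MvPolynomial.rename (Subtype.val : J → Fin n)).toRingHom
    (MvPolynomial.X i)

lemma eval_Phi (J : Finset (Fin n)) (i : Fin n) (P : Polynomial (MvPolynomial J ℝ))
    (z : Fin n → ℝ) : MvPolynomial.eval z (Phi J i P) =
      P.eval₂ (MvPolynomial.eval (fun j : J => z j)) (z i) := by
  simp only [Phi, Polynomial.coe_eval₂RingHom, Polynomial.hom_eval₂, MvPolynomial.eval_X]
  congr 1
  apply MvPolynomial.ringHom_ext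
  · intro r; simp
  · intro j; simp

lemma Phi_X (J : Finset (Fin n)) (i : Fin n) : Phi J i Polynomial.X = MvPolynomial.X i := by
  simp [Phi]

lemma Phi_C (J : Finset (Fin n)) (i : Fin n) (q : MvPolynomial J ℝ) :
    Phi J i (Polynomial.C q) = MvPolynomial.rename (Subtype.val : J → Fin n) q := by
  simp [Phi]

lemma pderiv_rename_zero (J : Finset (Fin n)) (k : Fin n) (hk : k ∉ J) (q : MvPolynomial J ℝ) :
    MvPolynomial.pderiv k (MvPolynomial.rename (Subtype.val : J → Fin n) q) = 0 := by
  classical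
  induction q using MvPolynomial.induction_on with
  | C a => simp
  | add p q hp hq => simp [hp, hq]
  | mul_X p i hp =>
    have : (i : Fin n) ≠ k := fun h => hk (h ▸ i.2)
    simp [MvPolynomial.pderiv_mul, hp, MvPolynomial.pderiv_X_of_ne this]

lemma pderiv_Phi_zero (J : Finset (Fin n)) (i k : Fin n) (hk : k ∉ J) (hki : k ≠ i)
    (P : Polynomial (MvPolynomial J ℝ)) : MvPolynomial.pderiv k (Phi J i P) = 0 := by
  induction P using Polynomial.induction_on' with
  | add p q hp hq => simp [hp, hq]
  | monomial m a =>
    rw [← Polynomial.C_mul_X_pow_eq_monomial, map_mul, map_pow, Phi_X, Phi_C,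
      MvPolynomial.pderiv_mul, pderiv_rename_zero J k hk, MvPolynomial.pderiv_pow,
      MvPolynomial.pderiv_X_of_ne hki.symm]
    simp

lemma pderiv_Phi_self (J : Finset (Fin n)) (i : Fin n) (hi : i ∉ J)
    (P : Polynomial (MvPolynomial J ℝ)) :
    MvPolynomial.pderiv i (Phi J i P) = Phi J i (Polynomial.derivative P) := by
  induction P using Polynomial.induction_on' with
  | add p q hp hq => simp [hp, hq]
  | monomial m a =>
    rw [← Polynomial.C_mul_X_pow_eq_monomial, map_mul, map_pow, Phi_X, Phi_C,
      MvPolynomial.pderiv_mul, pderiv_rename_zero J i hi, MvPolynomial.pderiv_pow,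
      MvPolynomial.pderiv_X_self, Polynomial.derivative_C_mul_X_pow, map_mul, map_pow, Phi_X, Phi_C]
    simp
    ring

/-- the linear graph map -/
noncomputable def FL (J : Finset (Fin n)) (L : Fin n → J → ℝ) :
    EuclideanSpace ℝ J →L[ℝ] EuclideanSpace ℝ (Fin n) :=
  LinearMap.toContinuousLinearMap
    { toFun := fun w => WithLp.toLp 2 (fun k => if h : k ∈ J then w ⟨k, h⟩ else ∑ j, L k j * w j)
      map_add' := fun v w => by
        ext k; by_cases h : k ∈ J <;> simp [h, mul_add, Finset.sum_add_distrib]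
      map_smul' := fun v w => by
        ext k; by_cases h : k ∈ J
        · simp [h]
        · simp [h, Finset.mul_sum, mul_left_comm] }

lemma FL_mem (J : Finset (Fin n)) (L : Fin n → J → ℝ) (w) (k) (h : k ∈ J) :
    FL J L w k = w ⟨k, h⟩ := by
  change (if h : k ∈ J then w ⟨k, h⟩ else ∑ j, L k j * w j) = _
  simp [h]

lemma FL_notMem (J : Finset (Fin n)) (L : Fin n → J → ℝ) (w) (k) (h : k ∉ J) :
    FL J L w k = ∑ j, L k j * w j := by
  change (if h : k ∈ J then w ⟨k, h⟩ else ∑ j, L k j * w j) = _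
  simp [h]

lemma piJ_FL (J : Finset (Fin n)) (L : Fin n → J → ℝ) (w) : piJ J (FL J L w) = w := by
  ext j
  rw [piJ_apply, FL_mem _ _ _ _ j.2]

lemma norm_le_sum (v : EuclideanSpace ℝ (Fin n)) : ‖v‖ ≤ ∑ i, |v i| := by
  rw [← sq_le_sq₀ (norm_nonneg _) (Finset.sum_nonneg fun _ _ => abs_nonneg _),
    EuclideanSpace.norm_sq_eq]
  simpa using Finset.sum_sq_le_sq_sum_of_nonneg (s := Finset.univ) (f := fun i => |v i|)
    (fun _ _ => abs_nonneg _)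

end SAlim

namespace SAlim
variable {n : ℕ}

lemma dP_Phi (J : Finset (Fin n)) (i : Fin n) (hi : i ∉ J) (P : Polynomial (MvPolynomial J ℝ))
    (z u : Fin n → ℝ) : dP (Phi J i P) z u =
      MvPolynomial.eval z (MvPolynomial.pderiv i (Phi J i P)) * u i +
      ∑ j : J, MvPolynomial.eval z (MvPolynomial.pderiv (j : Fin n) (Phi J i P)) * u j := by
  classical
  rw [dP_apply, Finset.sum_coe_sort J
    (fun j => MvPolynomial.eval z (MvPolynomial.pderiv j (Phi J i P)) * u j),
    ← Finset.sum_insert (f := fun j => MvPolynomial.eval z (MvPolynomial.pderiv j (Phi J i P)) * u j) hi]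
  symm
  apply Finset.sum_subset (Finset.subset_univ _)
  intro k _ hk
  rw [Finset.mem_insert, not_or] at hk
  rw [pderiv_Phi_zero J i k hk.2 hk.1]
  simp

lemma strict_bound (p : MvPolynomial (Fin n) ℝ) (z : EuclideanSpace ℝ (Fin n)) (c : ℝ) (hc : 0 < c) :
    ∀ᶠ q : EuclideanSpace ℝ (Fin n) × EuclideanSpace ℝ (Fin n) in 𝓝 (z, z),
      |MvPolynomial.eval q.1.ofLp p - MvPolynomial.eval q.2.ofLp p -
        dP p z.ofLp (q.1 - q.2).ofLp| ≤ c * ‖q.1 - q.2‖ := by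
  have h1 := hasStrictFDerivAt_eval p z.ofLp
  have h2 : HasStrictFDerivAt (fun v : EuclideanSpace ℝ (Fin n) => v.ofLp)
      ((EuclideanSpace.equiv (Fin n) ℝ : EuclideanSpace ℝ (Fin n) ≃L[ℝ] (Fin n → ℝ)) :
        EuclideanSpace ℝ (Fin n) →L[ℝ] (Fin n → ℝ)) z :=
    (EuclideanSpace.equiv (Fin n) ℝ).hasStrictFDerivAt
  have h3 := HasStrictFDerivAt.comp z h1 h2
  have h4 := (hasStrictFDerivAt_iff_isLittleO.1 h3).def hc
  exact h4

lemma local_lip (J : Finset (Fin n)) (P : Fin n → Polynomial (MvPolynomial J ℝ))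
    (E : Set (Fin n → ℝ)) (L : Fin n → J → ℝ) (δ ε : ℝ) (hε : 0 < ε) (hδ0 : 0 ≤ δ)
    (hδ : (n : ℝ) ^ 2 * δ ≤ ε / 2)
    (hE : ∀ z ∈ E, ∀ i ∉ J, MvPolynomial.eval z (Phi J i (P i)) = 0 ∧
      MvPolynomial.eval z (MvPolynomial.pderiv i (Phi J i (P i))) ≠ 0 ∧
      ∀ j : J, |MvPolynomial.eval z (MvPolynomial.pderiv (j : Fin n) (Phi J i (P i))) +
        L i j * MvPolynomial.eval z (MvPolynomial.pderiv i (Phi J i (P i)))| ≤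
        δ * |MvPolynomial.eval z (MvPolynomial.pderiv i (Phi J i (P i)))|) :
    ∀ p ∈ vS E, ∃ U ∈ 𝓝 p, ∀ a ∈ vS E ∩ U, ∀ b ∈ vS E ∩ U,
      ‖(a - b) - FL J L (piJ J (a - b))‖ ≤ ε * ‖piJ J (a - b)‖ := by
  intro p hp
  set F := FL J L with hFdef
  set M := ‖F‖ + ε with hM
  have hM0 : 0 < M := by positivity
  set τ := min (1 / 2) (ε / (4 * M)) with hτ
  have hτ0 : 0 < τ := lt_min (by norm_num) (by positivity)
  have hτ1 : τ ≤ 1 / 2 := min_le_left _ _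
  have hτ2 : τ * (4 * M) ≤ ε := by
    rw [← le_div_iff₀ (by positivity)]; exact min_le_right _ _
  set η := τ / (n + 1) with hη
  have hη0 : 0 < η := by positivity
  have hnη : n * η ≤ τ := by
    rw [hη, mul_div_assoc', div_le_iff₀ (by positivity)]
    nlinarith
  have hev : ∀ᶠ q : EuclideanSpace ℝ (Fin n) × EuclideanSpace ℝ (Fin n) in 𝓝 (p, p), ∀ i, i ∉ J →
      |MvPolynomial.eval q.1.ofLp (Phi J i (P i)) - MvPolynomial.eval q.2.ofLp (Phi J i (P i)) -
        dP (Phi J i (P i)) p.ofLp (q.1 - q.2).ofLp| ≤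
      (η * |MvPolynomial.eval p.ofLp (MvPolynomial.pderiv i (Phi J i (P i)))|) * ‖q.1 - q.2‖ := by
    rw [eventually_all]
    intro i
    by_cases hi : i ∈ J
    · exact Eventually.of_forall fun q h => absurd hi h
    · filter_upwards [strict_bound (Phi J i (P i)) p _
        (mul_pos hη0 (abs_pos.2 (hE _ hp i hi).2.1))] with q hq _ using hq
  rw [nhds_prod_eq] at hev
  obtain ⟨U, hU, hUU⟩ := mem_prod_self_iff.1 hev
  refine ⟨U, hU, fun a ha b hb => ?_⟩
  set u := a - b with hu
  have hcoord : ∀ i, |(u - F (piJ J u)) i| ≤ η * ‖u‖ + n * δ * ‖piJ J u‖ := by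
    intro i
    by_cases hi : i ∈ J
    · have : (u - F (piJ J u)) i = 0 := by
        rw [PiLp.sub_apply, FL_mem _ _ _ _ hi, piJ_apply, sub_self]
      rw [this, abs_zero]; positivity
    · obtain ⟨-, hD, hLj⟩ := hE _ hp i hi
      have hab := hUU (show (a, b) ∈ U ×ˢ U from ⟨ha.2, hb.2⟩) i hi
      simp only [(hE _ ha.1 i hi).1, (hE _ hb.1 i hi).1, sub_self, zero_sub, abs_neg] at hab
      rw [← hu, dP_Phi J i hi] at hab
      set D := MvPolynomial.eval p.ofLp (MvPolynomial.pderiv i (Phi J i (P i))) with hDdef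
      have hDp := abs_pos.2 hD
      rw [PiLp.sub_apply, FL_notMem _ _ _ _ hi, ← mul_le_mul_iff_right₀ hDp, ← abs_mul]
      have heq : D * (u i - ∑ j : J, L i j * piJ J u j) = (D * u i +
          ∑ j : J, MvPolynomial.eval p.ofLp (MvPolynomial.pderiv (j : Fin n) (Phi J i (P i))) * u j) -
          ∑ j : J, (MvPolynomial.eval p.ofLp (MvPolynomial.pderiv (j : Fin n) (Phi J i (P i))) +
            L i j * D) * u j := by
        simp only [piJ_apply, add_mul, Finset.sum_add_distrib, mul_sub, Finset.mul_sum]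
        have : ∀ j : J, D * (L i j * u j) = L i j * D * u j := fun j => by ring
        simp only [this]
        ring
      rw [heq]
      refine (abs_sub _ _).trans ?_
      have hsum : |∑ j : J, (MvPolynomial.eval p.ofLp (MvPolynomial.pderiv (j : Fin n) (Phi J i (P i))) +
            L i j * D) * u j| ≤ n * (δ * |D| * ‖piJ J u‖) := by
        refine (Finset.abs_sum_le_sum_abs _ _).trans ?_
        have hb : ∀ j ∈ (Finset.univ : Finset J),
            |(MvPolynomial.eval p.ofLp (MvPolynomial.pderiv (j : Fin n) (Phi J i (P i))) +
            L i j * D) * u j| ≤ δ * |D| * ‖piJ J u‖ := by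
          intro j _
          rw [abs_mul]
          refine mul_le_mul (hLj j) ?_ (abs_nonneg _) (by positivity)
          rw [← piJ_apply]
          exact PiLp.norm_apply_le (piJ J u) j
        refine (Finset.sum_le_card_nsmul _ _ _ hb).trans ?_
        rw [nsmul_eq_mul]
        refine mul_le_mul_of_nonneg_right ?_ (by positivity)
        have : J.card ≤ n := by simpa using J.card_le_univ
        simpa using this
      have : |D| * (η * ‖u‖ + n * δ * ‖piJ J u‖) = η * |D| * ‖u‖ + n * (δ * |D| * ‖piJ J u‖) := by
        ring
      rw [this]
      exact add_le_add hab hsum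
  have hX : ‖u - F (piJ J u)‖ ≤ n * (η * ‖u‖ + n * δ * ‖piJ J u‖) := by
    refine (norm_le_sum _).trans ?_
    have := Finset.sum_le_card_nsmul Finset.univ _ _ fun i _ => hcoord i
    rw [nsmul_eq_mul, Finset.card_univ, Fintype.card_fin] at this
    exact this
  have hX2 : ‖u - F (piJ J u)‖ ≤ τ * ‖u‖ + ε / 2 * ‖piJ J u‖ := by
    refine hX.trans ?_
    have h1 := mul_le_mul_of_nonneg_right hnη (norm_nonneg u)
    have h2 := mul_le_mul_of_nonneg_right hδ (norm_nonneg (piJ J u))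
    nlinarith
  have hFn := F.le_opNorm (piJ J u)
  have hu2 : ‖u‖ ≤ ‖u - F (piJ J u)‖ + ‖F (piJ J u)‖ := by
    simpa using norm_add_le (u - F (piJ J u)) (F (piJ J u))
  have hτu := mul_le_mul_of_nonneg_right hτ1 (norm_nonneg u)
  have hu3 : ‖u‖ ≤ 2 * M * ‖piJ J u‖ := by
    rw [hM]
    nlinarith [norm_nonneg (piJ J u)]
  have h5 := mul_le_mul_of_nonneg_left hu3 hτ0.le
  have h6 := mul_le_mul_of_nonneg_right hτ2 (norm_nonneg (piJ J u))
  nlinarith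

end SAlim

namespace SAlim
variable {n : ℕ}

/-- hereditary approximate limits -/
def HLim (d : ℕ) (C : ℝ) (S : Set (Fin n → ℝ)) : Prop :=
  ∀ Y, IsSemialgebraic Y → Y ⊆ S → ALim d C Y

/-- all approximate limits -/
def TLim (d : ℕ) (S : Set (Fin n → ℝ)) : Prop := ∀ C > 1, HLim d C S

lemma ALim.mono {d : ℕ} {C C' : ℝ} {Y : Set (Fin n → ℝ)} (hC : 0 < C) (hCC : C ≤ C')
    (h : ALim d C Y) : ALim d C' Y := by
  obtain ⟨g, c, hg, hh⟩ := h
  refine ⟨g, c, hg, fun R hR => ?_⟩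
  obtain ⟨h0, h1, h2⟩ := hh R hR
  have hm : 0 ≤ (μH[(d : ℝ)] (vS Y ∩ closedBall 0 R)).toReal / R ^ d := by positivity
  have hg0 : 0 ≤ g R := by
    by_contra hlt
    push Not at hlt
    nlinarith
  refine ⟨h0, h1.trans ?_, h2.trans ?_⟩
  · exact mul_le_mul_of_nonneg_right hCC hg0
  · exact mul_le_mul_of_nonneg_right hCC hm

lemma ALim.union {d : ℕ} {C : ℝ} {Y Z : Set (Fin n → ℝ)} (hZ : IsSemialgebraic Z)
    (hd : Disjoint Y Z) (h : ALim d C Y) (h' : ALim d C Z) : ALim d C (Y ∪ Z) := by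
  obtain ⟨g, c, hg, hh⟩ := h
  obtain ⟨g', c', hg', hh'⟩ := h'
  refine ⟨fun R => g R + g' R, c + c', hg.add hg', fun R hR => ?_⟩
  obtain ⟨h0, h1, h2⟩ := hh R hR
  obtain ⟨h0', h1', h2'⟩ := hh' R hR
  have heq : vS (Y ∪ Z) ∩ closedBall 0 R = (vS Y ∩ closedBall 0 R) ∪ (vS Z ∩ closedBall 0 R) := by
    rw [← union_inter_distrib_right]; rfl
  have hdis : Disjoint (vS Y ∩ closedBall 0 R) (vS Z ∩ closedBall 0 R) := by
    refine Disjoint.mono inter_subset_left inter_subset_left ?_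
    rw [Set.disjoint_left] at hd ⊢
    intro v hv hv'
    exact hd hv hv'
  have hm : MeasurableSet (vS Z ∩ closedBall 0 R) :=
    (vS_measurable hZ).inter isClosed_closedBall.measurableSet
  rw [heq, measure_union hdis hm]
  refine ⟨ENNReal.add_ne_top.2 ⟨h0, h0'⟩, ?_, ?_⟩
  · rw [ENNReal.toReal_add h0 h0', add_div]; linarith
  · rw [ENNReal.toReal_add h0 h0', add_div]; linarith

lemma HLim.union {d : ℕ} {C : ℝ} {S T : Set (Fin n → ℝ)} (hS : IsSemialgebraic S)
    (h : HLim d C S) (h' : HLim d C T) : HLim d C (S ∪ T) := by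
  intro Y hY hYS
  have h1 := h (Y ∩ S) (hY.inter hS) inter_subset_right
  have h2 := h' (Y \ S) (sa_diff hY hS) (fun z hz => (hYS hz.1).resolve_left hz.2)
  have := h1.union (sa_diff hY hS) (Set.disjoint_left.2 fun z hz hz' => hz'.2 hz.2) h2
  rwa [inter_union_sdiff] at this

lemma ALim.of_null {d : ℕ} {C : ℝ} {Y : Set (Fin n → ℝ)} (h : μH[(d : ℝ)] (vS Y) = 0) :
    ALim d C Y := by
  refine ⟨fun _ => 0, 0, tendsto_const_nhds, fun R hR => ?_⟩
  rw [measure_mono_null inter_subset_left h]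
  simp

lemma TLim.of_null {d : ℕ} {S : Set (Fin n → ℝ)} (h : μH[(d : ℝ)] (vS S) = 0) : TLim d S :=
  fun _ _ _ _ hY => ALim.of_null (measure_mono_null (fun _ hv => hY hv) h)

lemma TLim.mono {d : ℕ} {S T : Set (Fin n → ℝ)} (hST : S ⊆ T) (h : TLim d T) : TLim d S :=
  fun C hC Y hY hYS => h C hC Y hY (hYS.trans hST)

lemma TLim.union {d : ℕ} {S T : Set (Fin n → ℝ)} (hS : IsSemialgebraic S)
    (h : TLim d S) (h' : TLim d T) : TLim d (S ∪ T) :=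
  fun C hC => (h C hC).union hS (h' C hC)

lemma HLim.biUnion {d : ℕ} {C : ℝ} {κ : Type*} (A : Set κ) (hA : A.Finite)
    (S : κ → Set (Fin n → ℝ)) (hS : ∀ k ∈ A, IsSemialgebraic (S k)) (h : ∀ k ∈ A, HLim d C (S k)) :
    HLim d C (⋃ k ∈ A, S k) := by
  induction A, hA using Set.Finite.induction_on with
  | empty =>
    intro Y _ hY
    have : Y = ∅ := by simpa using hY
    exact ALim.of_null (by rw [this]; simp [vS])
  | insert _ _ ih =>
    rw [biUnion_insert]
    exact (h _ (mem_insert _ _)).union (hS _ (mem_insert _ _))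
      (ih (fun k hk => hS k (mem_insert_of_mem _ hk)) (fun k hk => h k (mem_insert_of_mem _ hk)))

lemma TLim.exists_lim {d : ℕ} {S : Set (Fin n → ℝ)} (hS : IsSemialgebraic S) (h : TLim d S) :
    ∃ c : ℝ, Tendsto (fun R : ℝ => (μH[(d : ℝ)] (vS S ∩ closedBall 0 R)).toReal / R ^ d)
      atTop (𝓝 c) := by
  set f := fun R : ℝ => (μH[(d : ℝ)] (vS S ∩ closedBall 0 R)).toReal / R ^ d with hf
  have hf0 : ∀ R > 0, 0 ≤ f R := fun R hR => by simp only [f]; positivity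
  obtain ⟨g2, c2, hg2, hh2⟩ := h 2 (by norm_num) S hS le_rfl
  set B := 2 * (|c2| + 1) with hB
  have hB0 : 0 < B := by positivity
  have hfB : ∀ᶠ R in atTop, f R ≤ B := by
    have : ∀ᶠ R in atTop, g2 R < |c2| + 1 :=
      hg2.eventually_lt_const (lt_of_le_of_lt (le_abs_self c2) (lt_add_one _))
    filter_upwards [this, eventually_gt_atTop 0] with R h1 h2
    have := (hh2 R h2).2.1
    simp only [f]
    linarith
  have hc : Cauchy (map f atTop) := by
    rw [Metric.cauchy_iff]
    refine ⟨inferInstance, fun ε hε => ?_⟩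
    set τ := min 1 (ε / (8 * B)) with hτ
    have hτ0 : 0 < τ := lt_min one_pos (by positivity)
    have hτ1 : τ ≤ 1 := min_le_left _ _
    have hτ2 : τ * (8 * B) ≤ ε := by
      rw [← le_div_iff₀ (by positivity)]; exact min_le_right _ _
    obtain ⟨g, c, hg, hh⟩ := h (1 + τ) (by linarith) S hS le_rfl
    refine ⟨ball c (ε / 2), ?_, fun x hx y hy => ?_⟩
    · rw [mem_map]
      filter_upwards [hfB, eventually_gt_atTop 0, hg (ball_mem_nhds c (show 0 < ε / 4 by positivity))]
        with R h1 h2 h3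
      have ha := (hh R h2).2.1
      have hb := (hh R h2).2.2
      change f R ≤ _ at ha
      change _ ≤ _ * f R at hb
      rw [mem_preimage, mem_ball, Real.dist_eq] at h3 ⊢
      rw [abs_lt] at h3 ⊢
      have h0 := hf0 R h2
      have hτf : τ * f R ≤ τ * B := mul_le_mul_of_nonneg_left h1 hτ0.le
      have hg1 : g R ≤ 2 * B := by nlinarith
      have hτg : τ * g R ≤ τ * (2 * B) := mul_le_mul_of_nonneg_left hg1 hτ0.le
      constructor <;> nlinarith
    · have := dist_triangle_right x y c
      rw [mem_ball] at hx hy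
      linarith
  exact CompleteSpace.complete hc

/-- a good piece: coordinates outside `J` are simple roots over `J` with small slopes -/
def Good (J : Finset (Fin n)) (S : Set (Fin n → ℝ)) : Prop :=
  ∃ P : Fin n → Polynomial (MvPolynomial J ℝ), ∀ z ∈ S, ∀ i ∉ J,
    MvPolynomial.eval z (Phi J i (P i)) = 0 ∧
    MvPolynomial.eval (fun j : J => z j) (P i).leadingCoeff ≠ 0 ∧
    MvPolynomial.eval z (MvPolynomial.pderiv i (Phi J i (P i))) ≠ 0 ∧
    ∀ j ∈ J, |MvPolynomial.eval z (MvPolynomial.pderiv j (Phi J i (P i)))| ≤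
      |MvPolynomial.eval z (MvPolynomial.pderiv i (Phi J i (P i)))|

lemma good_pieces (J : Finset (Fin n)) (S : Set (Fin n → ℝ)) (hS : IsSemialgebraic S)
    (P : Fin n → Polynomial (MvPolynomial J ℝ)) (hP : ∀ z ∈ S, ∀ i ∉ J,
      MvPolynomial.eval z (Phi J i (P i)) = 0 ∧
      MvPolynomial.eval (fun j : J => z j) (P i).leadingCoeff ≠ 0 ∧
      MvPolynomial.eval z (MvPolynomial.pderiv i (Phi J i (P i))) ≠ 0 ∧
      ∀ j ∈ J, |MvPolynomial.eval z (MvPolynomial.pderiv j (Phi J i (P i)))| ≤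
        |MvPolynomial.eval z (MvPolynomial.pderiv i (Phi J i (P i)))|)
    (ε : ℝ) (hε : 0 < ε) :
    ∃ (t : Set (Fin n → J → ℝ)) (E : (Fin n → J → ℝ) → Set (Fin n → ℝ)), t.Finite ∧
      (S ⊆ ⋃ L ∈ t, E L) ∧ ∀ L, IsSemialgebraic (E L) ∧ E L ⊆ S ∧
        ∀ p ∈ vS (E L), ∃ U ∈ 𝓝 p, ∀ a ∈ vS (E L) ∩ U, ∀ b ∈ vS (E L) ∩ U,
          ‖(a - b) - FL J L (piJ J (a - b))‖ ≤ ε * ‖piJ J (a - b)‖ := by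
  classical
  set δ := ε / (2 * ((n : ℝ) ^ 2 + 1)) with hδ
  have hδ0 : 0 < δ := by positivity
  have hδ2 : (n : ℝ) ^ 2 * δ ≤ ε / 2 := by
    rw [hδ, mul_div_assoc', div_le_div_iff₀ (by positivity) (by positivity)]
    nlinarith
  obtain ⟨t, -, htf, htc⟩ := (isCompact_closedBall (0 : Fin n → J → ℝ) 1).finite_cover_balls hδ0
  let q : Fin n → MvPolynomial (Fin n) ℝ := fun i => MvPolynomial.pderiv i (Phi J i (P i))
  let E : (Fin n → J → ℝ) → Set (Fin n → ℝ) := fun L => S ∩ {z | ∀ i, z ∈ {z | i ∉ J → z ∈ {z |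
    ∀ j : J, z ∈ {z | |MvPolynomial.eval z (MvPolynomial.pderiv (j : Fin n) (Phi J i (P i)) +
      MvPolynomial.C (L i j) * q i)| ≤ |MvPolynomial.eval z (MvPolynomial.C δ * q i)|}}}}
  refine ⟨t, E, htf, ?_, fun L => ⟨?_, inter_subset_left, ?_⟩⟩
  · intro z hz
    let s : Fin n → J → ℝ := fun i j => if i ∈ J then 0 else
      -(MvPolynomial.eval z (MvPolynomial.pderiv (j : Fin n) (Phi J i (P i))) / MvPolynomial.eval z (q i))
    have hs : s ∈ closedBall (0 : Fin n → J → ℝ) 1 := by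
      rw [mem_closedBall_zero_iff, pi_norm_le_iff_of_nonneg zero_le_one]
      intro i
      rw [pi_norm_le_iff_of_nonneg zero_le_one]
      intro j
      by_cases hi : i ∈ J
      · simp [s, hi]
      · simp only [s, hi, if_false, norm_neg, norm_div, Real.norm_eq_abs]
        exact div_le_one_of_le₀ ((hP z hz i hi).2.2.2 j j.2) (abs_nonneg _)
    have := htc hs
    rw [mem_iUnion₂] at this ⊢
    obtain ⟨L, hL, hLs⟩ := this
    refine ⟨L, hL, hz, ?_⟩
    intro i hi j
    rw [mem_ball, dist_eq_norm] at hLs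
    have h1 : |s i j - L i j| ≤ δ :=
      ((norm_le_pi_norm ((s - L) i) j).trans (norm_le_pi_norm (s - L) i)).trans hLs.le
    have hne : MvPolynomial.eval z (q i) ≠ 0 := (hP z hz i hi).2.2.1
    simp only [s, hi, if_false] at h1
    simp only [mem_setOf_eq, map_add, map_mul, MvPolynomial.eval_C]
    rw [abs_mul, abs_of_pos hδ0]
    have h2 : MvPolynomial.eval z (MvPolynomial.pderiv (j : Fin n) (Phi J i (P i))) +
        L i j * MvPolynomial.eval z (q i) = -(-(MvPolynomial.eval z
          (MvPolynomial.pderiv (j : Fin n) (Phi J i (P i))) / MvPolynomial.eval z (q i)) - L i j) *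
          MvPolynomial.eval z (q i) := by
      field_simp
      ring
    rw [h2, abs_mul, abs_neg]
    exact mul_le_mul_of_nonneg_right h1 (abs_nonneg _)
  · refine hS.inter (sa_iInter _ fun i => sa_imp (sa_iInter _ fun j => sa_abs_le _ _))
  · refine local_lip J P (E L) L δ ε hε hδ0.le hδ2 ?_
    rintro z ⟨hz, hz'⟩ i hi
    refine ⟨(hP z hz i hi).1, (hP z hz i hi).2.2.1, fun j => ?_⟩
    have := hz' i hi j
    simp only [mem_setOf_eq, map_add, map_mul, MvPolynomial.eval_C, abs_mul δ, abs_of_pos hδ0] at this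
    exact this

lemma Good.tlim {J : Finset (Fin n)} {S : Set (Fin n → ℝ)} (hS : IsSemialgebraic S)
    (h : Good J S) : TLim J.card S := by
  obtain ⟨P, hP⟩ := h
  intro C hC
  obtain ⟨ε, hε, hεC⟩ : ∃ ε : ℝ, 0 < ε ∧ (1 + ε) ^ J.card ≤ C := by
    have hc : ContinuousAt (fun ε : ℝ => (1 + ε) ^ J.card) 0 := by fun_prop
    have h1 : ∀ᶠ ε : ℝ in 𝓝 0, (1 + ε) ^ J.card < C :=
      hc.eventually_lt_const (by simpa using hC)
    obtain ⟨r, hr, hr'⟩ := Metric.eventually_nhds_iff.1 h1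
    refine ⟨r / 2, by positivity, (hr' ?_).le⟩
    rw [Real.dist_eq, sub_zero, abs_of_pos (by positivity)]
    linarith
  obtain ⟨t, E, ht, hcov, hE⟩ := good_pieces J S hS P hP ε hε
  have key : HLim J.card C (⋃ L ∈ t, E L) := by
    refine HLim.biUnion t ht E (fun L _ => (hE L).1) fun L _ => ?_
    intro Y hY hYE
    have := alim_of_local J (E L) P (fun z hz i hi => by
      have := hP z ((hE L).2.1 hz) i hi
      rw [eval_Phi] at this
      exact ⟨this.1, this.2.1⟩) (FL J L) (piJ_FL J L) ⟨ε, hε.le⟩ (hE L).2.2 Y hYE hY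
    exact this.mono (by positivity) hεC
  exact fun Y hY hYS => key Y hY (hYS.trans hcov)

lemma Good.null {J : Finset (Fin n)} {S : Set (Fin n → ℝ)} (hS : IsSemialgebraic S)
    (h : Good J S) {d : ℕ} (hd : J.card < d) : μH[(d : ℝ)] (vS S) = 0 := by
  obtain ⟨P, hP⟩ := h
  obtain ⟨t, E, ht, hcov, hE⟩ := good_pieces J S hS P hP 1 one_pos
  have hcov' : vS S ⊆ ⋃ L ∈ t, vS (E L) := by
    intro v hv
    have := hcov hv
    simpa [vS] using this
  refine measure_mono_null hcov' ((measure_biUnion_null_iff ht.countable).2 fun L _ => ?_)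
  have h1 := (area (piJ J) (norm_piJ J) (FL J L) (piJ_FL J L) 1 d (vS (E L))
    (by simpa using (hE L).2.2) (vS (E L)) le_rfl (vS_measurable (hE L).1)).2.1
  have h2 : nu (FL J L) d = 0 := by
    rw [← Measure.measure_univ_eq_zero, nu_apply (piJ J) _ (piJ_FL J L)]
    apply hausdorffMeasure_of_dimH_lt (d := (d : NNReal))
    refine ((FL J L).lipschitz.dimH_image_le _).trans_lt ?_
    rw [Real.dimH_univ_eq_finrank]
    simpa using hd
  rw [h2, lintegral_zero_measure, mul_zero] at h1
  exact le_antisymm h1 (by simp)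

end SAlim

namespace SAlim
variable {n : ℕ}

/-! ### Algebra of the coordinate ring -/

lemma exists_pderiv {σ : Type*} (Q : MvPolynomial σ ℝ) (hQ : Q.totalDegree ≠ 0) :
    ∃ j, MvPolynomial.pderiv j Q ≠ 0 ∧ (MvPolynomial.pderiv j Q).totalDegree < Q.totalDegree := by
  classical
  rw [Ne, MvPolynomial.totalDegree_eq_zero_iff] at hQ
  push Not at hQ
  obtain ⟨m, hm, j, hj⟩ := hQ
  have hcoef : MvPolynomial.coeff m Q ≠ 0 := MvPolynomial.mem_support_iff.1 hm
  have hms : m - Finsupp.single j 1 + Finsupp.single j 1 = m := by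
    ext i
    by_cases hi : i = j
    · subst hi; simp; omega
    · simp [Finsupp.single_apply, Ne.symm hi]
  refine ⟨j, ?_, ?_⟩
  · intro h0
    have := MvPolynomial.coeff_pderiv (i := j) Q (m - Finsupp.single j 1)
    rw [h0, hms] at this
    simp only [MvPolynomial.coeff_zero] at this
    have h2 : (((m - Finsupp.single j 1 : _ →₀ ℕ) j : ℕ) : ℝ) + 1 ≠ 0 := by positivity
    exact (mul_ne_zero hcoef h2) this.symm
  · have hpos : 0 < Q.totalDegree := by
      have := MvPolynomial.le_totalDegree hm
      have h2 : m j ≤ m.sum fun _ e => e := by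
        rw [Finsupp.sum]
        exact Finset.single_le_sum (f := fun i => m i) (fun _ _ => Nat.zero_le _)
          (Finsupp.mem_support_iff.2 hj)
      omega
    rw [MvPolynomial.totalDegree, Finset.sup_lt_iff (by simpa using hpos)]
    intro s hs
    rw [MvPolynomial.mem_support_iff, MvPolynomial.coeff_pderiv] at hs
    have h1 := MvPolynomial.le_totalDegree (MvPolynomial.mem_support_iff.2 (left_ne_zero_of_mul hs))
    rw [Finsupp.sum_add_index' (by simp) (by simp), Finsupp.sum_single_index rfl] at h1
    omega

/-- coordinates in `J` are algebraically independent modulo `I` -/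
def Ind (I : Ideal (MvPolynomial (Fin n) ℝ)) (J : Finset (Fin n)) : Prop :=
  ∀ q : MvPolynomial J ℝ, MvPolynomial.rename (Subtype.val : J → Fin n) q ∈ I → q = 0

lemma ind_empty (I : Ideal (MvPolynomial (Fin n) ℝ)) (hI : I ≠ ⊤) : Ind I ∅ := by
  intro q hq
  have hc := MvPolynomial.eq_C_of_isEmpty q
  rw [hc] at hq ⊢
  rw [MvPolynomial.rename_C] at hq
  by_contra h
  apply hI
  have h0 : q.coeff 0 ≠ 0 := fun h' => h (by rw [h']; simp)
  exact Ideal.eq_top_of_isUnit_mem _ hq ((isUnit_iff_ne_zero.2 h0).map MvPolynomial.C)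

lemma not_ind_Q (I : Ideal (MvPolynomial (Fin n) ℝ)) (hI : I ≠ ⊤) (J : Finset (Fin n))
    (h : ¬ Ind I J) : ∃ (Q : MvPolynomial J ℝ) (j : J),
      MvPolynomial.rename (Subtype.val : J → Fin n) Q ∈ I ∧
      MvPolynomial.pderiv (j : Fin n) (MvPolynomial.rename (Subtype.val : J → Fin n) Q) ∉ I := by
  classical
  unfold Ind at h
  push Not at h
  let A : Set (MvPolynomial J ℝ) :=
    {q | MvPolynomial.rename (Subtype.val : J → Fin n) q ∈ I ∧ q ≠ 0}
  have hA : A.Nonempty := h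
  let Q := Function.argminOn MvPolynomial.totalDegree A hA
  have hQ : Q ∈ A := Function.argminOn_mem _ _ hA
  have hmin : ∀ q ∈ A, Q.totalDegree ≤ q.totalDegree := fun q hq =>
    Function.argminOn_le _ _ hq
  have hdeg : Q.totalDegree ≠ 0 := by
    intro h0
    rw [MvPolynomial.totalDegree_eq_zero_iff_eq_C] at h0
    have h1 := hQ.1
    rw [h0, MvPolynomial.rename_C] at h1
    have h2 : Q.coeff 0 ≠ 0 := fun h' => hQ.2 (by rw [h0, h']; simp)
    exact hI (Ideal.eq_top_of_isUnit_mem _ h1 ((isUnit_iff_ne_zero.2 h2).map MvPolynomial.C))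
  obtain ⟨j, hj0, hj⟩ := exists_pderiv Q hdeg
  refine ⟨Q, j, hQ.1, ?_⟩
  rw [MvPolynomial.pderiv_rename Subtype.val_injective]
  intro hmem
  exact absurd (hmin _ ⟨hmem, hj0⟩) (not_le.2 hj)

lemma Phi_surj (J : Finset (Fin n)) (i : Fin n)
    (q : MvPolynomial {k // k ∈ insert i J} ℝ) (hi : i ∉ J) (hq : q ≠ 0) :
    ∃ P : Polynomial (MvPolynomial J ℝ), P ≠ 0 ∧
      Phi J i P = MvPolynomial.rename (Subtype.val : {k // k ∈ insert i J} → Fin n) q := by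
  classical
  let e : {k // k ∈ insert i J} → Option J :=
    fun k => if h : (k : Fin n) ∈ J then some ⟨k, h⟩ else none
  have he : Function.Injective e := by
    rintro ⟨a, ha⟩ ⟨b, hb⟩ hab
    simp only [e] at hab
    rw [Finset.mem_insert] at ha hb
    ext
    split_ifs at hab with h1 h2 h2
    · simpa using congrArg Fin.val (congrArg Subtype.val (Option.some.inj hab))
    · have h3 := ha.resolve_right h1
      have h4 := hb.resolve_right h2
      simp [h3, h4]
  refine ⟨MvPolynomial.optionEquivLeft ℝ J (MvPolynomial.rename e q), ?_, ?_⟩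
  · intro h0
    apply hq
    apply MvPolynomial.rename_injective e he
    apply (MvPolynomial.optionEquivLeft ℝ J).injective
    simpa using h0
  · have : ((Phi J i).comp ((MvPolynomial.optionEquivLeft ℝ J : _ →+* _).comp
        (MvPolynomial.rename e).toRingHom)) =
        (MvPolynomial.rename (R := ℝ) (Subtype.val : {k // k ∈ insert i J} → Fin n)).toRingHom := by
      apply MvPolynomial.ringHom_ext
      · intro r
        simp [Phi_C]
      · rintro ⟨k, hk⟩
        by_cases h : k ∈ J
        · simp [e, h, Phi_C]
        · have : k = i := (Finset.mem_insert.1 hk).resolve_right h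
          subst this
          simp [e, h, Phi_X]
    exact congrFun (congrArg DFunLike.coe this) q

lemma ind_P (I : Ideal (MvPolynomial (Fin n) ℝ)) (J : Finset (Fin n)) (hJ : Ind I J)
    (hmax : ∀ J', Ind I J' → J'.card ≤ J.card) (i : Fin n) (hi : i ∉ J) :
    ∃ P : Polynomial (MvPolynomial J ℝ), P ≠ 0 ∧ Phi J i P ∈ I ∧
      MvPolynomial.rename (Subtype.val : J → Fin n) P.leadingCoeff ∉ I ∧
      MvPolynomial.pderiv i (Phi J i P) ∉ I := by
  classical
  have hni : ¬ Ind I (insert i J) := fun h => by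
    have := hmax _ h
    rw [Finset.card_insert_of_notMem hi] at this
    omega
  unfold Ind at hni
  push Not at hni
  obtain ⟨q, hq, hq0⟩ := hni
  obtain ⟨P0, hP0, hP0q⟩ := Phi_surj J i q hi hq0
  let A : Set (Polynomial (MvPolynomial J ℝ)) := {P | Phi J i P ∈ I ∧ P ≠ 0}
  have hA : A.Nonempty := ⟨P0, by rw [← hP0q] at hq; exact hq, hP0⟩
  let P := Function.argminOn Polynomial.natDegree A hA
  have hP : P ∈ A := Function.argminOn_mem _ _ hA
  have hmin : ∀ q ∈ A, P.natDegree ≤ q.natDegree := fun q hq => Function.argminOn_le _ _ hq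
  have hdeg : P.natDegree ≠ 0 := by
    intro h0
    rw [Polynomial.natDegree_eq_zero] at h0
    obtain ⟨c, hc⟩ := h0
    have h1 := hP.1
    rw [← hc, Phi_C] at h1
    have := hJ _ h1
    exact hP.2 (by rw [← hc, this]; simp)
  refine ⟨P, hP.2, hP.1, fun h => ?_, fun h => ?_⟩
  · have := hJ _ h
    exact hP.2 (Polynomial.leadingCoeff_eq_zero.1 this)
  · rw [pderiv_Phi_self J i hi] at h
    refine absurd (hmin _ ⟨h, ?_⟩) (not_le.2 (Polynomial.natDegree_derivative_lt hdeg))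
    intro h0
    exact hdeg (Polynomial.natDegree_eq_zero_of_derivative_eq_zero h0)

end SAlim

namespace SAlim
variable {n : ℕ}

lemma persist (J : Finset (Fin n)) (P : Fin n → Polynomial (MvPolynomial J ℝ))
    (hP : ∀ i ∉ J, P i ≠ 0) (S : Set (Fin n → ℝ)) (hS : IsSemialgebraic S) :
    ∃ c : MvPolynomial J ℝ, c ≠ 0 ∧ ∀ p ∈ S,
      (∀ i ∉ J, MvPolynomial.eval p (Phi J i (P i)) = 0) →
      MvPolynomial.eval (fun j : J => p j) c ≠ 0 →
      ∀ᶠ z in 𝓝 p, (∀ i ∉ J, MvPolynomial.eval z (Phi J i (P i)) = 0) → z ∈ S := by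
  classical
  induction hS with
  | eq h =>
    let Z := {z : Fin n → ℝ // ∀ i ∉ J, MvPolynomial.eval z (Phi J i (P i)) = 0}
    let ev : Z → MvPolynomial J ℝ →ₐ[ℝ] ℝ := fun z => MvPolynomial.aeval (fun j : J => z.1 j)
    have hev : ∀ z, (ev z : MvPolynomial J ℝ →+* ℝ) = MvPolynomial.eval (fun j : J => z.1 j) := by
      intro z
      ext <;> simp [ev]
    obtain ⟨k, Q, hQ, hz⟩ := alg_ev' ev (fun z => z.1) (by
      intro i
      by_cases hi : i ∈ J
      · refine ⟨Polynomial.X - Polynomial.C (MvPolynomial.X ⟨i, hi⟩),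
          Polynomial.X_sub_C_ne_zero _, fun z => ?_⟩
        rw [hev]
        simp
      · refine ⟨P i, hP i hi, fun z => ?_⟩
        rw [hev, ← eval_Phi]
        exact z.2 i hi) h
    refine ⟨Q.coeff 0, hQ, fun p hp hp0 hc => ?_⟩
    let g : MvPolynomial (Fin n) ℝ :=
      Q.eval₂ (MvPolynomial.rename (Subtype.val : J → Fin n)).toRingHom h
    have hg : ∀ z, MvPolynomial.eval z g =
        Q.eval₂ (MvPolynomial.eval (fun j : J => z j)) (MvPolynomial.eval z h) := by
      intro z
      simp only [g, Polynomial.hom_eval₂]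
      congr 1
      apply MvPolynomial.ringHom_ext
      · intro r; simp
      · intro j; simp
    have hgp : MvPolynomial.eval p g ≠ 0 := by
      rw [hg]
      have hp' : MvPolynomial.eval p h = 0 := hp
      rw [hp', Polynomial.eval₂_at_zero]
      exact hc
    have hcont : Continuous fun z => MvPolynomial.eval z g := MvPolynomial.continuous_eval g
    filter_upwards [hcont.continuousAt.eventually_ne hgp] with z hz1 hz2
    have := hz ⟨z, hz2⟩
    rw [hev, ← hg] at this
    have h3 := (mul_eq_zero.1 this).resolve_right hz1
    exact (by_contra fun hne => (pow_ne_zero k hne) h3)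
  | lt h =>
    refine ⟨1, one_ne_zero, fun p hp _ _ => ?_⟩
    have hcont : Continuous fun z => MvPolynomial.eval z h := MvPolynomial.continuous_eval h
    have hp' : 0 < MvPolynomial.eval p h := hp
    filter_upwards [hcont.continuousAt.eventually_const_lt hp'] with z hz _ using hz
  | union _ _ ih1 ih2 =>
    obtain ⟨c1, h1, h1'⟩ := ih1
    obtain ⟨c2, h2, h2'⟩ := ih2
    refine ⟨c1 * c2, mul_ne_zero h1 h2, fun p hp hp0 hc => ?_⟩
    rw [map_mul] at hc
    rcases hp with hp | hp
    · filter_upwards [h1' p hp hp0 (left_ne_zero_of_mul hc)] with z hz h using Or.inl (hz h)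
    · filter_upwards [h2' p hp hp0 (right_ne_zero_of_mul hc)] with z hz h using Or.inr (hz h)
  | inter _ _ ih1 ih2 =>
    obtain ⟨c1, h1, h1'⟩ := ih1
    obtain ⟨c2, h2, h2'⟩ := ih2
    refine ⟨c1 * c2, mul_ne_zero h1 h2, fun p hp hp0 hc => ?_⟩
    rw [map_mul] at hc
    filter_upwards [h1' p hp.1 hp0 (left_ne_zero_of_mul hc),
      h2' p hp.2 hp0 (right_ne_zero_of_mul hc)] with z hz hz2 h using ⟨hz h, hz2 h⟩

lemma auerbach (J : Finset (Fin n)) (B : J → Fin n → ℝ) (hB : ∀ l l' : J, B l l' = if l' = l then 1 else 0)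
    (T : Submodule ℝ (Fin n → ℝ)) (hT : ∀ l, B l ∈ T) :
    ∃ J' : Finset (Fin n), J'.card = J.card ∧ ∀ j ∈ J', ∃ w ∈ T,
      (∀ j' ∈ J', w j' = if j' = j then 1 else 0) ∧ ∀ k, |w k| ≤ 1 := by
  classical
  let M : Matrix (Fin n) J ℝ := Matrix.of fun k l => B l k
  let D : (J → Fin n) → ℝ := fun f => |(M.submatrix f id).det|
  have : Nonempty (J → Fin n) := ⟨Subtype.val⟩
  obtain ⟨f, hf⟩ := Finite.exists_max (α := J → Fin n) D
  have hpos : 0 < |(M.submatrix f id).det| := by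
    have h1 := hf Subtype.val
    have h2 : M.submatrix (Subtype.val : J → Fin n) id = 1 := by
      ext a b
      simp [M, hB, Matrix.one_apply]
    simp only [D, h2, Matrix.det_one, abs_one] at h1
    linarith
  set N := M.submatrix f id with hN
  have hdet : N.det ≠ 0 := abs_pos.1 hpos
  have hfinj : Function.Injective f := by
    intro a b hab
    by_contra hne
    exact hdet (Matrix.det_zero_of_row_eq hne (by ext l; simp [hN, hab]))
  refine ⟨Finset.univ.image f, by simp [Finset.card_image_of_injective _ hfinj], ?_⟩
  intro j hj
  obtain ⟨a, -, rfl⟩ := Finset.mem_image.1 hj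
  refine ⟨fun k => (M * N⁻¹) k a, ?_, ?_, ?_⟩
  · have : (fun k => (M * N⁻¹) k a) = ∑ l, (N⁻¹ l a) • B l := by
      funext k
      simp [Matrix.mul_apply, M, mul_comm]
    rw [this]
    exact Submodule.sum_mem _ fun l _ => T.smul_mem _ (hT l)
  · intro j' hj'
    obtain ⟨b, -, rfl⟩ := Finset.mem_image.1 hj'
    have h1 : (M * N⁻¹) (f b) a = (N * N⁻¹) b a := by
      simp [Matrix.mul_apply, hN]
    change (M * N⁻¹) (f b) a = _
    rw [h1, Matrix.mul_nonsing_inv _ (isUnit_iff_ne_zero.2 hdet), Matrix.one_apply]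
    simp [hfinj.eq_iff]
  · intro k
    have h1 : (M * N⁻¹) k a * N.det = (M.submatrix (Function.update f a k) id).det := by
      have h2 : M.submatrix (Function.update f a k) id = N.updateRow a (M k) := by
        ext b l
        by_cases hb : b = a
        · subst hb; simp
        · simp [hb, hN, Matrix.updateRow_ne]
      rw [h2, ← Matrix.cramer_transpose_apply, Matrix.cramer_eq_adjugate_mulVec,
        ← Matrix.adjugate_transpose, Matrix.mulVec_transpose, Matrix.inv_def]
      simp only [Ring.inverse_eq_inv', Matrix.mul_smul, Matrix.smul_apply, smul_eq_mul]
      rw [Matrix.vecMul, Matrix.mul_apply, dotProduct]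
      field_simp
    have h3 := hf (Function.update f a k)
    simp only [D] at h3
    rw [← h1, abs_mul] at h3
    exact le_of_mul_le_mul_right (by linarith) hpos

end SAlim

namespace SAlim
variable {n : ℕ}

/-- straightening map -/
noncomputable def Psi (J : Finset (Fin n)) (P : Fin n → Polynomial (MvPolynomial J ℝ))
    (z : Fin n → ℝ) : Fin n → ℝ := by
  classical
  exact fun k => if k ∈ J then z k else MvPolynomial.eval z (Phi J k (P k))

/-- its derivative -/
noncomputable def dPsi (J : Finset (Fin n)) (P : Fin n → Polynomial (MvPolynomial J ℝ))
    (p : Fin n → ℝ) : (Fin n → ℝ) →L[ℝ] (Fin n → ℝ) := by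
  classical
  exact ContinuousLinearMap.pi fun k =>
    if k ∈ J then ContinuousLinearMap.proj k else dP (Phi J k (P k)) p

lemma psi_strict (J : Finset (Fin n)) (P : Fin n → Polynomial (MvPolynomial J ℝ))
    (p : Fin n → ℝ) : HasStrictFDerivAt (Psi J P) (dPsi J P p) p := by
  classical
  rw [hasStrictFDerivAt_pi']
  intro k
  by_cases hk : k ∈ J
  · have h := (ContinuousLinearMap.proj (R := ℝ) (φ := fun _ : Fin n => ℝ) k).hasStrictFDerivAt (x := p)
    have h2 : (ContinuousLinearMap.proj k).comp (dPsi J P p) =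
        ContinuousLinearMap.proj (R := ℝ) (φ := fun _ : Fin n => ℝ) k := by
      ext v; simp [dPsi, hk]
    rw [h2]
    simpa [Psi, hk] using! h
  · have h := hasStrictFDerivAt_eval (Phi J k (P k)) p
    have h2 : (ContinuousLinearMap.proj k).comp (dPsi J P p) = dP (Phi J k (P k)) p := by
      ext v; simp [dPsi, hk]
    rw [h2]
    simpa [Psi, hk] using! h

lemma dPsi_inj (J : Finset (Fin n)) (P : Fin n → Polynomial (MvPolynomial J ℝ))
    (p : Fin n → ℝ)
    (hp : ∀ i ∉ J, MvPolynomial.eval p (MvPolynomial.pderiv i (Phi J i (P i))) ≠ 0) :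
    Function.Injective (dPsi J P p) := by
  classical
  rw [injective_iff_map_eq_zero]
  intro v hv
  have h1 : ∀ j ∈ J, v j = 0 := by
    intro j hj
    have := congrFun hv j
    simpa [dPsi, hj] using this
  funext k
  by_cases hk : k ∈ J
  · exact h1 k hk
  · have h2 : dP (Phi J k (P k)) p v = 0 := by
      have := congrFun hv k
      simpa [dPsi, hk] using this
    rw [dP_Phi J k hk, Finset.sum_eq_zero (fun j _ => by rw [h1 j j.2, mul_zero]), add_zero] at h2
    exact (mul_eq_zero.1 h2).resolve_left (hp k hk)

lemma ift (J : Finset (Fin n)) (P : Fin n → Polynomial (MvPolynomial J ℝ))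
    (p : Fin n → ℝ) (hp0 : ∀ i ∉ J, MvPolynomial.eval p (Phi J i (P i)) = 0)
    (hp : ∀ i ∉ J, MvPolynomial.eval p (MvPolynomial.pderiv i (Phi J i (P i))) ≠ 0)
    (S : Set (Fin n → ℝ))
    (hS : ∀ᶠ z in 𝓝 p, (∀ i ∉ J, MvPolynomial.eval z (Phi J i (P i)) = 0) → z ∈ S) :
    (∀ᶠ y : J → ℝ in 𝓝 (fun j => p j), ∃ z ∈ S, ∀ j : J, z j = y j) ∧
    (∀ Q : MvPolynomial (Fin n) ℝ, (∀ z ∈ S, MvPolynomial.eval z Q = 0) →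
      ∀ v, (∀ i ∉ J, dP (Phi J i (P i)) p v = 0) → dP Q p v = 0) ∧
    (∃ B : J → Fin n → ℝ, (∀ l l' : J, B l l' = if l' = l then 1 else 0) ∧
      ∀ l, ∀ i ∉ J, dP (Phi J i (P i)) p (B l) = 0) := by
  classical
  have hinj := dPsi_inj J P p hp
  let e : (Fin n → ℝ) ≃L[ℝ] (Fin n → ℝ) :=
    (LinearEquiv.ofInjectiveEndo (dPsi J P p : (Fin n → ℝ) →ₗ[ℝ] (Fin n → ℝ)) hinj).toContinuousLinearEquiv
  have he : (e : (Fin n → ℝ) →L[ℝ] (Fin n → ℝ)) = dPsi J P p := by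
    ext v; rfl
  have heq : ∀ v, e v = dPsi J P p v := fun v => rfl
  have hst : HasStrictFDerivAt (Psi J P) (e : (Fin n → ℝ) →L[ℝ] (Fin n → ℝ)) p := by
    rw [he]; exact psi_strict J P p
  set Θ := hst.localInverse with hΘ
  have hΘp : Θ (Psi J P p) = p := hst.localInverse_apply_image
  have hΘd : HasStrictFDerivAt Θ (e.symm : (Fin n → ℝ) →L[ℝ] (Fin n → ℝ)) (Psi J P p) :=
    hst.to_localInverse
  have hright := hst.eventually_right_inverse
  have hnear : ∀ᶠ y in 𝓝 (Psi J P p), (∀ i ∉ J, y i = 0) → Θ y ∈ S ∧ ∀ j ∈ J, Θ y j = y j := by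
    have h1 : ∀ᶠ y in 𝓝 (Psi J P p), (∀ i ∉ J, MvPolynomial.eval (Θ y) (Phi J i (P i)) = 0) → Θ y ∈ S := by
      have ht : Tendsto Θ (𝓝 (Psi J P p)) (𝓝 p) := hst.localInverse_tendsto
      exact ht.eventually hS
    filter_upwards [h1, hright] with y hy1 hy2 hy0
    refine ⟨hy1 fun i hi => ?_, fun j hj => ?_⟩
    · have := congrFun hy2 i
      simp only [Psi, hi, if_false] at this
      rw [← hy0 i hi]
      exact this
    · have := congrFun hy2 j
      simp only [Psi, hj, if_true] at this
      exact this
  have hPsi : ∀ k, Psi J P p k = if k ∈ J then p k else 0 := by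
    intro k
    by_cases hk : k ∈ J
    · simp [Psi, hk]
    · simp [Psi, hk, hp0 k hk]
  refine ⟨?_, ?_, ?_⟩
  · let ext0 : (J → ℝ) → Fin n → ℝ := fun y k => if h : k ∈ J then y ⟨k, h⟩ else 0
    have hc : Continuous ext0 := by
      refine continuous_pi fun k => ?_
      by_cases h : k ∈ J
      · simp only [ext0, h, dif_pos]; exact continuous_apply _
      · simp only [ext0, h, dif_neg, not_false_eq_true]; exact continuous_const
    have h0 : ext0 (fun j => p j) = Psi J P p := by
      funext k
      rw [hPsi]
      by_cases h : k ∈ J <;> simp [ext0, h]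
    have ht : Tendsto ext0 (𝓝 (fun j => p j)) (𝓝 (Psi J P p)) := by
      rw [← h0]; exact hc.continuousAt
    filter_upwards [ht.eventually hnear] with y hy
    obtain ⟨h1, h2⟩ := hy (fun i hi => by simp [ext0, hi])
    refine ⟨_, h1, fun j => ?_⟩
    rw [h2 j j.2]
    simp [ext0]
  · intro Q hQ v hv
    let γ : ℝ → Fin n → ℝ := fun t => Psi J P p + t • e v
    have hγ : HasDerivAt γ (e v) 0 := by
      have := ((hasDerivAt_id (0 : ℝ)).smul_const (e v)).const_add (Psi J P p)
      rw [one_smul] at this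
      exact this
    have hγ0 : γ 0 = Psi J P p := by simp [γ]
    have hΘ' : HasFDerivAt Θ (e.symm : (Fin n → ℝ) →L[ℝ] (Fin n → ℝ)) (γ 0) := by
      rw [hγ0]; exact hΘd.hasFDerivAt
    have h1 : HasDerivAt (Θ ∘ γ) (e.symm (e v)) 0 := hΘ'.comp_hasDerivAt 0 hγ
    have hQd : HasFDerivAt (fun z => MvPolynomial.eval z Q) (dP Q p) ((Θ ∘ γ) 0) := by
      have : (Θ ∘ γ) 0 = p := by simp [hγ0, hΘp]
      rw [this]; exact (hasStrictFDerivAt_eval Q p).hasFDerivAt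
    have h2 := hQd.comp_hasDerivAt 0 h1
    have h3 : ∀ᶠ t in 𝓝 (0 : ℝ), ((fun z => MvPolynomial.eval z Q) ∘ (Θ ∘ γ)) t = 0 := by
      have ht : Tendsto γ (𝓝 0) (𝓝 (Psi J P p)) := by
        rw [← hγ0]; exact hγ.continuousAt
      filter_upwards [ht.eventually hnear] with t ht
      refine hQ _ (ht fun i hi => ?_).1
      simp [γ, hPsi, hi, heq, dPsi, hv i hi]
    have h4 : HasDerivAt ((fun z => MvPolynomial.eval z Q) ∘ (Θ ∘ γ)) 0 0 :=
      (hasDerivAt_const (0 : ℝ) (0 : ℝ)).congr_of_eventuallyEq h3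
    have := h2.unique h4
    simpa using this
  · refine ⟨fun l => e.symm (Pi.single (l : Fin n) 1), fun l l' => ?_, fun l i hi => ?_⟩
    · have h1 : e (e.symm (Pi.single (l : Fin n) 1)) l' = Pi.single (M := fun _ => ℝ) (l : Fin n) 1 l' := by
        rw [e.apply_symm_apply]
      rw [heq] at h1
      simp only [dPsi, ContinuousLinearMap.coe_pi', l'.2, if_true, ContinuousLinearMap.proj_apply] at h1
      refine h1.trans ?_
      rw [Pi.single_apply]
      exact if_congr Subtype.ext_iff.symm rfl rfl
    · have h1 : e (e.symm (Pi.single (l : Fin n) 1)) i = Pi.single (M := fun _ => ℝ) (l : Fin n) 1 i := by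
        rw [e.apply_symm_apply]
      rw [heq] at h1
      simp only [dPsi, ContinuousLinearMap.coe_pi', hi, if_false] at h1
      refine h1.trans ?_
      rw [Pi.single_apply, if_neg]
      rintro rfl
      exact hi l.2

end SAlim

namespace SAlim
variable {n : ℕ}

/-- vanishing ideal -/
def VI (S : Set (Fin n → ℝ)) : Ideal (MvPolynomial (Fin n) ℝ) where
  carrier := {p | ∀ z ∈ S, MvPolynomial.eval z p = 0}
  add_mem' := fun {a b} ha hb z hz => by simp [ha z hz, hb z hz]
  zero_mem' := fun z _ => by simp
  smul_mem' := fun c x hx z hz => by simp [hx z hz]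

lemma mem_VI {S : Set (Fin n → ℝ)} {p : MvPolynomial (Fin n) ℝ} :
    p ∈ VI S ↔ ∀ z ∈ S, MvPolynomial.eval z p = 0 := Iff.rfl

lemma dim_le (J : Finset (Fin n)) (S : Set (Fin n → ℝ)) (p : Fin n → ℝ)
    (h : ∀ᶠ y : J → ℝ in 𝓝 (fun j => p j), ∃ z ∈ S, ∀ j : J, z j = y j) (d : ℕ)
    (hd : dimH (vS S) ≤ d) : J.card ≤ d := by
  let f : EuclideanSpace ℝ (Fin n) →L[ℝ] (J → ℝ) :=
    ContinuousLinearMap.pi fun j => EuclideanSpace.proj (j : Fin n)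
  have h1 : dimH (f '' vS S) ≤ dimH (vS S) := f.lipschitz.dimH_image_le _
  have h2 : f '' vS S ∈ 𝓝 (fun j : J => p j) := by
    filter_upwards [h] with y hy
    obtain ⟨z, hz, hzy⟩ := hy
    exact ⟨WithLp.toLp 2 z, hz, funext hzy⟩
  rw [Real.dimH_of_mem_nhds h2] at h1
  have h3 := h1.trans hd
  rw [Module.finrank_fintype_fun_eq_card, Fintype.card_coe] at h3
  exact_mod_cast h3

lemma prime_case (S : Set (Fin n → ℝ)) (hS : IsSemialgebraic S) (hI : (VI S).IsPrime) (d : ℕ)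
    (hd : dimH (vS S) ≤ d) :
    ∃ G ∉ VI S, TLim d (S ∩ {z | MvPolynomial.eval z G ≠ 0}) := by
  classical
  set I := VI S with hIdef
  obtain ⟨J0, hJ0, hmax⟩ : ∃ J0, Ind I J0 ∧ ∀ J', Ind I J' → J'.card ≤ J0.card := by
    have hfin : {J | Ind I J}.Finite := Set.toFinite _
    obtain ⟨J0, h1, h2⟩ := hfin.exists_maximalFor Finset.card _ ⟨∅, ind_empty I hI.ne_top⟩
    exact ⟨J0, h1, fun J' hJ' => by
      by_contra hc
      exact hc (h2 hJ' (le_of_not_ge hc))⟩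
  -- data for bases
  have hdata : ∀ J : Finset (Fin n), ∃ P : Fin n → Polynomial (MvPolynomial J ℝ),
      Ind I J → J.card = J0.card → ∀ i ∉ J, P i ≠ 0 ∧ Phi J i (P i) ∈ I ∧
      MvPolynomial.rename (Subtype.val : J → Fin n) (P i).leadingCoeff ∉ I ∧
      MvPolynomial.pderiv i (Phi J i (P i)) ∉ I := by
    intro J
    by_cases hJ : Ind I J ∧ J.card = J0.card
    · have : ∀ i, ∃ P : Polynomial (MvPolynomial J ℝ), i ∉ J → P ≠ 0 ∧ Phi J i P ∈ I ∧
          MvPolynomial.rename (Subtype.val : J → Fin n) P.leadingCoeff ∉ I ∧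
          MvPolynomial.pderiv i (Phi J i P) ∉ I := by
        intro i
        by_cases hi : i ∈ J
        · exact ⟨0, fun h => absurd hi h⟩
        · obtain ⟨P, hP⟩ := ind_P I J hJ.1 (by rw [hJ.2]; exact hmax) i hi
          exact ⟨P, fun _ => hP⟩
      choose P hP using this
      exact ⟨P, fun _ _ i hi => hP i hi⟩
    · exact ⟨0, fun h1 h2 => absurd ⟨h1, h2⟩ hJ⟩
  choose P hP using hdata
  have hg1 : ∀ J : Finset (Fin n), ∃ g ∉ I, ∀ p, MvPolynomial.eval p g ≠ 0 →
      Ind I J → J.card = J0.card → ∀ i ∉ J,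
        MvPolynomial.eval (fun j : J => p j) (P J i).leadingCoeff ≠ 0 ∧
        MvPolynomial.eval p (MvPolynomial.pderiv i (Phi J i (P J i))) ≠ 0 := by
    intro J
    by_cases hJ : Ind I J ∧ J.card = J0.card
    · refine ⟨∏ i ∈ Jᶜ, (MvPolynomial.rename (Subtype.val : J → Fin n) (P J i).leadingCoeff *
        MvPolynomial.pderiv i (Phi J i (P J i))), ?_, ?_⟩
      · rw [hI.prod_mem_iff]
        push Not
        intro i hi
        have := hP J hJ.1 hJ.2 i (Finset.mem_compl.1 hi)
        exact fun h => (hI.mem_or_mem h).elim this.2.2.1 this.2.2.2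
      · intro p hp _ _ i hi
        rw [map_prod, Finset.prod_ne_zero_iff] at hp
        have := hp i (Finset.mem_compl.2 hi)
        rw [map_mul, MvPolynomial.eval_rename] at this
        exact ⟨left_ne_zero_of_mul this, right_ne_zero_of_mul this⟩
    · exact ⟨1, fun h => hI.ne_top ((Ideal.eq_top_iff_one _).2 h),
        fun p _ h1 h2 => absurd ⟨h1, h2⟩ hJ⟩
  choose g1 hg1 hg1' using hg1
  have hg2 : ∀ J : Finset (Fin n), ∃ g ∉ I, ∀ p, MvPolynomial.eval p g ≠ 0 →
      ¬ Ind I J → ∃ (Q : MvPolynomial J ℝ) (j : J),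
        MvPolynomial.rename (Subtype.val : J → Fin n) Q ∈ I ∧
        MvPolynomial.eval p (MvPolynomial.pderiv (j : Fin n)
          (MvPolynomial.rename (Subtype.val : J → Fin n) Q)) ≠ 0 := by
    intro J
    by_cases hJ : Ind I J
    · exact ⟨1, fun h => hI.ne_top ((Ideal.eq_top_iff_one _).2 h), fun p _ h1 => absurd hJ h1⟩
    · obtain ⟨Q, j, h1, h2⟩ := not_ind_Q I hI.ne_top J hJ
      exact ⟨_, h2, fun p hp _ => ⟨Q, j, h1, hp⟩⟩
  choose g2 hg2 hg2' using hg2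
  obtain ⟨c, hc0, hc⟩ := persist J0 (P J0) (fun i hi => (hP J0 hJ0 rfl i hi).1) S hS
  set G := MvPolynomial.rename (Subtype.val : J0 → Fin n) c *
    ∏ J : Finset (Fin n), (g1 J * g2 J) with hG
  have hGI : G ∉ I := by
    intro h
    rcases hI.mem_or_mem h with h | h
    · exact hc0 (hJ0 _ h)
    · rw [hI.prod_mem_iff] at h
      obtain ⟨J, -, h⟩ := h
      exact (hI.mem_or_mem h).elim (hg1 J) (hg2 J)
  have hGp : ∀ p, MvPolynomial.eval p G ≠ 0 → MvPolynomial.eval (fun j : J0 => p j) c ≠ 0 ∧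
      ∀ J, MvPolynomial.eval p (g1 J) ≠ 0 ∧ MvPolynomial.eval p (g2 J) ≠ 0 := by
    intro p hp
    rw [hG, map_mul, MvPolynomial.eval_rename, map_prod] at hp
    refine ⟨left_ne_zero_of_mul hp, fun J => ?_⟩
    have := Finset.prod_ne_zero_iff.1 (right_ne_zero_of_mul hp) J (Finset.mem_univ _)
    rw [map_mul] at this
    exact ⟨left_ne_zero_of_mul this, right_ne_zero_of_mul this⟩
  have hift := fun p (hpS : p ∈ S) (hpG : MvPolynomial.eval p G ≠ 0) =>
    ift J0 (P J0) p (fun i hi => (hP J0 hJ0 rfl i hi).2.1 p hpS)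
      (fun i hi => (hg1' J0 p ((hGp p hpG).2 J0).1 hJ0 rfl i hi).2) S
      (hc p hpS (fun i hi => (hP J0 hJ0 rfl i hi).2.1 p hpS) (hGp p hpG).1)
  have hcard : J0.card ≤ d := by
    rw [hIdef, mem_VI] at hGI
    push Not at hGI
    obtain ⟨p, hpS, hpG⟩ := hGI
    exact dim_le J0 S p (hift p hpS hpG).1 d hd
  refine ⟨G, hGI, ?_⟩
  -- the pieces
  let SJ : Finset (Fin n) → Set (Fin n → ℝ) := fun J =>
    (S ∩ {z | MvPolynomial.eval z G ≠ 0}) ∩ {z | ∀ i, z ∈ {z | i ∉ J → z ∈ {z | ∀ j, z ∈ {z | j ∈ J →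
      z ∈ {z | |MvPolynomial.eval z (MvPolynomial.pderiv j (Phi J i (P J i)))| ≤
      |MvPolynomial.eval z (MvPolynomial.pderiv i (Phi J i (P J i)))|}}}}}
  have hSJ : ∀ J, IsSemialgebraic (SJ J) := by
    intro J
    refine (hS.inter (sa_ne G)).inter (sa_iInter _ fun i => sa_imp (sa_iInter _ fun j => sa_imp ?_))
    exact sa_abs_le _ _
  have hgood : ∀ J, Ind I J → J.card = J0.card → Good J (SJ J) := by
    intro J h1 h2
    refine ⟨P J, fun z hz i hi => ⟨(hP J h1 h2 i hi).2.1 z hz.1.1, ?_, ?_, ?_⟩⟩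
    · exact (hg1' J z ((hGp z hz.1.2).2 J).1 h1 h2 i hi).1
    · exact (hg1' J z ((hGp z hz.1.2).2 J).1 h1 h2 i hi).2
    · intro j hj
      exact hz.2 i hi j hj
  have hcov : S ∩ {z | MvPolynomial.eval z G ≠ 0} ⊆
      ⋃ J ∈ {J | Ind I J ∧ J.card = J0.card}, SJ J := by
    rintro p ⟨hpS, hpG⟩
    obtain ⟨-, htan, B, hB, hBT⟩ := hift p hpS hpG
    let T : Submodule ℝ (Fin n → ℝ) := ⨅ Q : I, LinearMap.ker (dP Q.1 p : (Fin n → ℝ) →ₗ[ℝ] ℝ)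
    have hTm : ∀ v, v ∈ T ↔ ∀ Q ∈ I, dP Q p v = 0 := by
      intro v
      simp [T, Submodule.mem_iInf]
    obtain ⟨J, hJc, hw⟩ := auerbach J0 B hB T (fun l => (hTm _).2 fun Q hQ =>
      htan Q hQ (B l) (hBT l))
    have hJ : Ind I J := by
      by_contra hn
      obtain ⟨Q, j, hQ, hj⟩ := hg2' J p ((hGp p hpG).2 J).2 hn
      obtain ⟨w, hwT, hw1, -⟩ := hw j j.2
      have := (hTm w).1 hwT _ hQ
      rw [dP_apply, Finset.sum_eq_single (j : Fin n)] at this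
      · rw [hw1 j j.2, if_pos rfl, mul_one] at this
        exact hj this
      · intro k _ hk
        by_cases hkJ : k ∈ J
        · rw [hw1 k hkJ, if_neg hk, mul_zero]
        · rw [pderiv_rename_zero J k hkJ]; simp
      · simp
    refine mem_biUnion (show J ∈ {J | Ind I J ∧ J.card = J0.card} from ⟨hJ, hJc⟩) ⟨⟨hpS, hpG⟩, ?_⟩
    intro i hi j hj
    obtain ⟨w, hwT, hw1, hw2⟩ := hw j hj
    have h1 := (hTm w).1 hwT _ (hP J hJ hJc i hi).2.1
    rw [dP_Phi J i hi, Finset.sum_eq_single (⟨j, hj⟩ : J)] at h1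
    · rw [hw1 j hj, if_pos rfl, mul_one] at h1
      have h2 : MvPolynomial.eval p (MvPolynomial.pderiv j (Phi J i (P J i))) =
        - (MvPolynomial.eval p (MvPolynomial.pderiv i (Phi J i (P J i))) * w i) := by linarith
      show |MvPolynomial.eval p (MvPolynomial.pderiv j (Phi J i (P J i)))| ≤
        |MvPolynomial.eval p (MvPolynomial.pderiv i (Phi J i (P J i)))|
      rw [h2, abs_neg, abs_mul]
      exact mul_le_of_le_one_right (abs_nonneg _) (hw2 i)
    · intro k _ hk
      rw [hw1 k k.2, if_neg (fun h => hk (Subtype.ext h)), mul_zero]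
    · simp
  refine TLim.mono hcov ?_
  intro C hC
  refine HLim.biUnion _ (Set.toFinite _) SJ (fun J _ => hSJ J) ?_
  rintro J ⟨h1, h2⟩
  have : TLim d (SJ J) := by
    rcases hcard.lt_or_eq with h | h
    · exact TLim.of_null ((hgood J h1 h2).null (hSJ J) (by omega))
    · have := (hgood J h1 h2).tlim (hSJ J)
      rwa [h2, h] at this
  exact this C hC

lemma structure_thm (d : ℕ) : ∀ (I : Ideal (MvPolynomial (Fin n) ℝ)) (S : Set (Fin n → ℝ)),
    VI S = I → IsSemialgebraic S → dimH (vS S) ≤ d → TLim d S := by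
  intro I
  induction I using WellFoundedGT.induction with
  | ind I ih =>
    intro S hSI hS hd
    subst hSI
    have hsub : ∀ f ∉ VI S, TLim d (S ∩ {z | MvPolynomial.eval z f = 0}) := by
      intro f hf
      refine ih _ ?_ _ rfl (hS.inter (IsSemialgebraic.eq f))
        ((dimH_mono (fun v hv => hv.1)).trans hd)
      refine lt_of_le_of_ne (fun q hq z hz => hq z hz.1) fun h => hf ?_
      rw [h]
      exact fun z hz => hz.2
    by_cases hp : (VI S).IsPrime
    · obtain ⟨G, hG, hT⟩ := prime_case S hS hp d hd
      have := (hsub G hG).union (hS.inter (IsSemialgebraic.eq G)) hT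
      refine this.mono fun z hz => ?_
      by_cases h : MvPolynomial.eval z G = 0
      · exact Or.inl ⟨hz, h⟩
      · exact Or.inr ⟨hz, h⟩
    · by_cases htop : VI S = ⊤
      · have hempty : S = ∅ := by
          by_contra hne
          obtain ⟨z, hz⟩ := Set.nonempty_iff_ne_empty.2 hne
          have h1 : (1 : MvPolynomial (Fin n) ℝ) ∈ VI S := by rw [htop]; trivial
          simpa using h1 z hz
        apply TLim.of_null
        have : vS S = ∅ := by rw [hempty]; rfl
        rw [this]; simp
      · have : ∃ f g, f * g ∈ VI S ∧ f ∉ VI S ∧ g ∉ VI S := by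
          by_contra hcon
          push Not at hcon
          exact hp ⟨htop, fun {a b} hab => by
            by_cases ha : a ∈ VI S
            · exact Or.inl ha
            · exact Or.inr (hcon a b hab ha)⟩
        obtain ⟨f, g, hfg, hf, hg⟩ := this
        have := (hsub f hf).union (hS.inter (IsSemialgebraic.eq f)) (hsub g hg)
        refine this.mono fun z hz => ?_
        have h1 := hfg z hz
        rw [map_mul] at h1
        rcases mul_eq_zero.1 h1 with h | h
        · exact Or.inl ⟨hz, h⟩
        · exact Or.inr ⟨hz, h⟩

end SAlim

/-- Let `X ⊂ ℝ^n` be a nonempty closed semi-algebraic set of dimension `d`.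
Then the limit `lim_{R→∞} vol_d(X ∩ B_R)/R^d` exists and is finite, where `vol_d` is the
`d`-dimensional Hausdorff measure and `B_R` the closed ball of radius `R` about the origin. -/
theorem tendsto_hausdorffMeasure_inter_ball_div_rpow
    (n d : ℕ) (X : Set (EuclideanSpace ℝ (Fin n)))
    (hXne : X.Nonempty) (hXc : IsClosed X) (hXsa : IsSemialgebraicE X)
    (hdim : dimH X = (d : ℕ)) :
    ∃ c : ℝ, Tendsto
      (fun R : ℝ =>
        (μH[(d : ℝ)] (X ∩ closedBall (0 : EuclideanSpace ℝ (Fin n)) R)).toReal / R ^ d)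
      atTop (𝓝 c) := by
  have hX : SAlim.vS {x : Fin n → ℝ | (EuclideanSpace.equiv (Fin n) ℝ).symm x ∈ X} = X := rfl
  have h := SAlim.structure_thm d _ _ rfl hXsa (by rw [hX, hdim])
  have h2 := SAlim.TLim.exists_lim hXsa h
  rw [hX] at h2
  exact h2
end
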